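/- arXiv:math/0306375 — 9 statements merged into one kernel-verified Lean document; each statement's English description precedes it below -/
import Mathlib

section
/- Let u > 0 and x = e^{-u} ∈ (0,1). Then every holomorphic covering map φ : 𝔻 → 𝔻 \ {x} with φ(0) = 0 satisfies |φ′(0)| = u / sinh(u). -/
open Complex Metric Set

noncomputable section

/-- `IsCoveringMap` as Mathlib defined it in December 2024 (through `Trivialization`). -/
def IsCoveringMapOld {E X : Type*} [TopologicalSpace E] [TopologicalSpace X] (f : E → X) : Prop :=
  ∀ x, DiscreteTopology (f ⁻¹' {x}) ∧ ∃ t : Bundle.Trivialization (f ⁻¹' {x}) f, x ∈ t.baseSet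

/-- A holomorphic covering map from the unit disc onto `U`:
`φ` is holomorphic on `𝔻`, maps `𝔻` into `U`, and its restriction `𝔻 → U`
is a topological covering map. -/
def IsHoloCover (φ : ℂ → ℂ) (U : Set ℂ) : Prop :=
  DifferentiableOn ℂ φ (Metric.ball 0 1) ∧
  ∃ h : Set.MapsTo φ (Metric.ball 0 1) U,
    IsCoveringMapOld (Set.MapsTo.restrict φ (Metric.ball 0 1) U h)

lemma aux_diff1 {p k ψ : ℂ → ℂ} {z : ℂ} (hp : AnalyticAt ℂ p (k z)) (hp' : deriv p (k z) ≠ 0)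
    (hk : ContinuousAt k z) (hψ : DifferentiableAt ℂ ψ z) (h : ∀ᶠ y in nhds z, p (k y) = ψ y) :
    DifferentiableAt ℂ k z := by
  have hs : HasStrictDerivAt p (deriv p (k z)) (k z) := hp.hasStrictDerivAt
  have hz : p (k z) = ψ z := h.self_of_nhds
  have hs2 := hs.to_localInverse hp'
  have hl : ∀ᶠ w in nhds (k z), hs.localInverse p _ _ hp' (p w) = w :=
    (hs.hasStrictFDerivAt_equiv hp').eventually_left_inverse
  have hd : DifferentiableAt ℂ (fun y => hs.localInverse p _ _ hp' (ψ y)) z := by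
    apply DifferentiableAt.comp z _ hψ
    rw [← hz]
    exact hs2.hasDerivAt.differentiableAt
  apply hd.congr_of_eventuallyEq
  filter_upwards [h, hk.eventually hl] with y h1 h2
  rw [← h1, h2]

lemma aux_diff2 {p k ψ : ℂ → ℂ} {U : Set ℂ} (hU : IsOpen U) {V : Set ℂ} (hV : IsOpen V)
    (hp : DifferentiableOn ℂ p V) (hk : ContinuousOn k U) (hkV : MapsTo k U V)
    (hψ : DifferentiableOn ℂ ψ U) (hψ' : ∀ z ∈ U, deriv ψ z ≠ 0) (h : ∀ z ∈ U, p (k z) = ψ z) :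
    DifferentiableOn ℂ k U := by
  have key : ∀ z ∈ U, deriv p (k z) ≠ 0 → DifferentiableAt ℂ k z := by
    intro z hz hne
    exact aux_diff1 (hp.analyticAt (hV.mem_nhds (hkV hz))) hne (hk.continuousAt (hU.mem_nhds hz))
      (hψ.differentiableAt (hU.mem_nhds hz))
      (Filter.eventually_of_mem (hU.mem_nhds hz) h)
  intro z hz
  apply DifferentiableAt.differentiableWithinAt
  have hkz := hk.continuousAt (hU.mem_nhds hz)
  have hpa : AnalyticAt ℂ p (k z) := hp.analyticAt (hV.mem_nhds (hkV hz))
  have hψd : HasDerivAt ψ (deriv ψ z) z := (hψ.differentiableAt (hU.mem_nhds hz)).hasDerivAt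
  have hψne : ∀ᶠ y in nhdsWithin z {z}ᶜ, ψ y ≠ ψ z := hψd.eventually_ne (hψ' z hz)
  have hUn : ∀ᶠ y in nhdsWithin z {z}ᶜ, y ∈ U :=
    (Filter.eventually_of_mem (hU.mem_nhds hz) (fun _ h => h)).filter_mono nhdsWithin_le_nhds
  rcases hpa.deriv.eventually_eq_zero_or_eventually_ne_zero with h0 | h0
  · exfalso
    obtain ⟨r, hr, hball⟩ := Metric.eventually_nhds_iff_ball.1 
      (h0.and (Filter.eventually_of_mem (hV.mem_nhds (hkV hz)) (fun _ h => h)))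
    have hc : ∀ w ∈ ball (k z) r, p w = p (k z) := by
      intro w hw
      exact isOpen_ball.is_const_of_deriv_eq_zero (convex_ball _ _).isPreconnected
        (hp.mono fun y hy => (hball y hy).2) (fun y hy => (hball y hy).1) hw (mem_ball_self hr)
    have h1 : ∀ᶠ y in nhdsWithin z {z}ᶜ, k y ∈ ball (k z) r :=
      (hkz.eventually (ball_mem_nhds _ hr)).filter_mono nhdsWithin_le_nhds
    obtain ⟨y, h1, h2, h3⟩ := (h1.and (hψne.and hUn)).exists
    exact h2 (by rw [← h y h3, ← h z hz, hc _ h1])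
  · refine (analyticAt_of_differentiable_on_punctured_nhds_of_continuousAt ?_ hkz).differentiableAt
    have h0' := eventually_nhdsWithin_iff.1 h0
    have h1 := (hkz.eventually h0').filter_mono (nhdsWithin_le_nhds (s := {z}ᶜ))
    filter_upwards [h1, hψne, hUn] with y h1 h2 h3
    refine key y h3 (h1 ?_)
    intro (h4 : k y = k z)
    exact h2 (by rw [← h y h3, ← h z hz, h4])

lemma aux_T_lt {x : ℝ} (hx0 : 0 < x) (hx1 : x < 1) {z : ℂ} (hz : ‖z‖ < 1) :
    1 - (x:ℂ) * z ≠ 0 ∧ ‖((x:ℂ) - z) / (1 - x * z)‖ < 1 := by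
  have hne : 1 - (x:ℂ) * z ≠ 0 := by
    intro h
    have h1 : (x:ℂ) * z = 1 := (sub_eq_zero.1 h).symm
    have h2 := congrArg norm h1
    rw [norm_mul, norm_real, Real.norm_of_nonneg hx0.le, norm_one] at h2
    nlinarith [norm_nonneg z]
  refine ⟨hne, ?_⟩
  rw [norm_div, div_lt_one (norm_pos_iff.2 hne)]
  apply lt_of_pow_lt_pow_left₀ 2 (norm_nonneg _)
  have hz2 : ‖z‖^2 < 1 := by nlinarith [norm_nonneg z]
  rw [← normSq_eq_norm_sq, normSq_apply] at *
  rw [← normSq_eq_norm_sq, normSq_apply] 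
  simp
  have : x^2 < 1 := by nlinarith
  nlinarith [mul_pos (sub_pos.2 this) (sub_pos.2 hz2)]

lemma aux_T_inv {x : ℝ} (hx0 : 0 < x) (hx1 : x < 1) {z : ℂ} (hz : ‖z‖ < 1) 
    (h : ((x:ℂ) - z) / (1 - x * z) = x) : z = 0 := by
  rw [div_eq_iff (aux_T_lt hx0 hx1 hz).1] at h
  have : z * (1 - (x:ℂ)^2) = 0 := by linear_combination -h
  rcases mul_eq_zero.1 this with h | h
  · exact h
  · exfalso
    have : (1 - x^2 : ℝ) = 0 := by exact_mod_cast h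
    nlinarith

lemma aux_T_deriv (x z : ℂ) (h : 1 - x * z ≠ 0) :
    HasDerivAt (fun z => (x - z) / (1 - x * z)) ((x^2 - 1) / (1 - x * z)^2) z := by
  have h1 : HasDerivAt (fun z : ℂ => x - z) (-1) z := (hasDerivAt_id z).const_sub x
  have h2 : HasDerivAt (fun z : ℂ => 1 - x * z) (-(x * 1)) z :=
    ((hasDerivAt_id z).const_mul x).const_sub 1
  refine (h1.div h2 h).congr_deriv ?_
  ring

lemma aux_C_deriv (u z : ℂ) (h : 1 - z ≠ 0) :
    HasDerivAt (fun z => -u * ((1 + z) / (1 - z))) (-u * (2 / (1 - z)^2)) z := by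
  have h1 : HasDerivAt (fun z : ℂ => 1 + z) 1 z := (hasDerivAt_id z).const_add 1
  have h2 : HasDerivAt (fun z : ℂ => 1 - z) (-1) z := (hasDerivAt_id z).const_sub 1
  refine ((h1.div h2 h).const_mul (-u)).congr_deriv ?_
  ring

lemma aux_C_re {u : ℝ} (hu : 0 < u) {z : ℂ} (hz : ‖z‖ < 1) :
    1 - z ≠ 0 ∧ (-(u:ℂ) * ((1 + z) / (1 - z))).re < 0 := by
  have hne : 1 - z ≠ 0 := by
    intro h
    rw [← sub_eq_zero.1 h] at hz
    simp at hz
  refine ⟨hne, ?_⟩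
  have hz2 : ‖z‖^2 < 1 := by nlinarith [norm_nonneg z]
  rw [← normSq_eq_norm_sq, normSq_apply] at hz2
  have hn : 0 < normSq (1 - z) := normSq_pos.2 hne
  have : ((1 + z) / (1 - z)).re = (1 - (z.re * z.re + z.im * z.im)) / normSq (1 - z) := by
    rw [div_re]; simp; ring
  have h2 : 0 < ((1 + z) / (1 - z)).re := by
    rw [this]; exact div_pos (by linarith) hn
  rw [← ofReal_neg, re_ofReal_mul]
  nlinarith

lemma aux_H {u : ℝ} (hu : 0 < u) {w : ℂ} (hw : w.re < 0) :
    w - u ≠ 0 ∧ ‖(w + u) / (w - u)‖ < 1 := by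
  have hne : w - u ≠ 0 := by
    intro h
    have := congrArg re h
    simp at this
    linarith
  refine ⟨hne, ?_⟩
  rw [norm_div, div_lt_one (norm_pos_iff.2 hne)]
  apply lt_of_pow_lt_pow_left₀ 2 (norm_nonneg _)
  rw [← normSq_eq_norm_sq, normSq_apply, ← normSq_eq_norm_sq, normSq_apply] 
  simp
  nlinarith [mul_pos hu (neg_pos.2 hw)]

lemma aux_val (u : ℝ) : 2 * u * Real.exp (-u) / (1 - Real.exp (-u)^2) = u / Real.sinh u := by
  have h : 1 - Real.exp (-u)^2 = 2 * Real.exp (-u) * Real.sinh u := by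
    rw [Real.sinh_eq]
    have : Real.exp (-u) * Real.exp u = 1 := by rw [← Real.exp_add]; simp
    linear_combination -this
  rw [h]
  have := (Real.exp_pos (-u)).ne'
  rw [show 2 * u * Real.exp (-u) = (2 * Real.exp (-u)) * u by ring]
  rw [mul_div_mul_left]
  positivity

lemma aux_upper {u : ℝ} (hu : 0 < u) {φ : ℂ → ℂ} (hd : DifferentiableOn ℂ φ (ball 0 1))
    (hm : MapsTo φ (ball 0 1) (ball 0 1 \ {((Real.exp (-u) : ℝ) : ℂ)})) (h0 : φ 0 = 0) :
    ‖deriv φ 0‖ ≤ u / Real.sinh u := by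
  set x := Real.exp (-u) with hx
  have hx0 : 0 < x := Real.exp_pos _
  have hx1 : x < 1 := Real.exp_lt_one_iff.2 (by linarith)
  have hφ1 : ∀ z ∈ ball (0:ℂ) 1, ‖φ z‖ < 1 := fun z hz => by simpa using (hm hz).1
  set F : ℂ → ℂ := fun z => ((x:ℂ) - φ z) / (1 - x * φ z) with hF
  have hFD : ∀ z ∈ ball (0:ℂ) 1, HasDerivAt F
      (((x:ℂ)^2 - 1) / (1 - x * φ z)^2 * deriv φ z) z := fun z hz =>
    (aux_T_deriv x (φ z) (aux_T_lt hx0 hx1 (hφ1 z hz)).1).comp z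
      (hd.differentiableAt (isOpen_ball.mem_nhds hz)).hasDerivAt
  have hFd : DifferentiableOn ℂ F (ball 0 1) := fun z hz =>
    (hFD z hz).differentiableAt.differentiableWithinAt
  have hFne : ∀ z ∈ ball (0:ℂ) 1, F z ≠ 0 := by
    intro z hz
    refine div_ne_zero ?_ (aux_T_lt hx0 hx1 (hφ1 z hz)).1
    rw [sub_ne_zero]
    exact fun h => (hm hz).2 h.symm
  have hsc : IsSimplyConnected (ball (0:ℂ) 1) := by
    have := contractibleSpace_ball (x := (0:ℂ)) one_pos
    exact SimplyConnectedSpace.ofContractible _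
  obtain ⟨f, hfc, hf⟩ := exists_continuousOn_eqOn_exp_comp hsc isOpen_ball hFd.continuousOn
    (by rintro ⟨z, hz, h⟩; exact hFne z hz h)
  have hm0 : (0:ℂ) ∈ ball (0:ℂ) 1 := by simp
  set g : ℂ → ℂ := fun z => f z - (f 0 + u) with hg
  have he : exp (f 0 + u) = 1 := by
    have h1 : exp (f 0) = F 0 := hf hm0
    have h2 : F 0 = exp (-u) := by simp [hF, h0, hx]
    rw [exp_add, h1, h2, ← exp_add]; simp
  have hgF : ∀ z ∈ ball (0:ℂ) 1, exp (g z) = F z := by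
    intro z hz
    have h1 : exp (f z) = F z := hf hz
    simp only [hg]
    rw [exp_sub, he, h1, div_one]
  have hg0 : g 0 = -u := by simp [hg]
  have hgc : ContinuousOn g (ball 0 1) := hfc.sub continuousOn_const
  have hgd : DifferentiableOn ℂ g (ball 0 1) := by
    intro z hz
    have hn := isOpen_ball.mem_nhds hz
    refine (aux_diff1 (p := exp) (ψ := F) ?_ ?_ (hgc.continuousAt hn) (hFD z hz).differentiableAt
      (Filter.eventually_of_mem hn hgF)).differentiableWithinAt
    · fun_prop
    · simp
  have hgre : ∀ z ∈ ball (0:ℂ) 1, (g z).re < 0 := by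
    intro z hz
    have h1 : ‖exp (g z)‖ < 1 := by
      rw [hgF z hz]; exact (aux_T_lt hx0 hx1 (hφ1 z hz)).2
    rw [norm_exp] at h1
    simpa using h1
  set h : ℂ → ℂ := fun z => (g z + u) / (g z - u) with hh
  have hh0 : h 0 = 0 := by simp [hh, hg0]
  have hgD := (hgd.differentiableAt (isOpen_ball.mem_nhds hm0)).hasDerivAt
  have huc : (u:ℂ) ≠ 0 := by exact_mod_cast hu.ne'
  have hhD : HasDerivAt h (-deriv g 0 / (2 * u)) 0 := by
    refine ((hgD.add_const (u:ℂ)).div (hgD.sub_const (u:ℂ)) (aux_H hu (hgre 0 hm0)).1).congr_deriv ?_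
    rw [hg0]
    field_simp
    ring
  have hhd : DifferentiableOn ℂ h (ball 0 1) :=
    (hgd.add_const _).div (hgd.sub_const _) (fun z hz => (aux_H hu (hgre z hz)).1)
  have hS := norm_deriv_le_one_of_mapsTo_ball hhd (fun z hz => by
    rw [hh0, mem_closedBall_zero_iff]; exact (aux_H hu (hgre z hz)).2.le) one_pos
  rw [hhD.deriv] at hS
  have hgF' : HasDerivAt F (exp (g 0) * deriv g 0) 0 :=
    hgD.cexp.congr_of_eventuallyEq
      (Filter.eventually_of_mem (isOpen_ball.mem_nhds hm0) fun z hz => (hgF z hz).symm)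
  have heq := (hFD 0 hm0).unique hgF'
  have hex : exp (g 0) = x := by rw [hg0, hx]; simp
  rw [hex, h0] at heq
  have h3 := congrArg norm heq
  have hpos : 0 < 1 - x^2 := by nlinarith
  have hnx : ‖(x:ℂ)^2 - 1‖ = 1 - x^2 := by
    rw [norm_sub_rev]
    rw [show (1 - (x:ℂ)^2) = ((1 - x^2 : ℝ) : ℂ) by push_cast; rfl, norm_real, Real.norm_of_nonneg hpos.le]
  simp only [mul_zero, sub_zero, one_pow, div_one, norm_mul, hnx, norm_real,
    Real.norm_of_nonneg hx0.le] at h3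
  simp only [norm_div, norm_neg, norm_mul, norm_real, Real.norm_of_nonneg hu.le, norm_ofNat] at hS
  rw [div_le_one (by positivity)] at hS
  rw [← aux_val, le_div_iff₀ hpos]
  nlinarith

lemma aux_lower {u : ℝ} (hu : 0 < u) {φ : ℂ → ℂ}
    (hφ : IsHoloCover φ (Metric.ball 0 1 \ {((Real.exp (-u) : ℝ) : ℂ)})) (h0 : φ 0 = 0) :
    u / Real.sinh u ≤ ‖deriv φ 0‖ := by
  obtain ⟨hd, hm, hcov⟩ := hφ
  set x := Real.exp (-u) with hx
  have hx0 : 0 < x := Real.exp_pos _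
  have hx1 : x < 1 := Real.exp_lt_one_iff.2 (by linarith)
  have hm0 : (0:ℂ) ∈ ball (0:ℂ) 1 := by simp
  have hpos : 0 < 1 - x^2 := by nlinarith
  set E : ℂ → ℂ := fun z => exp (-(u:ℂ) * ((1 + z) / (1 - z))) with hE
  have hE1 : ∀ z ∈ ball (0:ℂ) 1, ‖E z‖ < 1 := by
    intro z hz
    rw [hE, norm_exp]
    simpa using (aux_C_re hu (by simpa using hz)).2
  have hE0 : E 0 = x := by simp [hE, hx]
  set ψ : ℂ → ℂ := fun z => ((x:ℂ) - E z) / (1 - x * E z) with hψ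
  have hψD : ∀ z ∈ ball (0:ℂ) 1, HasDerivAt ψ
      (((x:ℂ)^2 - 1) / (1 - x * E z)^2 * (E z * (-u * (2 / (1 - z)^2)))) z := fun z hz =>
    (aux_T_deriv x (E z) (aux_T_lt hx0 hx1 (hE1 z hz)).1).comp z
      (aux_C_deriv u z (aux_C_re hu (by simpa using hz)).1).cexp
  have hψm : MapsTo ψ (ball 0 1) (ball 0 1 \ {(x : ℂ)}) := by
    intro z hz
    refine ⟨mem_ball_zero_iff.2 (aux_T_lt hx0 hx1 (hE1 z hz)).2, fun h => ?_⟩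
    exact exp_ne_zero _ (aux_T_inv hx0 hx1 (hE1 z hz) h)
  have hψd : DifferentiableOn ℂ ψ (ball 0 1) := fun z hz =>
    (hψD z hz).differentiableAt.differentiableWithinAt
  have hψ0 : ψ 0 = 0 := by simp [hψ, hE0]
  have huc : (u:ℂ) ≠ 0 := by exact_mod_cast hu.ne'
  have hxc : (x:ℂ)^2 - 1 ≠ 0 := by
    intro h
    have : (x^2 - 1 : ℝ) = 0 := by exact_mod_cast h
    linarith
  have hψ' : ∀ z ∈ ball (0:ℂ) 1, deriv ψ z ≠ 0 := by
    intro z hz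
    rw [(hψD z hz).deriv]
    have h1 := (aux_C_re hu (z := z) (by simpa using hz)).1
    have h2 := (aux_T_lt hx0 hx1 (hE1 z hz)).1
    have h3 : E z ≠ 0 := exp_ne_zero _
    exact mul_ne_zero (div_ne_zero hxc (pow_ne_zero _ h2)) (mul_ne_zero h3
      (mul_ne_zero (neg_ne_zero.2 huc) (div_ne_zero two_ne_zero (pow_ne_zero _ h1))))
  have cov : IsCoveringMap (Set.MapsTo.restrict φ (ball 0 1) _ hm) := by
    intro y
    obtain ⟨i, t, ht⟩ := hcov y
    exact IsEvenlyCovered.of_trivialization ht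
  have := contractibleSpace_ball (x := (0:ℂ)) one_pos
  have : SimplyConnectedSpace (ball (0:ℂ) 1) := SimplyConnectedSpace.ofContractible _
  have : LocallyPathConnectedSpace (ball (0:ℂ) 1) := isOpen_ball.locallyPathConnectedSpace
  obtain ⟨K, ⟨hK0, hK⟩, -⟩ := cov.existsUnique_continuousMap_lifts
    ⟨hψm.restrict ψ _ _, hψd.continuousOn.mapsToRestrict hψm⟩ ⟨0, hm0⟩ ⟨0, hm0⟩
    (by ext; simp [h0, hψ0])
  classical
  obtain ⟨k, hk⟩ : ∃ k : ℂ → ℂ, ∀ z : ball (0:ℂ) 1, k z = K z :=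
    ⟨fun z ↦ if hz : z ∈ ball (0:ℂ) 1 then K ⟨z, hz⟩ else 0, fun z => by
      have := z.2
      simp only [dif_pos this]⟩
  have hkc : ContinuousOn k (ball 0 1) := by
    rw [continuousOn_iff_continuous_domRestrict]
    have : (ball (0:ℂ) 1).domRestrict k = fun z => (K z : ℂ) := funext hk
    rw [this]
    exact continuous_subtype_val.comp K.continuous
  have hkm : MapsTo k (ball 0 1) (ball 0 1) := by
    intro z hz
    rw [hk ⟨z, hz⟩]
    exact (K _).2
  have hk0 : k 0 = 0 := by rw [hk ⟨0, hm0⟩, hK0]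
  have hkψ : ∀ z ∈ ball (0:ℂ) 1, φ (k z) = ψ z := by
    intro z hz
    rw [hk ⟨z, hz⟩]
    exact congrArg Subtype.val (congrFun hK ⟨z, hz⟩)
  have hkd := aux_diff2 isOpen_ball isOpen_ball hd hkc hkm hψd hψ' hkψ
  have hS := norm_deriv_le_one_of_mapsTo_ball hkd (fun z hz => by
    rw [hk0]; exact ball_subset_closedBall (hkm hz)) one_pos
  have hn := isOpen_ball.mem_nhds hm0
  have hφD : HasDerivAt φ (deriv φ 0) (k 0) := by
    rw [hk0]; exact (hd.differentiableAt hn).hasDerivAt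
  have hc := (hφD.comp 0 (hkd.differentiableAt hn).hasDerivAt).congr_of_eventuallyEq
    (f₁ := ψ) (Filter.eventually_of_mem hn fun z hz => (hkψ z hz).symm)
  have heq := hc.unique (hψD 0 hm0)
  have hv : ((x:ℂ)^2 - 1) / (1 - x * E 0)^2 * (E 0 * (-u * (2 / (1 - 0)^2)))
      = ((u / Real.sinh u : ℝ) : ℂ) := by
    rw [hE0, ← aux_val, ← hx]
    push_cast
    have h1 : (1 - (x:ℂ) * x) ≠ 0 := fun h => hxc (by linear_combination -h)
    have h2 : (1 - (x:ℂ)^2) ≠ 0 := fun h => hxc (by linear_combination -h)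
    rw [show (1 - (x:ℂ) * x) = 1 - (x:ℂ)^2 by ring]
    field_simp
    ring
  rw [hv] at heq
  have h3 := congrArg norm heq
  rw [norm_mul, norm_real, Real.norm_of_nonneg (div_pos hu (Real.sinh_pos_iff.2 hu)).le] at h3
  rw [← h3]
  exact mul_le_of_le_one_right (norm_nonneg _) hS

/-- For `u > 0` and `x = e^{-u}`, every holomorphic covering map
`φ : 𝔻 → 𝔻 \ {x}` with `φ 0 = 0` satisfies `|φ'(0)| = u / sinh u`. -/
theorem stmt0 (u : ℝ) (hu : 0 < u) (φ : ℂ → ℂ)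
    (hφ : IsHoloCover φ (Metric.ball 0 1 \ {((Real.exp (-u) : ℝ) : ℂ)}))
    (hφ0 : φ 0 = 0) :
    ‖deriv φ 0‖ = u / Real.sinh u := by
  apply le_antisymm
  · obtain ⟨hd, hm, -⟩ := hφ
    exact aux_upper hu hd hm hφ0
  · exact aux_lower hu hφ hφ0
end
end

section
/- For every u ∈ (0, π], the quantity −ln(u/sinh(u))/u² = ln(sinh(u)/u)/u² lies in the interval [0.13, 1/6]. -/
theorem aux_fact (n : ℕ) : 6 ^ n * n.factorial ≤ (2 * n + 1).factorial := by
  induction n with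
  | zero => simp
  | succ k ih =>
    have e : (2 * (k + 1) + 1).factorial = (2 * k + 3) * ((2 * k + 2) * (2 * k + 1).factorial) := by
      rw [show 2 * (k + 1) + 1 = (2 * k + 1) + 1 + 1 by ring, Nat.factorial_succ, Nat.factorial_succ]
    rw [e, Nat.factorial_succ, pow_succ]
    calc 6 ^ k * 6 * ((k + 1) * k.factorial) = (6 * (k + 1)) * (6 ^ k * k.factorial) := by ring
      _ ≤ ((2 * k + 3) * (2 * k + 2)) * (2 * k + 1).factorial := by
        apply Nat.mul_le_mul _ ih
        nlinarith
      _ = _ := by ring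

theorem aux_upper_s2 (u : ℝ) (h : 0 < u) : Real.sinh u ≤ u * Real.exp (u ^ 2 / 6) := by
  have hs := Real.hasSum_sinh u
  have he : HasSum (fun n : ℕ => u * ((u ^ 2 / 6) ^ n / n.factorial)) (u * Real.exp (u ^ 2 / 6)) := by
    apply HasSum.mul_left
    rw [Real.exp_eq_exp_ℝ]
    exact NormedSpace.expSeries_div_hasSum_exp (u ^ 2 / 6)
  refine hasSum_le (fun n => ?_) hs he
  have hf : (6 : ℝ) ^ n * n.factorial ≤ (2 * n + 1).factorial := by exact_mod_cast aux_fact n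
  have e : u * ((u ^ 2 / 6) ^ n / n.factorial) = u ^ (2 * n + 1) / (6 ^ n * n.factorial) := by
    rw [div_pow, div_div, pow_succ u (2 * n), pow_mul]; ring
  rw [e]
  have : (0 : ℝ) < 6 ^ n * n.factorial := by positivity
  gcongr

theorem aux_lower_s2 (u : ℝ) (h : 0 < u) :
    u * (1 + u ^ 2 / 6 + (u ^ 2) ^ 2 / 120 + (u ^ 2) ^ 3 / 5040) ≤ Real.sinh u := by
  have := sum_le_hasSum (Finset.range 4) (fun n _ => by positivity) (Real.hasSum_sinh u)
  refine le_trans (le_of_eq ?_) this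
  simp [Finset.sum_range_succ, Nat.factorial]
  ring

theorem aux_poly (t : ℝ) (h0 : 0 ≤ t) (h1 : t ≤ 0.6416) :
    (1 + t + t ^ 2 / 2 + t ^ 3 / 6 + t ^ 4 * 5 / 96) ^ 2 ≤
    1 + (t / 0.065) / 6 + (t / 0.065) ^ 2 / 120 + (t / 0.065) ^ 3 / 5040 := by
  have p2 : t ^ 2 ≤ 0.6416 ^ 2 := by gcongr
  have p3 : t ^ 3 ≤ 0.6416 ^ 3 := by gcongr
  have p4 : t ^ 4 ≤ 0.6416 ^ 4 := by gcongr
  have p5 : t ^ 5 ≤ 0.6416 ^ 5 := by gcongr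
  have p6 : t ^ 6 ≤ 0.6416 ^ 6 := by gcongr
  have p7 : t ^ 7 ≤ 0.6416 ^ 7 := by gcongr
  norm_num at p2 p3 p4 p5 p6 p7 h1
  obtain ⟨R, hR⟩ : ∃ R : ℝ, R = (1 / 0.065 / 6 - 2) + (1 / 0.065 ^ 2 / 120 - 2) * t
    + (1 / 0.065 ^ 3 / 5040 - 4 / 3) * t ^ 2 - (1 / 4 + 1 / 3 + 5 / 48) * t ^ 3
    - (1 / 6 + 5 / 48) * t ^ 4 - (1 / 36 + 5 / 96) * t ^ 5 - (5 / 288) * t ^ 6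
    - (25 / 9216) * t ^ 7 := ⟨_, rfl⟩
  have hp : 0 ≤ R := by
    rw [hR]; norm_num; linarith
  have := mul_nonneg h0 hp
  rw [hR] at this
  norm_num at this ⊢
  linarith

/-- For every `u ∈ (0, π]`, the quantity `-ln(u/sinh u)/u² = ln(sinh u/u)/u²`
lies in `[0.13, 1/6]`. -/
theorem stmt2 (u : ℝ) (h1 : 0 < u) (h2 : u ≤ Real.pi) :
    -Real.log (u / Real.sinh u) / u ^ 2 = Real.log (Real.sinh u / u) / u ^ 2 ∧
    Real.log (Real.sinh u / u) / u ^ 2 ∈ Set.Icc (0.13 : ℝ) (1 / 6) := by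
  have hs : 0 < Real.sinh u := Real.sinh_pos_iff.2 h1
  have hu2 : 0 < u ^ 2 := by positivity
  refine ⟨by rw [← Real.log_inv, inv_div], ?_, ?_⟩
  · rw [le_div_iff₀ hu2, Real.le_log_iff_exp_le (by positivity), le_div_iff₀ h1]
    have hpi : u ≤ 3.1416 := h2.trans Real.pi_lt_d4.le
    have hx : u ^ 2 ≤ 3.1416 ^ 2 := by gcongr
    norm_num at hx
    obtain ⟨t, ht⟩ : ∃ t : ℝ, t = 0.065 * u ^ 2 := ⟨_, rfl⟩
    have t0 : 0 ≤ t := by rw [ht]; positivity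
    have t1 : t ≤ 0.6416 := by rw [ht]; norm_num; linarith
    have hq := aux_poly t t0 t1
    have e : t / 0.065 = u ^ 2 := by rw [ht]; norm_num
    rw [e] at hq
    have hb := Real.exp_bound' t0 (by linarith) (n := 4) (by norm_num)
    have hb2 : Real.exp t ≤ 1 + t + t ^ 2 / 2 + t ^ 3 / 6 + t ^ 4 * 5 / 96 := by
      refine hb.trans (le_of_eq ?_)
      simp [Finset.sum_range_succ, Nat.factorial]
      ring
    have e2 : Real.exp (0.13 * u ^ 2) = Real.exp t ^ 2 := by
      rw [← Real.exp_nat_mul, ht]; congr 1; push_cast; ring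
    rw [e2, mul_comm]
    refine le_trans ?_ (aux_lower_s2 u h1)
    refine mul_le_mul_of_nonneg_left (le_trans ?_ hq) h1.le
    exact pow_le_pow_left₀ (Real.exp_pos _).le hb2 2
  · rw [div_le_iff₀ hu2, Real.log_le_iff_le_exp (by positivity), div_le_iff₀ h1, mul_comm (Real.exp _)]
    have := aux_upper_s2 u h1
    rwa [show 1 / 6 * u ^ 2 = u ^ 2 / 6 by ring]
end

section
/- Let O ⊆ ℂ be an open set satisfying O + 2πi = O and containing the half-plane {z : Re z < −π}. Then there exists a finite or countable family of points (w_i)_{i∈I} with Re w_i < 0 and w_i ∉ O such that the triangles T(w_i) are pairwise disjoint in the quotient ℂ/2πiℤ, and ⋃_{w ∉ O, Re w < 0} T(w) ⊆ ⋃_{i∈I} ⋃_{k∈ℤ} (T₅(w_i) + 2πik). Consequently, Σ_{i∈I} area(T(w_i)) ≤ area in the quotient of ⋃_{w ∉ O, Re w < 0} T(w) ≤ 25 · Σ_{i∈I} area(T(w_i)). -/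
open Complex Metric Set MeasureTheory

noncomputable section

/-- The closed right isosceles triangle with right-angle vertex `w`, hypotenuse
on the imaginary axis. -/
def Tri (w : ℂ) : Set ℂ := {z : ℂ | z.re ≤ 0 ∧ |z.im - w.im| ≤ z.re - w.re}

/-- `T₅(w) = T(5 Re w + i Im w)`, the triangle with base 5 times larger. -/
def Tri5 (w : ℂ) : Set ℂ := Tri (((5 * w.re : ℝ) : ℂ) + (w.im : ℂ) * Complex.I)

/-- Area of a subset of `ℂ` measured in the quotient `ℂ / 2πiℤ`. -/
def quotArea (S : Set ℂ) : ENNReal :=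
  MeasureTheory.volume
    ((⋃ k : ℤ, (fun z : ℂ => z + 2 * Real.pi * Complex.I * k) '' S) ∩
      {z : ℂ | 0 ≤ z.im ∧ z.im < 2 * Real.pi})

/-- Disjointness of two subsets of `ℂ` viewed in the quotient `ℂ / 2πiℤ`. -/
def QuotDisjoint (S₁ S₂ : Set ℂ) : Prop :=
  Disjoint (⋃ k : ℤ, (fun z : ℂ => z + 2 * Real.pi * Complex.I * k) '' S₁) S₂

def TriO (w : ℂ) : Set ℂ := {z : ℂ | z.re ≤ 0 ∧ |z.im - w.im| < z.re - w.re}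

def tB (S : Set ℂ) : Set ℂ := ⋃ k : ℤ, (fun z : ℂ => z + 2 * Real.pi * Complex.I * k) '' S

def strip : Set ℂ := {z : ℂ | 0 ≤ z.im ∧ z.im < 2 * Real.pi}

lemma mem_tB {S : Set ℂ} {z : ℂ} : z ∈ tB S ↔ ∃ k : ℤ, z + 2 * Real.pi * Complex.I * k ∈ S := by
  simp only [tB, mem_iUnion, mem_image]
  constructor
  · rintro ⟨k, x, hx, rfl⟩
    refine ⟨-k, ?_⟩
    push_cast
    convert hx using 1
    ring
  · rintro ⟨k, hk⟩
    refine ⟨-k, _, hk, ?_⟩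
    push_cast
    ring

lemma tr_re (z : ℂ) (k : ℤ) : (z + 2 * Real.pi * Complex.I * k).re = z.re := by simp

lemma tr_im (z : ℂ) (k : ℤ) : (z + 2 * Real.pi * Complex.I * k).im = z.im + 2 * Real.pi * k := by
  simp

lemma tB_mono {S T : Set ℂ} (h : S ⊆ T) : tB S ⊆ tB T := by
  intro z hz
  rw [mem_tB] at *
  obtain ⟨k, hk⟩ := hz
  exact ⟨k, h hk⟩

lemma subset_tB (S : Set ℂ) : S ⊆ tB S := by
  intro z hz
  rw [mem_tB]
  exact ⟨0, by simpa using hz⟩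

lemma tB_tB (S : Set ℂ) : tB (tB S) ⊆ tB S := by
  intro z hz
  rw [mem_tB] at *
  obtain ⟨k, hk⟩ := hz
  rw [mem_tB] at hk
  obtain ⟨l, hl⟩ := hk
  refine ⟨k + l, ?_⟩
  push_cast
  convert hl using 1
  ring

lemma quotArea_eq (S : Set ℂ) : quotArea S = volume (tB S ∩ strip) := rfl

lemma meas_strip : MeasurableSet strip := by
  unfold strip
  exact (measurableSet_le measurable_const Complex.measurable_im).inter
    (measurableSet_lt Complex.measurable_im measurable_const)

lemma cont_f (w : ℂ) : Continuous fun z : ℂ => |z.im - w.im| :=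
  (Complex.continuous_im.sub continuous_const).abs

lemma cont_g (w : ℂ) : Continuous fun z : ℂ => z.re - w.re :=
  Complex.continuous_re.sub continuous_const

lemma meas_f (w : ℂ) : Measurable fun z : ℂ => |z.im - w.im| := (cont_f w).measurable

lemma meas_g (w : ℂ) : Measurable fun z : ℂ => z.re - w.re := (cont_g w).measurable

lemma meas_Tri (w : ℂ) : MeasurableSet (Tri w) := by
  unfold Tri
  exact (measurableSet_le Complex.measurable_re measurable_const).inter
    (measurableSet_le (meas_f w) (meas_g w))

lemma meas_TriO (w : ℂ) : MeasurableSet (TriO w) := by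
  unfold TriO
  exact (measurableSet_le Complex.measurable_re measurable_const).inter
    (measurableSet_lt (meas_f w) (meas_g w))

lemma tB_eq_preim (S : Set ℂ) :
    tB S = ⋃ k : ℤ, (fun z : ℂ => z + 2 * Real.pi * Complex.I * k) ⁻¹' S := by
  ext z
  rw [mem_tB]
  simp

lemma meas_tB {S : Set ℂ} (h : MeasurableSet S) : MeasurableSet (tB S) := by
  rw [tB_eq_preim]
  exact MeasurableSet.iUnion fun k => (measurable_add_const _) h

lemma TriO_sub (w : ℂ) : TriO w ⊆ Tri w := fun _ h => ⟨h.1, h.2.le⟩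

/-- shifted strips -/
def st (k : ℤ) : Set ℂ := (fun z : ℂ => z + 2 * Real.pi * Complex.I * ((-k : ℤ) : ℂ)) ⁻¹' strip

lemma mem_st {k : ℤ} {z : ℂ} : z ∈ st k ↔ ⌊z.im / (2 * Real.pi)⌋ = k := by
  have hp : 0 < 2 * Real.pi := by positivity
  rw [Int.floor_eq_iff, le_div_iff₀ hp, div_lt_iff₀ hp]
  simp only [st, strip, mem_preimage, mem_setOf_eq, tr_im]
  push_cast
  constructor <;> rintro ⟨h1, h2⟩ <;> constructor <;> nlinarith

lemma vol_slices {S : Set ℂ} (h : MeasurableSet S) :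
    ∑' k : ℤ, volume ((fun z : ℂ => z + 2 * Real.pi * Complex.I * k) ⁻¹' S ∩ strip)
      = volume S := by
  have h1 : ∀ k : ℤ, volume ((fun z : ℂ => z + 2 * Real.pi * Complex.I * k) ⁻¹' S ∩ strip)
      = volume (S ∩ st k) := by
    intro k
    rw [← measure_preimage_add_right volume (2 * Real.pi * Complex.I * k) (S ∩ st k)]
    congr 1
    ext z
    simp only [st, mem_inter_iff, mem_preimage]
    push_cast
    rw [show z + 2 * (Real.pi : ℂ) * I * k + 2 * Real.pi * I * -k = z by ring]
  simp_rw [h1]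
  rw [← measure_iUnion]
  · congr 1
    ext z
    simp only [mem_iUnion, mem_inter_iff, mem_st]
    simp
  · intro i j hij
    rw [Function.onFun, Set.disjoint_left]
    rintro z ⟨_, h1⟩ ⟨_, h2⟩
    rw [mem_st] at h1 h2
    exact hij (h1.symm.trans h2)
  · intro k
    exact h.inter ((measurable_add_const _) meas_strip)

lemma quotArea_le {S : Set ℂ} (h : MeasurableSet S) : quotArea S ≤ volume S := by
  rw [quotArea_eq, tB_eq_preim, iUnion_inter, ← vol_slices h]
  exact measure_iUnion_le _

lemma quotArea_TriO {w : ℂ} (hw : -Real.pi ≤ w.re) : quotArea (TriO w) = volume (TriO w) := by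
  rw [quotArea_eq, tB_eq_preim, iUnion_inter, ← vol_slices (meas_TriO w)]
  refine measure_iUnion ?_ fun k => ((measurable_add_const _) (meas_TriO w)).inter meas_strip
  intro i j hij
  rw [Function.onFun, Set.disjoint_left]
  rintro z ⟨⟨h0, h1⟩, _⟩ ⟨⟨_, h2⟩, _⟩
  rw [tr_re, tr_im] at *
  rw [abs_lt] at h1 h2
  have hp := Real.pi_pos
  rcases lt_or_gt_of_ne hij with h | h
  · have : (i : ℝ) + 1 ≤ j := by exact_mod_cast h
    nlinarith
  · have : (j : ℝ) + 1 ≤ i := by exact_mod_cast h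
    nlinarith

lemma lint_aux {r : ℝ} (hr : 0 ≤ r) :
    ∫⁻ x : ℝ, (Iic (0:ℝ)).indicator (fun x => ENNReal.ofReal (2 * (x + r))) x
      = ENNReal.ofReal (r ^ 2) := by
  have h1 : (Iic (0:ℝ)).indicator (fun x => ENNReal.ofReal (2 * (x + r)))
      = (Ioc (-r) 0).indicator (fun x => ENNReal.ofReal (2 * (x + r))) := by
    ext x
    simp only [indicator_apply, mem_Iic, mem_Ioc]
    by_cases hx : x ≤ 0 <;> by_cases hx2 : -r < x <;> simp [hx, hx2]
    linarith
  rw [h1, lintegral_indicator measurableSet_Ioc, ← ofReal_integral_eq_lintegral_ofReal]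
  · congr 1
    rw [← intervalIntegral.integral_of_le (by linarith)]
    rw [intervalIntegral.integral_const_mul, intervalIntegral.integral_add (by simp) (by simp)]
    simp
    ring
  · exact ((by fun_prop : Continuous fun x : ℝ => 2 * (x + r)).integrableOn_Icc).mono_set Ioc_subset_Icc_self
  · filter_upwards [ae_restrict_mem measurableSet_Ioc] with x hx
    have := hx.1
    simp only [Pi.zero_apply]
    linarith

lemma vol_eq {S : Set ℂ} (h : MeasurableSet S) :
    volume S = ∫⁻ x : ℝ, volume {y : ℝ | (⟨x, y⟩ : ℂ) ∈ S} := by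
  rw [← (Complex.volume_preserving_equiv_real_prod.symm).measure_preimage h.nullMeasurableSet,
    Measure.volume_eq_prod,
    Measure.prod_apply (Complex.measurableEquivRealProd.symm.measurable h)]
  rfl

lemma vol_Tri {w : ℂ} (hw : w.re < 0) : volume (Tri w) = ENNReal.ofReal (w.re ^ 2) := by
  rw [vol_eq (meas_Tri w), ← neg_sq, ← lint_aux (by linarith : 0 ≤ -w.re)]
  congr 1
  ext x
  by_cases hx : x ≤ 0
  · have : {y : ℝ | (⟨x, y⟩ : ℂ) ∈ Tri w}
        = Icc (w.im - (x - w.re)) (w.im + (x - w.re)) := by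
      ext y
      simp only [Tri, mem_setOf_eq, mem_Icc, abs_le, hx, true_and]
      constructor <;> rintro ⟨_, _⟩ <;> constructor <;> linarith
    rw [this, Real.volume_Icc, indicator_of_mem (by simpa using hx)]
    congr 1
    ring
  · rw [indicator_of_notMem (by simpa using hx)]
    simp [Tri, hx]

lemma vol_TriO {w : ℂ} (hw : w.re < 0) : volume (TriO w) = ENNReal.ofReal (w.re ^ 2) := by
  rw [vol_eq (meas_TriO w), ← neg_sq, ← lint_aux (by linarith : 0 ≤ -w.re)]
  congr 1
  ext x
  by_cases hx : x ≤ 0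
  · have : {y : ℝ | (⟨x, y⟩ : ℂ) ∈ TriO w}
        = Ioo (w.im - (x - w.re)) (w.im + (x - w.re)) := by
      ext y
      simp only [TriO, mem_setOf_eq, mem_Ioo, abs_lt, hx, true_and]
      constructor <;> rintro ⟨_, _⟩ <;> constructor <;> linarith
    rw [this, Real.volume_Ioo, indicator_of_mem (by simpa using hx)]
    congr 1
    ring
  · rw [indicator_of_notMem (by simpa using hx)]
    simp [TriO, hx]

lemma quotArea_Tri5_le {w : ℂ} (hw : w.re < 0) :
    quotArea (Tri5 w) ≤ 25 * ENNReal.ofReal (w.re ^ 2) := by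
  refine (quotArea_le (meas_Tri _)).trans ?_
  rw [vol_Tri (by simp; linarith)]
  rw [show (25 : ENNReal) = ENNReal.ofReal 25 by norm_num, ← ENNReal.ofReal_mul (by norm_num)]
  apply ENNReal.ofReal_le_ofReal
  simp
  nlinarith

lemma interior_tB {w : ℂ} (hw : w.re < 0) : (interior (tB (Tri w))).Nonempty := by
  have ho : IsOpen {z : ℂ | z.re < 0 ∧ |z.im - w.im| < z.re - w.re} := by
    apply IsOpen.inter
    · exact isOpen_lt Complex.continuous_re continuous_const
    · exact isOpen_lt (cont_f w) (cont_g w)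
  refine ⟨⟨w.re / 2, w.im⟩, mem_interior.2 ⟨_, ?_, ho, ?_⟩⟩
  · refine Subset.trans ?_ (subset_tB _)
    exact fun z hz => ⟨hz.1.le, hz.2.le⟩
  · constructor <;> simp <;> linarith

lemma cover {a b : ℂ} (hn : (tB (Tri a) ∩ tB (Tri b)).Nonempty) (hd : -a.re ≤ 2 * -b.re) :
    Tri a ⊆ tB (Tri5 b) := by
  obtain ⟨z, h1, h2⟩ := hn
  rw [mem_tB] at h1 h2
  obtain ⟨k, hk0, hk⟩ := h1
  obtain ⟨l, hl0, hl⟩ := h2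
  rw [tr_re] at *
  rw [tr_im] at *
  intro x hx
  rw [mem_tB]
  refine ⟨l - k, ?_⟩
  obtain ⟨hx0, hx⟩ := hx
  unfold Tri5 Tri
  refine ⟨by rw [tr_re]; exact hx0, ?_⟩
  rw [tr_re, tr_im]
  rw [abs_le] at *
  simp
  constructor <;> linarith

/-- For any open `O ⊆ ℂ` with `O + 2πi = O` containing the half-plane
`Re z < -π`, there is a countable family of points `w ∉ O` with `Re w < 0`
whose triangles are pairwise disjoint in the quotient, such that
`⋃_{w ∉ O, Re w < 0} T(w) ⊆ ⋃_i ⋃_k (T₅(wᵢ) + 2πik)`; consequently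
`Σᵢ area T(wᵢ) ≤ quotient-area of the union ≤ 25 Σᵢ area T(wᵢ)`
(the Euclidean area of `T(w)` being `(Re w)²`). -/
theorem stmt4 (O : Set ℂ) (hO : IsOpen O)
    (hper : (fun z : ℂ => z + 2 * Real.pi * Complex.I) '' O = O)
    (hhalf : {z : ℂ | z.re < -Real.pi} ⊆ O) :
    ∃ S : Set ℂ, S.Countable ∧ (∀ w ∈ S, w.re < 0 ∧ w ∉ O) ∧
      (S.Pairwise fun w₁ w₂ => QuotDisjoint (Tri w₁) (Tri w₂)) ∧
      ((⋃ w ∈ {w : ℂ | w ∉ O ∧ w.re < 0}, Tri w) ⊆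
        ⋃ w ∈ S, ⋃ k : ℤ, (fun z : ℂ => z + 2 * Real.pi * Complex.I * k) '' Tri5 w) ∧
      (∑' w : S, ENNReal.ofReal ((w : ℂ).re ^ 2)
          ≤ quotArea (⋃ w ∈ {w : ℂ | w ∉ O ∧ w.re < 0}, Tri w)) ∧
      quotArea (⋃ w ∈ {w : ℂ | w ∉ O ∧ w.re < 0}, Tri w)
          ≤ 25 * ∑' w : S, ENNReal.ofReal ((w : ℂ).re ^ 2) := by
  have hre : ∀ w : ℂ, w ∉ O → -Real.pi ≤ w.re := fun w hw => by
    by_contra h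
    exact hw (hhalf (by simpa using h))
  obtain ⟨S, hSt, hdis, hcov⟩ := Vitali.exists_disjoint_subfamily_covering_enlargement
    (fun w => tB (Tri w)) {w : ℂ | w ∉ O ∧ w.re < 0} (fun w => -w.re) 2 (by norm_num)
    (fun w hw => by simpa using hw.2.le) Real.pi
    (fun w hw => by linarith [hre w hw.1])
    (fun w hw => (interior_tB hw.2).mono interior_subset)
  have hSc : S.Countable :=
    hdis.countable_of_nonempty_interior fun w hw => interior_tB (hSt hw).2
  have hsub : (⋃ w ∈ {w : ℂ | w ∉ O ∧ w.re < 0}, Tri w) ⊆ ⋃ w ∈ S, tB (Tri5 w) := by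
    refine iUnion₂_subset fun a ha => ?_
    obtain ⟨b, hb, hn, hd⟩ := hcov a ha
    exact (cover hn hd).trans (subset_biUnion_of_mem (u := fun w => tB (Tri5 w)) hb)
  refine ⟨S, hSc, fun w hw => ⟨(hSt hw).2, (hSt hw).1⟩, ?_, hsub, ?_, ?_⟩
  · intro a ha b hb hab
    exact (hdis ha hb hab).mono_right (subset_tB _)
  · calc ∑' w : S, ENNReal.ofReal ((w : ℂ).re ^ 2)
        = ∑' w : S, volume (tB (TriO w) ∩ strip) := by
          refine tsum_congr fun w => ?_
          have hw := hSt w.2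
          rw [← quotArea_eq, quotArea_TriO (hre _ hw.1), vol_TriO hw.2]
      _ = volume (⋃ w ∈ S, tB (TriO w) ∩ strip) := by
          rw [measure_biUnion hSc]
          · intro a ha b hb hab
            exact (hdis ha hb hab).mono (inter_subset_left.trans (tB_mono (TriO_sub a)))
              (inter_subset_left.trans (tB_mono (TriO_sub b)))
          · exact fun w _ => (meas_tB (meas_TriO w)).inter meas_strip
      _ ≤ _ := by
          rw [quotArea_eq]
          refine measure_mono (iUnion₂_subset fun w hw => inter_subset_inter_left _ (tB_mono ?_))
          exact (TriO_sub w).trans (subset_biUnion_of_mem (u := fun w => Tri w) (hSt hw))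
  · calc quotArea (⋃ w ∈ {w : ℂ | w ∉ O ∧ w.re < 0}, Tri w)
        ≤ volume (⋃ w ∈ S, tB (Tri5 w) ∩ strip) := by
          rw [quotArea_eq]
          refine measure_mono ?_
          rintro z ⟨hz, hs⟩
          rw [mem_tB] at hz
          obtain ⟨k, hk⟩ := hz
          obtain ⟨w, hw, hz⟩ := mem_iUnion₂.1 (hsub hk)
          exact mem_iUnion₂.2 ⟨w, hw, tB_tB _ (mem_tB.2 ⟨k, hz⟩), hs⟩
      _ ≤ ∑' w : S, volume (tB (Tri5 w) ∩ strip) := measure_biUnion_le _ hSc _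
      _ ≤ ∑' w : S, 25 * ENNReal.ofReal ((w : ℂ).re ^ 2) :=
          ENNReal.tsum_le_tsum fun w => quotArea_Tri5_le (hSt w.2).2
      _ = _ := ENNReal.tsum_mul_left
end
end

section
/- For every open set U ⊆ 𝔻 containing the disc B(0, e^{−π}) and with 0 ∈ U, there exists a finite or countable family of points (w_i)_{i∈I} with Re w_i < 0 and e^{w_i} ∈ 𝔻 \ U such that the triangles T(w_i) are pairwise disjoint in the quotient ℂ/2πiℤ and the area in the quotient of ⋃_{Re w < 0, e^w ∈ 𝔻\U} T(w) is at most 25 · Σ_{i∈I} area(T(w_i)). -/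
open Complex Metric Set MeasureTheory

noncomputable section

lemma aux_shift_im (k : ℤ) (z : ℂ) :
    (z + 2 * Real.pi * Complex.I * k).im = z.im + 2 * Real.pi * k := by
  simp

lemma aux_shift_re (k : ℤ) (z : ℂ) :
    (z + 2 * Real.pi * Complex.I * k).re = z.re := by
  simp

lemma aux_tri_closed (w : ℂ) : IsClosed (Tri w) := by
  have h1 : IsClosed {z : ℂ | z.re ≤ 0} := isClosed_le Complex.continuous_re continuous_const
  have h2 : IsClosed {z : ℂ | |z.im - w.im| ≤ z.re - w.re} :=
    isClosed_le (by fun_prop) (by fun_prop)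
  exact h1.inter h2

lemma aux_quotArea_le (S : Set ℂ) (hS : MeasurableSet S) : quotArea S ≤ volume S := by
  unfold quotArea
  set F : Set ℂ := {z : ℂ | 0 ≤ z.im ∧ z.im < 2 * Real.pi} with hF
  have hFm : MeasurableSet F :=
    (measurableSet_le measurable_const Complex.measurable_im).inter
      (measurableSet_lt Complex.measurable_im measurable_const)
  rw [iUnion_inter]
  refine (measure_iUnion_le _).trans ?_
  have key : ∀ k : ℤ, volume ((fun z : ℂ => z + 2 * Real.pi * Complex.I * k) '' S ∩ F)
      = volume (S ∩ (fun z : ℂ => z + 2 * Real.pi * Complex.I * k) ⁻¹' F) := by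
    intro k
    rw [← measure_preimage_add_right volume (2 * Real.pi * Complex.I * k), preimage_inter,
      preimage_image_eq _ (add_left_injective _)]
  simp_rw [key]
  rw [← measure_iUnion]
  · exact measure_mono (iUnion_subset fun k => inter_subset_left)
  · intro j k hjk
    refine disjoint_left.2 ?_
    rintro z ⟨-, hz1⟩ ⟨-, hz2⟩
    apply hjk
    simp only [hF, mem_preimage, mem_ofPred_eq, aux_shift_im] at hz1 hz2
    have hp := Real.pi_pos
    have h1 : (j : ℝ) < k + 1 := by
      by_contra h
      push Not at h
      nlinarith
    have h2 : (k : ℝ) < j + 1 := by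
      by_contra h
      push Not at h
      nlinarith
    have h1' : j < k + 1 := by exact_mod_cast h1
    have h2' : k < j + 1 := by exact_mod_cast h2
    omega
  · intro k
    exact hS.inter (hFm.preimage (measurable_id.add_const _))

lemma aux_vol_tri (w : ℂ) (hw : w.re ≤ 0) : volume (Tri w) ≤ ENNReal.ofReal (w.re ^ 2) := by
  have h := Complex.volume_preserving_equiv_real_prod.symm
  rw [← h.measure_preimage (aux_tri_closed w).measurableSet.nullMeasurableSet]
  have hm : MeasurableSet (Complex.measurableEquivRealProd.symm ⁻¹' Tri w) :=
    (aux_tri_closed w).measurableSet.preimage (MeasurableEquiv.measurable _)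
  rw [Measure.volume_eq_prod, Measure.prod_apply hm]
  have hle : ∀ x : ℝ, volume (Prod.mk x ⁻¹' (Complex.measurableEquivRealProd.symm ⁻¹' Tri w))
      ≤ (Icc w.re 0).indicator (fun x => ENNReal.ofReal (2 * (x - w.re))) x := by
    intro x
    have hsub : Prod.mk x ⁻¹' (Complex.measurableEquivRealProd.symm ⁻¹' Tri w) =
        {y : ℝ | x ≤ 0 ∧ |y - w.im| ≤ x - w.re} := by
      ext y
      simp [Tri, Complex.measurableEquivRealProd]
    rw [hsub]
    by_cases hx : x ∈ Icc w.re 0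
    · rw [indicator_of_mem hx]
      calc volume {y : ℝ | x ≤ 0 ∧ |y - w.im| ≤ x - w.re}
          ≤ volume (Icc (w.im - (x - w.re)) (w.im + (x - w.re))) := by
            apply measure_mono
            rintro y ⟨-, hy⟩
            rw [abs_le] at hy
            constructor <;> linarith
        _ = ENNReal.ofReal (2 * (x - w.re)) := by
            rw [Real.volume_Icc]; congr 1; ring
    · rw [indicator_of_notMem hx]
      have : {y : ℝ | x ≤ 0 ∧ |y - w.im| ≤ x - w.re} = ∅ := by
        ext y
        simp only [mem_ofPred_eq, mem_empty_iff_false, iff_false]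
        rintro ⟨h1, h2⟩
        exact hx ⟨by linarith [abs_nonneg (y - w.im)], h1⟩
      simp [this]
  refine (lintegral_mono hle).trans ?_
  rw [lintegral_indicator measurableSet_Icc, ← ofReal_integral_eq_lintegral_ofReal]
  · apply ENNReal.ofReal_le_ofReal
    rw [integral_Icc_eq_integral_Ioc, ← intervalIntegral.integral_of_le hw]
    simp
    nlinarith
  · exact (by fun_prop : Continuous fun x : ℝ => 2 * (x - w.re)).integrableOn_Icc
  · refine (ae_restrict_iff' measurableSet_Icc).2 (Filter.Eventually.of_forall ?_)
    intro x hx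
    have := hx.1
    simp only [Pi.zero_apply]
    linarith

theorem stmt5 (U : Set ℂ) (hU : IsOpen U) (hUsub : U ⊆ Metric.ball 0 1)
    (h0 : (0 : ℂ) ∈ U) (hball : Metric.ball (0 : ℂ) (Real.exp (-Real.pi)) ⊆ U) :
    ∃ S : Set ℂ, S.Countable ∧
      (∀ w ∈ S, w.re < 0 ∧ Complex.exp w ∈ Metric.ball 0 1 \ U) ∧
      (S.Pairwise fun w₁ w₂ => QuotDisjoint (Tri w₁) (Tri w₂)) ∧
      quotArea (⋃ w ∈ {w : ℂ | w.re < 0 ∧ Complex.exp w ∈ Metric.ball 0 1 \ U}, Tri w)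
        ≤ 25 * ∑' w : S, ENNReal.ofReal ((w : ℂ).re ^ 2) := by
  have hpi := Real.pi_pos
  set t : Set ℂ := {w : ℂ | w.re < 0 ∧ Complex.exp w ∈ Metric.ball 0 1 \ U} with ht
  let B : ℂ → Set ℂ := fun w => ⋃ k : ℤ, (fun z : ℂ => z + 2 * Real.pi * Complex.I * k) '' Tri w
  have hTB : ∀ w, Tri w ⊆ B w := fun w z hz => mem_iUnion.2 ⟨0, z, hz, by simp⟩
  obtain ⟨u, hut, hdisj, hcov⟩ :=
    Vitali.exists_disjoint_subfamily_covering_enlargement B t (fun w => -w.re) 2 (by norm_num)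
      (fun a ha => by have := ha.1; skip; linarith) Real.pi
      (fun a ha => by
        by_contra h
        push Not at h
        apply ha.2.2
        apply hball
        rw [mem_ball_zero_iff, Complex.norm_exp]
        apply Real.exp_lt_exp.2
        linarith)
      (fun a ha => ⟨a, hTB a ⟨ha.1.le, by simp⟩⟩)
  have hcount : u.Countable := by
    apply hdisj.countable_of_nonempty_interior
    intro a ha
    have ha0 : a.re < 0 := (hut ha).1
    refine ⟨⟨a.re / 2, a.im⟩, ?_⟩
    rw [mem_interior]
    refine ⟨{z : ℂ | z.re < 0} ∩ {z : ℂ | |z.im - a.im| < z.re - a.re}, ?_, ?_, ?_⟩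
    · rintro z ⟨h1, h2⟩
      exact hTB a ⟨le_of_lt h1, le_of_lt h2⟩
    · exact (isOpen_lt (by fun_prop) (by fun_prop)).inter (isOpen_lt (by fun_prop) (by fun_prop))
    · constructor
      · simp only [mem_ofPred_eq]; linarith
      · simp only [mem_ofPred_eq, sub_self, abs_zero]; linarith
  refine ⟨u, hcount, fun w hw => hut hw, ?_, ?_⟩
  · intro a ha b hb hab
    exact (hdisj ha hb hab).mono_right (hTB b)
  let e : ℂ → ℂ := fun b => ⟨5 * b.re, b.im⟩
  have : Countable u := hcount.to_subtype
  calc quotArea (⋃ w ∈ t, Tri w) ≤ ∑' b : u, quotArea (Tri (e b)) := by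
        unfold quotArea
        refine le_trans (measure_mono ?_) (measure_iUnion_le _)
        rintro z ⟨hz, hzF⟩
        obtain ⟨k, x, hx, rfl⟩ := mem_iUnion.1 hz
        obtain ⟨a, ha, hxa⟩ := mem_iUnion₂.1 hx
        obtain ⟨b, hb, ⟨y, hya, hyb⟩, hab⟩ := hcov a ha
        obtain ⟨i, p, hp, rfl⟩ := mem_iUnion.1 hya
        obtain ⟨j, q, hq, hpq⟩ := mem_iUnion.1 hyb
        refine mem_iUnion.2 ⟨⟨b, hb⟩, ⟨mem_iUnion.2 ⟨k - (i - j), 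
          x + 2 * Real.pi * Complex.I * ((i - j : ℤ) : ℂ), ?_, ?_⟩, hzF⟩⟩
        · have h1 := congrArg Complex.im hpq
          simp only [aux_shift_im] at h1
          have hxa1 := abs_le.1 hxa.2
          have hxa0 := hxa.1
          have hp1 := abs_le.1 hp.2
          have hp0 := hp.1
          have hq1 := abs_le.1 hq.2
          have hq0 := hq.1
          refine ⟨by rw [aux_shift_re]; exact hxa0, ?_⟩
          rw [aux_shift_re, aux_shift_im, abs_le]
          simp only [e]
          push_cast
          constructor <;> linarith [hxa1.1, hxa1.2, hp1.1, hp1.2, hq1.1, hq1.2]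
        · skip; push_cast; ring
    _ ≤ ∑' b : u, 25 * ENNReal.ofReal ((b : ℂ).re ^ 2) := by
        refine ENNReal.tsum_le_tsum fun b => ?_
        refine (aux_quotArea_le _ (aux_tri_closed _).measurableSet).trans ?_
        have hb0 : (b : ℂ).re < 0 := (hut b.2).1
        refine (aux_vol_tri _ (by simp only [e]; linarith)).trans (le_of_eq ?_)
        rw [show (25 : ENNReal) = ENNReal.ofReal 25 by norm_num,
          ← ENNReal.ofReal_mul (by norm_num)]
        congr 1
        simp only [e]; ring
    _ = 25 * ∑' b : u, ENNReal.ofReal ((b : ℂ).re ^ 2) := ENNReal.tsum_mul_left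
end
end

section
/- Let W ⊊ ℂ be a connected, simply connected open set with 0 ∈ W. Let A and B be closed subsets of ℂ with 0 ∉ A and 0 ∉ B. Let U be the connected component of W \ A containing 0 and U′ the connected component of W \ B containing 0, and assume U and U′ are simply connected. Then the connected component of W \ (A ∪ B) containing 0 is simply connected. -/
open Complex Metric Set

lemma log_const {K : Set ℂ} (hK : IsPreconnected K) {h : ℂ → ℂ} (hc : ContinuousOn h K) (c : ℂ)
    (he : ∀ z ∈ K, exp (h z) = c) {a b : ℂ} (ha : a ∈ K) (hb : b ∈ K) : h a = h b := by
  by_contra hne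
  have hint : ∀ z ∈ K, ∃ n : ℤ, h z = h a + n * (2 * Real.pi * I) := fun z hz =>
    Complex.exp_eq_exp_iff_exists_int.1 ((he z hz).trans (he a ha).symm)
  have hc' : ContinuousOn (fun z => (h z).im) K := Complex.continuous_im.comp_continuousOn hc
  have him : ∀ z ∈ K, ∃ n : ℤ, (h z).im = (h a).im + n * (2 * Real.pi) := fun z hz => by
    obtain ⟨n, hn⟩ := hint z hz
    exact ⟨n, by rw [hn]; simp⟩
  obtain ⟨n, hn⟩ := hint b hb
  have hn0 : n ≠ 0 := by rintro rfl; apply hne; simp [hn]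
  have hbi : (h b).im = (h a).im + n * (2 * Real.pi) := by rw [hn]; simp
  have hpi := Real.pi_pos
  rcases lt_or_gt_of_ne hn0 with h0 | h0
  · have h1 : (n : ℝ) ≤ -1 := by exact_mod_cast (by lia : n ≤ -1)
    have hm : (h a).im - Real.pi ∈ Icc (h b).im (h a).im := by
      constructor <;> nlinarith
    obtain ⟨z, hz, hze⟩ := hK.intermediate_value hb ha hc' hm
    obtain ⟨m, hm⟩ := him z hz
    have : (2 * m + 1 : ℝ) * Real.pi = 0 := by simp only at hze; linarith
    have h3 : (2 * m + 1 : ℝ) = 0 := by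
      rcases mul_eq_zero.1 this with h | h
      · exact h
      · linarith
    have : (2 * m + 1 : ℤ) = 0 := by exact_mod_cast h3
    lia
  · have h1 : (1 : ℝ) ≤ n := by exact_mod_cast (by lia : 1 ≤ n)
    have hm : (h a).im + Real.pi ∈ Icc (h a).im (h b).im := by
      constructor <;> nlinarith
    obtain ⟨z, hz, hze⟩ := hK.intermediate_value ha hb hc' hm
    obtain ⟨m, hm⟩ := him z hz
    have : (2 * m - 1 : ℝ) * Real.pi = 0 := by simp only at hze; linarith
    have h3 : (2 * m - 1 : ℝ) = 0 := by
      rcases mul_eq_zero.1 this with h | h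
      · exact h
      · linarith
    have : (2 * m - 1 : ℤ) = 0 := by exact_mod_cast h3
    lia

lemma edge_log {V K : Set ℂ} {p u : ℂ} {f : ℂ → ℂ} (hf : ContinuousOn f V)
    (hexp : ∀ z ∈ V, exp (f z) = z - p) (hKV : K ⊆ V) (hK : Convex ℝ K)
    (hs : ∀ z ∈ K, (z - p) * u ∈ slitPlane) {a b : ℂ} (ha : a ∈ K) (hb : b ∈ K) :
    f a - log ((a - p) * u) = f b - log ((b - p) * u) := by
  refine log_const (K := K) (h := fun z => f z - log ((z - p) * u)) hK.isPreconnected ?_ u⁻¹ ?_ ha hb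
  · exact (hf.mono hKV).sub (ContinuousOn.clog (by fun_prop) hs)
  · intro z hz
    have h0 : (z - p) * u ≠ 0 := slitPlane_ne_zero (hs z hz)
    have h1 : z - p ≠ 0 := left_ne_zero_of_mul h0
    have h2 : u ≠ 0 := right_ne_zero_of_mul h0
    rw [Complex.exp_sub, hexp z (hKV hz), Complex.exp_log h0]
    field_simp

def phi (δ : ℝ) (v : ℤ × ℤ) : ℂ := ⟨δ * v.1, δ * v.2⟩

def Edg (V : Set ℂ) (δ : ℝ) (a b : ℤ × ℤ) : Prop :=
  ((a.1 = b.1 ∧ |a.2 - b.2| ≤ 1) ∨ (a.2 = b.2 ∧ |a.1 - b.1| ≤ 1)) ∧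
    segment ℝ (phi δ a) (phi δ b) ⊆ V

lemma chain_const {α β : Type*} {R : α → α → Prop} {F : α → β} (h : ∀ a b, R a b → F a = F b) :
    ∀ (l : List α) (a : α), List.IsChain R (a :: l) → ∀ x ∈ a :: l, F x = F a := by
  intro l
  induction l with
  | nil => intro a _ x hx; simp at hx; rw [hx]
  | cons b l ih =>
    intro a hc x hx
    rw [List.isChain_cons_cons] at hc
    rcases List.mem_cons.1 hx with rfl | hx
    · rfl
    · rw [ih b hc.2 x hx, h a b hc.1]

lemma log_neg_sub {w : ℂ} (h : 0 < w.im) : log (-w) = log w - Real.pi * I := by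
  apply Complex.ext
  · simp [Complex.log_re]
  · simp [Complex.log_im, Complex.arg_neg_eq_arg_sub_pi_of_im_pos h]

lemma log_neg_add {w : ℂ} (h : w.im < 0) : log (-w) = log w + Real.pi * I := by
  apply Complex.ext
  · simp [Complex.log_re]
  · simp [Complex.log_im, Complex.arg_neg_eq_arg_add_pi_of_im_neg h]

lemma seg_re_le {a b z : ℂ} {c : ℝ} (ha : a.re ≤ c) (hb : b.re ≤ c) (h : z ∈ segment ℝ a b) :
    z.re ≤ c := (convex_halfSpace_re_le c).segment_subset ha hb h
lemma seg_re_ge {a b z : ℂ} {c : ℝ} (ha : c ≤ a.re) (hb : c ≤ b.re) (h : z ∈ segment ℝ a b) :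
    c ≤ z.re := (convex_halfSpace_re_ge c).segment_subset ha hb h
lemma seg_im_le {a b z : ℂ} {c : ℝ} (ha : a.im ≤ c) (hb : b.im ≤ c) (h : z ∈ segment ℝ a b) :
    z.im ≤ c := (convex_halfSpace_im_le c).segment_subset ha hb h
lemma seg_im_ge {a b z : ℂ} {c : ℝ} (ha : c ≤ a.im) (hb : c ≤ b.im) (h : z ∈ segment ℝ a b) :
    c ≤ z.im := (convex_halfSpace_im_ge c).segment_subset ha hb h

lemma slit_aux {z p : ℂ} (hne : z ≠ p) (h : z.im ≤ p.im ∨ p.re ≤ z.re) :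
    (z - p) * (1 + I) ∈ slitPlane := by
  rw [Complex.mem_slitPlane_iff]
  by_contra! hcon
  simp at hcon
  apply hne
  rcases h with h | h <;> apply Complex.ext <;> linarith

lemma slit_aux' {z p : ℂ} (hne : z ≠ p) (h : p.im ≤ z.im ∨ z.re ≤ p.re) :
    (z - p) * (-(1 + I)) ∈ slitPlane := by
  rw [Complex.mem_slitPlane_iff]
  by_contra! hcon
  simp at hcon
  apply hne
  rcases h with h | h <;> apply Complex.ext <;> linarith

lemma log_diff_aux {B C : ℂ} (hB : 0 < B.im) (hC : C.im < 0) :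
    log B - log C ≠ log (-B) - log (-C) := by
  intro h
  rw [log_neg_sub hB, log_neg_add hC] at h
  have h2 : (2 * Real.pi : ℂ) * I = 0 := by linear_combination h
  simp [Real.pi_ne_zero] at h2

/-- the square at an extremal corner has no bad point -/
lemma corner {V : Set ℂ} {δ : ℝ} (hδ : 0 < δ) {x M : ℤ} {p : ℂ} (hp : p ∉ V) {f : ℂ → ℂ}
    (hf : ContinuousOn f V) (hexp : ∀ z ∈ V, exp (f z) = z - p)
    (hp1 : δ * x ≤ p.re) (hp2 : p.re ≤ δ * (x + 1)) (hp3 : δ * (M - 1) ≤ p.im) (hp4 : p.im ≤ δ * M)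
    {c b : ℤ × ℤ} {l : List (ℤ × ℤ)} (hl : List.IsChain (Edg V δ) (c :: l)) (hbl : b ∈ c :: l)
    (hlm : ∀ w ∈ c :: l, w.2 ≤ M - 1 ∨ x + 1 ≤ w.1)
    (hcb : (c = (x, M - 1) ∧ b = (x + 1, M)) ∨ (b = (x, M - 1) ∧ c = (x + 1, M)))
    (hvb : segment ℝ (phi δ (x, M)) (phi δ b) ⊆ V) (hvc : segment ℝ (phi δ (x, M)) (phi δ c) ⊆ V) :
    False := by
  have hV : ∀ z ∈ V, z ≠ p := fun z hz h => hp (h ▸ hz)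
  -- along the chain
  have h1 : f (phi δ b) - log ((phi δ b - p) * (1 + I)) =
      f (phi δ c) - log ((phi δ c - p) * (1 + I)) := by
    have hl' : List.IsChain (fun w w' => Edg V δ w w' ∧ (w.2 ≤ M - 1 ∨ x + 1 ≤ w.1) ∧
        (w'.2 ≤ M - 1 ∨ x + 1 ≤ w'.1)) (c :: l) :=
      hl.imp_of_mem_imp (fun a b ha hb hab => ⟨hab, hlm a ha, hlm b hb⟩)
    refine chain_const (F := fun w => f (phi δ w) - log ((phi δ w - p) * (1 + I))) ?_ l c hl' b hbl
    rintro a b ⟨⟨hE, hseg⟩, ha, hb⟩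
    refine edge_log hf hexp hseg (convex_segment _ _) ?_ (left_mem_segment _ _ _)
      (right_mem_segment _ _ _)
    intro z hz
    refine slit_aux (hV z (hseg hz)) ?_
    have hcase : (a.2 ≤ M - 1 ∧ b.2 ≤ M - 1) ∨ (x + 1 ≤ a.1 ∧ x + 1 ≤ b.1) := by lia
    rcases hcase with ⟨h, h'⟩ | ⟨h, h'⟩
    · left
      have h : (a.2 : ℝ) ≤ M - 1 := by exact_mod_cast h
      have h' : (b.2 : ℝ) ≤ M - 1 := by exact_mod_cast h'
      refine (seg_im_le (c := δ * (M - 1)) ?_ ?_ hz).trans hp3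
      · exact mul_le_mul_of_nonneg_left h hδ.le
      · exact mul_le_mul_of_nonneg_left h' hδ.le
    · right
      have h : (x : ℝ) + 1 ≤ a.1 := by exact_mod_cast h
      have h' : (x : ℝ) + 1 ≤ b.1 := by exact_mod_cast h'
      refine hp2.trans (seg_re_ge (c := δ * (x + 1)) ?_ ?_ hz)
      · exact mul_le_mul_of_nonneg_left h hδ.le
      · exact mul_le_mul_of_nonneg_left h' hδ.le
  have h2 : ∀ w : ℤ × ℤ, (w = (x, M - 1) ∨ w = (x + 1, M)) →
      segment ℝ (phi δ (x, M)) (phi δ w) ⊆ V →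
      f (phi δ w) - log ((phi δ w - p) * -(1 + I)) =
      f (phi δ (x, M)) - log ((phi δ (x, M) - p) * -(1 + I)) := by
    intro w hw hseg
    refine edge_log hf hexp hseg (convex_segment _ _) ?_ (right_mem_segment _ _ _)
      (left_mem_segment _ _ _)
    intro z hz
    refine slit_aux' (hV z (hseg hz)) ?_
    rcases hw with rfl | rfl
    · right
      exact (seg_re_le (c := δ * x) (by simp [phi]) (by simp [phi]) hz).trans hp1
    · left
      exact hp4.trans (seg_im_ge (c := δ * M) (by simp [phi]) (by simp [phi]) hz)
  have h3 := h2 b (by tauto) hvb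
  have h4 := h2 c (by tauto) hvc
  have hbp : phi δ b ≠ p := hV _ (hvb (right_mem_segment _ _ _))
  have hcp : phi δ c ≠ p := hV _ (hvc (right_mem_segment _ _ _))
  have hlow : phi δ (x, M - 1) ≠ p → ((phi δ (x, M - 1) - p) * (1 + I)).im < 0 := by
    intro hne
    by_contra! hcon
    apply hne
    simp [phi] at hcon
    apply Complex.ext <;> simp [phi] <;> linarith
  have hhigh : phi δ (x + 1, M) ≠ p → 0 < ((phi δ (x + 1, M) - p) * (1 + I)).im := by
    intro hne
    by_contra! hcon
    apply hne
    simp [phi] at hcon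
    apply Complex.ext <;> simp [phi] <;> linarith
  rw [mul_neg] at h3 h4
  rcases hcb with ⟨rfl, rfl⟩ | ⟨rfl, rfl⟩
  · exact log_diff_aux (hhigh hbp) (hlow hcp) (by linear_combination h3 - h4 - h1)
  · exact log_diff_aux (hhigh hcp) (hlow hbp) (by linear_combination h4 - h3 + h1)

def PP {α G : Type*} [Group G] (g : α → α → G) : List α → G
  | [] => 1
  | [_] => 1
  | a :: b :: l => g a b * PP g (b :: l)

lemma PP_split {α G : Type*} [Group G] (g : α → α → G) (l₂ : List α) (c : α) :
    ∀ l₁ : List α, PP g (l₁ ++ c :: l₂) = PP g (l₁ ++ [c]) * PP g (c :: l₂)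
  | [] => by simp [PP]
  | [a] => by simp [PP]
  | a :: b :: l => by
    have := PP_split g l₂ c (b :: l)
    simp only [List.cons_append] at this
    simp only [List.cons_append, PP, this, mul_assoc]

def Sq (δ : ℝ) (x M : ℤ) : Set ℂ :=
  {z | (δ * x ≤ z.re ∧ z.re ≤ δ * (x + 1)) ∧ (δ * (M - 1) ≤ z.im ∧ z.im ≤ δ * M)}

lemma Sq_convex (δ : ℝ) (x M : ℤ) : Convex ℝ (Sq δ x M) :=
  (((convex_halfSpace_re_ge _).inter (convex_halfSpace_re_le _)).inter
    ((convex_halfSpace_im_ge _).inter (convex_halfSpace_im_le _)))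

lemma exists_extremal : ∀ (l : List (ℤ × ℤ)), l ≠ [] → ∃ v ∈ l, ∀ w ∈ l,
    w.2 < v.2 ∨ (w.2 = v.2 ∧ v.1 ≤ w.1) := by
  intro l
  induction l with
  | nil => simp
  | cons a l ih =>
    intro _
    rcases eq_or_ne l [] with rfl | hl
    · exact ⟨a, by simp, by simp⟩
    · obtain ⟨v, hv, hw⟩ := ih hl
      by_cases h : a.2 < v.2 ∨ (a.2 = v.2 ∧ v.1 ≤ a.1)
      · refine ⟨v, by simp [hv], fun w hw' => ?_⟩
        rcases List.mem_cons.1 hw' with rfl | hw'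
        · exact h
        · exact hw w hw'
      · refine ⟨a, by simp, fun w hw' => ?_⟩
        rcases List.mem_cons.1 hw' with rfl | hw'
        · lia
        · have := hw w hw'
          lia

def pot (X Y : ℤ) (w : ℤ × ℤ) : ℕ := (w.2 - Y).toNat + (X - w.1).toNat

def HasSq (V : Set ℂ) (δ : ℝ) : Prop :=
  ∀ x M : ℤ, (Sq δ x M ∩ V).Nonempty → ¬ Sq δ x M ⊆ V →
    ∃ p ∈ Sq δ x M, p ∉ V ∧ ∃ f : ℂ → ℂ, ContinuousOn f V ∧ ∀ z ∈ V, exp (f z) = z - p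

lemma Edg.symm {V : Set ℂ} {δ : ℝ} {a b : ℤ × ℤ} (h : Edg V δ a b) : Edg V δ b a := by
  obtain ⟨h1, h2⟩ := h
  refine ⟨?_, by rwa [segment_symm]⟩
  rw [abs_sub_comm b.2, abs_sub_comm b.1]
  rcases h1 with h1 | h1
  · left; exact ⟨h1.1.symm, h1.2⟩
  · right; exact ⟨h1.1.symm, h1.2⟩

lemma comb {V : Set ℂ} {δ : ℝ} (hδ : 0 < δ) (hSq : HasSq V δ) {G : Type*} [Group G]
    (g : ℤ × ℤ → ℤ × ℤ → G)
    (hg : ∀ K : Set ℂ, Convex ℝ K → K ⊆ V → ∀ a b c, phi δ a ∈ K → phi δ b ∈ K → phi δ c ∈ K →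
      g a b * g b c = g a c) (X Y : ℤ) :
    ∀ (n k : ℕ) (a : ℤ × ℤ) (l : List (ℤ × ℤ)), l.length = n →
      ((a :: l).map (pot X Y)).sum = k → (∀ w ∈ a :: l, w.1 ≤ X ∧ Y ≤ w.2) →
      List.IsChain (Edg V δ) (a :: (l ++ [a])) → PP g (a :: (l ++ [a])) = 1 := by
  have hgaa : ∀ a, phi δ a ∈ V → g a a = 1 := by
    intro a ha
    have := hg {phi δ a} (convex_singleton _) (by simpa using ha) a a a rfl rfl rfl
    simpa using this
  have hgab : ∀ a b, Edg V δ a b → g a b * g b a = 1 := by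
    intro a b hab
    rw [hg _ (convex_segment _ _) hab.2 a b a (left_mem_segment _ _ _) (right_mem_segment _ _ _)
      (left_mem_segment _ _ _)]
    exact hgaa a (hab.2 (left_mem_segment _ _ _))
  intro n
  induction n using Nat.strong_induction_on with
  | _ n IHn =>
  intro k
  induction k using Nat.strong_induction_on with
  | _ k IHk =>
  -- the case where the head is extremal
  have head : ∀ (a : ℤ × ℤ) (l : List (ℤ × ℤ)), l.length = n →
      ((a :: l).map (pot X Y)).sum = k → (∀ w ∈ a :: l, w.1 ≤ X ∧ Y ≤ w.2) →
      (∀ w ∈ a :: l, w.2 < a.2 ∨ (w.2 = a.2 ∧ a.1 ≤ w.1)) →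
      List.IsChain (Edg V δ) (a :: (l ++ [a])) → PP g (a :: (l ++ [a])) = 1 := by
    intro a l hn hk hbox hext hch
    by_cases hal : a ∈ l
    · obtain ⟨l₁, l₂, rfl⟩ := List.append_of_mem hal
      have e : a :: (l₁ ++ a :: l₂ ++ [a]) = (a :: l₁) ++ a :: (l₂ ++ [a]) := by simp
      rw [e] at hch ⊢
      rw [PP_split]
      rw [List.isChain_split] at hch
      simp only [List.length_append, List.length_cons] at hn
      have h1 := IHn l₁.length (by lia) _ a l₁ rfl rfl
        (fun w hw => hbox w (by simp at hw ⊢; tauto)) hch.1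
      have h2 := IHn l₂.length (by lia) _ a l₂ rfl rfl
        (fun w hw => hbox w (by simp at hw ⊢; tauto)) hch.2
      rw [List.cons_append, h1, h2, one_mul]
    match l, hn, hk, hbox, hext, hch, hal with
    | [], hn, hk, hbox, hext, hch, hal =>
      simp at hch
      simp [PP, hgaa a (hch.2 (left_mem_segment _ _ _))]
    | b :: l', hn, hk, hbox, hext, hch, hal =>
    rcases List.eq_nil_or_concat' l' with rfl | ⟨l'', c, rfl⟩
    · simp at hch
      simp [PP, hgab a b hch.1]
    have e : a :: (b :: (l'' ++ [c]) ++ [a]) = (a :: b :: l'') ++ c :: [a] := by simp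
    rw [e] at hch ⊢
    rw [PP_split]
    rw [List.isChain_split] at hch
    obtain ⟨hch1, hch2⟩ := hch
    simp only [List.cons_append, List.isChain_cons_cons] at hch1
    obtain ⟨hab, hbc⟩ := hch1
    have hca : Edg V δ c a := by simpa using hch2
    have ePP : PP g (a :: b :: l'' ++ [c]) * PP g [c, a] =
        g a b * PP g (b :: (l'' ++ [c])) * g c a := by simp [PP]
    rw [ePP]
    simp only [List.length_cons, List.length_append, List.length_nil] at hn
    by_cases hbc' : b = c
    · subst hbc'
      have h1 := IHn l''.length (by lia) _ b l'' rfl rfl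
        (fun w hw => hbox w (by simp at hw ⊢; tauto)) hbc
      rw [h1, mul_one, hgab a b hab]
    -- the corner
    obtain ⟨x, M⟩ := a
    have hne : ∀ w ∈ b :: (l'' ++ [c]), w ≠ (x, M) := fun w hw h => hal (h ▸ hw)
    have hext' : ∀ w ∈ b :: (l'' ++ [c]), w.2 < M ∨ (w.2 = M ∧ x + 1 ≤ w.1) := by
      intro w hw
      have h1 := hext w (List.mem_cons_of_mem _ hw)
      have h2 := hne w hw
      have h3 : ¬ (w.1 = x ∧ w.2 = M) := fun h => h2 (Prod.ext h.1 h.2)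
      simp only at h1
      lia
    have key : ∀ w, w ∈ b :: (l'' ++ [c]) → Edg V δ (x, M) w →
        (w = (x, M - 1) ∨ w = (x + 1, M)) := by
      rintro ⟨w1, w2⟩ hw ⟨h1, -⟩
      have h2 := hext' _ hw
      simp only [abs_le] at h1 h2
      simp only [Prod.mk.injEq]
      lia
    have kb := key b (by simp) hab
    have kc := key c (by simp) hca.symm
    have hcb : (b = (x, M - 1) ∧ c = (x + 1, M)) ∨ (c = (x, M - 1) ∧ b = (x + 1, M)) := by
      rcases kb with kb | kb <;> rcases kc with kc | kc
      · exact absurd (kb.trans kc.symm) hbc'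
      · exact Or.inl ⟨kb, kc⟩
      · exact Or.inr ⟨kc, kb⟩
      · exact absurd (kb.trans kc.symm) hbc'
    have mem : ∀ w : ℤ × ℤ, (w.1 = x ∨ w.1 = x + 1) → (w.2 = M ∨ w.2 = M - 1) →
        phi δ w ∈ Sq δ x M := by
      rintro ⟨w1, w2⟩ h1 h2
      simp only at h1 h2
      rcases h1 with rfl | rfl <;> rcases h2 with rfl | rfl <;>
        simp only [Sq, phi, mem_ofPred_eq] <;> push_cast <;>
        refine ⟨⟨?_, ?_⟩, ?_, ?_⟩ <;> nlinarith
    have sqV : Sq δ x M ⊆ V := by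
      by_contra hcon
      obtain ⟨p, hpS, hpV, f, hf, hexp⟩ := hSq x M
        ⟨phi δ (x, M), mem _ (by simp) (by simp), hab.2 (left_mem_segment _ _ _)⟩ hcon
      refine corner hδ hpV hf hexp hpS.1.1 hpS.1.2 hpS.2.1 hpS.2.2 (c := b) (b := c)
        (l := l'' ++ [c]) hbc (by simp) ?_ hcb hca.symm.2 hab.2
      intro w hw
      have := hext' w hw
      lia
    have ma : phi δ (x, M) ∈ Sq δ x M := mem _ (by simp) (by simp)
    have md : phi δ (x + 1, M - 1) ∈ Sq δ x M := mem _ (by simp) (by simp)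
    have mb : phi δ b ∈ Sq δ x M := by rcases kb with rfl | rfl <;> exact mem _ (by simp) (by simp)
    have mc : phi δ c ∈ Sq δ x M := by rcases kc with rfl | rfl <;> exact mem _ (by simp) (by simp)
    have Ed : ∀ w, (w = (x, M - 1) ∨ w = (x + 1, M)) → Edg V δ (x + 1, M - 1) w := by
      intro w hw
      refine ⟨?_, ((Sq_convex δ x M).segment_subset md ?_).trans sqV⟩
      · rcases hw with rfl | rfl <;> simp
      · rcases hw with rfl | rfl <;> exact mem _ (by simp) (by simp)
    have bb := hbox b (by simp)
    have bc := hbox c (by simp)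
    have ba := hbox (x, M) (by simp)
    have hXY : x + 1 ≤ X ∧ Y ≤ M - 1 := by
      rcases hcb with ⟨rfl, rfl⟩ | ⟨rfl, rfl⟩ <;> simp at bb bc <;> lia
    have hnew : PP g ((x + 1, M - 1) :: (b :: (l'' ++ [c]) ++ [(x + 1, M - 1)])) = 1 := by
      refine IHk _ ?_ (x + 1, M - 1) (b :: (l'' ++ [c])) (by simp; lia) rfl ?_ ?_
      · rw [← hk]
        simp only [List.map_cons, List.sum_cons]
        apply Nat.add_lt_add_right
        simp only [pot]
        lia
      · intro w hw
        rcases List.mem_cons.1 hw with rfl | hw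
        · exact hXY
        · exact hbox w (List.mem_cons_of_mem _ hw)
      · have e : ((x + 1, M - 1) :: (b :: (l'' ++ [c]) ++ [(x + 1, M - 1)])) =
          ((x + 1, M - 1) :: b :: l'') ++ c :: [(x + 1, M - 1)] := by simp
        rw [e, List.isChain_split]
        simp only [List.cons_append, List.isChain_cons_cons]
        exact ⟨⟨Ed b kb, hbc⟩, (Ed c kc).symm, by simp⟩
    have e : ((x + 1, M - 1) :: (b :: (l'' ++ [c]) ++ [(x + 1, M - 1)])) =
          ((x + 1, M - 1) :: b :: l'') ++ c :: [(x + 1, M - 1)] := by simp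
    have ePP : PP g ((x + 1, M - 1) :: b :: l'' ++ [c]) * PP g [c, (x + 1, M - 1)] =
        g (x + 1, M - 1) b * PP g (b :: (l'' ++ [c])) * g c (x + 1, M - 1) := by simp [PP]
    rw [e, PP_split, ePP] at hnew
    have hh := hg _ (Sq_convex δ x M) sqV
    rw [← hh (x, M) (x + 1, M - 1) b ma md mb, ← hh c (x + 1, M - 1) (x, M) mc md ma]
    calc g (x, M) (x + 1, M - 1) * g (x + 1, M - 1) b * PP g (b :: (l'' ++ [c])) *
          (g c (x + 1, M - 1) * g (x + 1, M - 1) (x, M))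
        = g (x, M) (x + 1, M - 1) * (g (x + 1, M - 1) b * PP g (b :: (l'' ++ [c])) *
          g c (x + 1, M - 1)) * g (x + 1, M - 1) (x, M) := by group
      _ = 1 := by
        rw [hnew, mul_one, hh _ _ _ ma md ma]
        exact hgaa _ (sqV ma)
  intro a l hn hk hbox hch
  obtain ⟨v, hv, hvext⟩ := exists_extremal (a :: l) (by simp)
  rcases List.mem_cons.1 hv with rfl | hvl
  · exact head v l hn hk hbox hvext hch
  obtain ⟨l₁, l₂, rfl⟩ := List.append_of_mem hvl
  have e : a :: (l₁ ++ v :: l₂ ++ [a]) = (a :: l₁) ++ v :: (l₂ ++ [a]) := by simp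
  rw [e] at hch ⊢
  rw [PP_split]
  rw [List.isChain_split] at hch
  have hmem : ∀ w, w ∈ v :: (l₂ ++ a :: l₁) → w ∈ a :: (l₁ ++ v :: l₂) := by
    intro w hw; simp at hw ⊢; tauto
  have := head v (l₂ ++ a :: l₁) (by simp at hn ⊢; lia) (by simp at hk ⊢; lia)
    (fun w hw => hbox w (hmem w hw)) (fun w hw => hvext w (hmem w hw)) (by
      have e : v :: (l₂ ++ a :: l₁ ++ [v]) = (v :: l₂) ++ a :: (l₁ ++ [v]) := by simp
      rw [e, List.isChain_split]
      exact ⟨hch.2, hch.1⟩)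
  have e : v :: (l₂ ++ a :: l₁ ++ [v]) = (v :: l₂) ++ a :: (l₁ ++ [v]) := by simp
  rw [e, PP_split] at this
  exact mul_eq_one_comm.1 this

noncomputable def hl {X : Type*} [TopologicalSpace X] {x₀ : X} (c : ∀ v, Path x₀ v) {a b : X}
    (p : Path a b) : (FundamentalGroup X x₀)ᵐᵒᵖ :=
  MulOpposite.op (FundamentalGroup.fromPath
    (Path.Homotopic.Quotient.mk ((c a).trans (p.trans (c b).symm))))

lemma hl_congr {X : Type*} [TopologicalSpace X] {x₀ : X} (c : ∀ v, Path x₀ v) {a b : X}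
    {p q : Path a b} (h : p.Homotopic q) : hl c p = hl c q := by
  unfold hl
  have : Path.Homotopic.Quotient.mk p = Path.Homotopic.Quotient.mk q :=
    Path.Homotopic.Quotient.eq.2 h
  simp only [Path.Homotopic.Quotient.mk_trans, this]

lemma hl_cast {X : Type*} [TopologicalSpace X] {x₀ : X} (c : ∀ v, Path x₀ v) {a b a' b' : X}
    (p : Path a b) (ha : a' = a) (hb : b' = b) : hl c (p.cast ha hb) = hl c p := by
  subst ha hb; rfl

lemma q_cancel {X : Type*} [TopologicalSpace X] {a b d : X} (p : Path.Homotopic.Quotient a b)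
    (q : Path.Homotopic.Quotient b d) : p.symm.trans (p.trans q) = q := by
  rw [← Path.Homotopic.Quotient.trans_assoc]
  simp

open Path.Homotopic.Quotient in
lemma hl_trans {X : Type*} [TopologicalSpace X] {x₀ : X} (c : ∀ v, Path x₀ v) {a b d : X}
    (p : Path a b) (q : Path b d) : hl c (p.trans q) = hl c p * hl c q := by
  unfold hl
  rw [← MulOpposite.op_mul]
  congr 1
  change Path.Homotopic.Quotient.mk _ = Path.Homotopic.Quotient.trans (Path.Homotopic.Quotient.mk _) (Path.Homotopic.Quotient.mk _)
  simp only [mk_trans, mk_symm]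
  simp [q_cancel]

open Path.Homotopic.Quotient in
lemma hl_one {X : Type*} [TopologicalSpace X] {x₀ : X} (c : ∀ v, Path x₀ v) {a : X}
    (p : Path a a) (h : hl c p = 1) : p.Homotopic (Path.refl a) := by
  unfold hl at h
  have h := congrArg MulOpposite.unop h
  change Path.Homotopic.Quotient.mk _ = Path.Homotopic.Quotient.refl x₀ at h
  simp only [mk_trans, mk_symm] at h
  rw [← Path.Homotopic.Quotient.eq, mk_refl]
  calc Path.Homotopic.Quotient.mk p = Path.Homotopic.Quotient.trans (Path.Homotopic.Quotient.symm (Path.Homotopic.Quotient.mk (c a))) (Path.Homotopic.Quotient.trans (trans (Path.Homotopic.Quotient.mk (c a)) (Path.Homotopic.Quotient.trans (Path.Homotopic.Quotient.mk p) (Path.Homotopic.Quotient.symm (Path.Homotopic.Quotient.mk (c a)))))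
        (Path.Homotopic.Quotient.mk (c a))) := by simp [q_cancel]
    _ = Path.Homotopic.Quotient.refl a := by rw [h]; simp

lemma homotopic_of_convex {V K : Set ℂ} (hK : Convex ℝ K) (hKV : K ⊆ V) {a b : V} (p q : Path a b)
    (hp : ∀ t, (p t : ℂ) ∈ K) (hq : ∀ t, (q t : ℂ) ∈ K) : p.Homotopic q := by
  have ha : (a : ℂ) ∈ K := by simpa using hp 0
  have hb : (b : ℂ) ∈ K := by simpa using hp 1
  have : ContractibleSpace K := hK.contractibleSpace ⟨_, ha⟩
  let p' : Path (⟨a, ha⟩ : K) ⟨b, hb⟩ :=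
    ⟨⟨fun t => ⟨p t, hp t⟩, by fun_prop⟩, by simp, by simp⟩
  let q' : Path (⟨a, ha⟩ : K) ⟨b, hb⟩ :=
    ⟨⟨fun t => ⟨q t, hq t⟩, by fun_prop⟩, by simp, by simp⟩
  have h := SimplyConnectedSpace.paths_homotopic p' q'
  exact h.map (⟨Set.inclusion hKV, continuous_inclusion hKV⟩ : C(K, V))

noncomputable def segp {V : Set ℂ} (z w : ℂ) (h : segment ℝ z w ⊆ V) :
    Path (⟨z, h (left_mem_segment _ _ _)⟩ : V) ⟨w, h (right_mem_segment _ _ _)⟩ where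
  toFun t := ⟨AffineMap.lineMap z w (t : ℝ), h (by
    rw [segment_eq_image_lineMap]; exact ⟨t, t.2, rfl⟩)⟩
  continuous_toFun := by
    apply Continuous.subtype_mk
    simp only [AffineMap.lineMap_apply]
    fun_prop
  source' := by simp
  target' := by simp

lemma segp_mem {V : Set ℂ} {z w : ℂ} (h : segment ℝ z w ⊆ V) (t : unitInterval) :
    (segp z w h t : ℂ) ∈ segment ℝ z w := by
  have : AffineMap.lineMap z w (t : ℝ) ∈ segment ℝ z w := by
    rw [segment_eq_image_lineMap]; exact ⟨t, t.2, rfl⟩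
  exact this

open Classical in
noncomputable def gg {V : Set ℂ} {x₀ : V} (c : ∀ v, Path x₀ v) (z w : ℂ) :
    (FundamentalGroup V x₀)ᵐᵒᵖ :=
  if h : segment ℝ z w ⊆ V then hl c (segp z w h) else 1

lemma gg_eq {V K : Set ℂ} {x₀ : V} (c : ∀ v, Path x₀ v) (hK : Convex ℝ K) (hKV : K ⊆ V)
    {a b : V} (p : Path a b) (hp : ∀ t, (p t : ℂ) ∈ K) : hl c p = gg c a b := by
  have ha : (a : ℂ) ∈ K := by simpa using hp 0
  have hb : (b : ℂ) ∈ K := by simpa using hp 1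
  have hs : segment ℝ (a : ℂ) b ⊆ K := hK.segment_subset ha hb
  rw [gg, dif_pos (hs.trans hKV)]
  refine hl_congr c (homotopic_of_convex hK hKV _ _ hp ?_)
  intro t
  exact hs (segp_mem _ t)

lemma gg_mul {V K : Set ℂ} {x₀ : V} (c : ∀ v, Path x₀ v) (hK : Convex ℝ K) (hKV : K ⊆ V)
    {u v w : ℂ} (hu : u ∈ K) (hv : v ∈ K) (hw : w ∈ K) : gg c u v * gg c v w = gg c u w := by
  have h1 := hK.segment_subset hu hv
  have h2 := hK.segment_subset hv hw
  have e1 : ∀ t, (segp u v (h1.trans hKV) t : ℂ) ∈ K := fun t => h1 (segp_mem _ t)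
  have e2 : ∀ t, (segp v w (h2.trans hKV) t : ℂ) ∈ K := fun t => h2 (segp_mem _ t)
  have := gg_eq c hK hKV ((segp u v (h1.trans hKV)).trans (segp v w (h2.trans hKV))) (by
    intro t
    rw [Path.trans_apply]
    split_ifs
    · exact e1 _
    · exact e2 _)
  rw [← this, hl_trans, gg_eq c hK hKV _ e1, gg_eq c hK hKV _ e2]

noncomputable def vtx (δ : ℝ) (z : ℂ) : ℤ × ℤ := (⌊z.re / δ⌋, ⌊z.im / δ⌋)

lemma floor_near {a b : ℝ} (h : |a - b| < 1) : |⌊a⌋ - ⌊b⌋| ≤ 1 := by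
  rw [abs_lt] at h
  have h1 := Int.floor_le a
  have h2 := Int.lt_floor_add_one a
  have h3 := Int.floor_le b
  have h4 := Int.lt_floor_add_one b
  have h5 : ((⌊a⌋ : ℤ) : ℝ) < ((⌊b⌋ + 2 : ℤ) : ℝ) := by push_cast; linarith
  have h6 : ((⌊b⌋ : ℤ) : ℝ) < ((⌊a⌋ + 2 : ℤ) : ℝ) := by push_cast; linarith
  have h5 := Int.cast_lt.1 h5
  have h6 := Int.cast_lt.1 h6
  rw [abs_le]
  lia

lemma floor_err {δ : ℝ} (hδ : 0 < δ) (r : ℝ) : |δ * ⌊r / δ⌋ - r| ≤ δ := by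
  have h1 := Int.floor_le (r / δ)
  have h2 := Int.lt_floor_add_one (r / δ)
  have h3 : δ * (r / δ) = r := by field_simp
  rw [abs_le]
  constructor <;> nlinarith

lemma dist_aux {z w : ℂ} {r s t : ℝ} (h1 : |z.re - w.re| ≤ r) (h2 : |z.im - w.im| ≤ s)
    (h : r + s < t) : z ∈ ball w t := by
  rw [mem_ball, dist_eq_norm]
  refine (Complex.norm_le_abs_re_add_abs_im _).trans_lt ?_
  simp only [Complex.sub_re, Complex.sub_im]
  linarith

lemma sc_of_HasSq {V : Set ℂ} (hVo : IsOpen V) (hVc : IsPathConnected V)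
    (H : ∀ δ > 0, HasSq V δ) : SimplyConnectedSpace V := by
  have hpc : PathConnectedSpace V := isPathConnected_iff_pathConnectedSpace.1 hVc
  rw [simply_connected_iff_loops_nullhomotopic]
  refine ⟨hpc, fun x γ => ?_⟩
  let c : ∀ v, Path x v := fun v => PathConnectedSpace.somePath x v
  apply hl_one c
  let γ' : unitInterval → ℂ := fun t => γ t
  have hγ' : Continuous γ' := by fun_prop
  obtain ⟨ε, hε, hεV⟩ := (isCompact_range hγ').exists_thickening_subset_open hVo
    (by rintro _ ⟨t, rfl⟩; exact (γ t).2)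
  obtain ⟨δ, hδ, rfl⟩ : ∃ δ, 0 < δ ∧ ε = 10 * δ := ⟨ε / 10, by positivity, by ring⟩
  have hball : ∀ t, ball (γ' t) (10 * δ) ⊆ V := fun t =>
    (ball_subset_thickening (mem_range_self t) _).trans hεV
  obtain ⟨t, ht0, htm, ⟨N, hN⟩, ht⟩ := exists_monotone_Icc_subset_open_cover_unitInterval
    (c := fun i => γ' ⁻¹' ball (γ' i) (δ / 2)) (fun i => isOpen_ball.preimage hγ')
    (fun i _ => mem_iUnion.2 ⟨i, mem_ball_self (by positivity)⟩)
  have hnear : ∀ n, ∀ s ∈ Icc (t n) (t (n + 1)), dist (γ' s) (γ' (t n)) < δ := by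
    intro n s hs
    obtain ⟨i, hi⟩ := ht n
    have h1 : dist (γ' s) (γ' i) < δ / 2 := hi hs
    have h2 : dist (γ' (t n)) (γ' i) < δ / 2 := hi ⟨le_rfl, htm (by lia)⟩
    have := dist_triangle_right (γ' s) (γ' (t n)) (γ' i)
    linarith
  let g : ℤ × ℤ → ℤ × ℤ → (FundamentalGroup V x)ᵐᵒᵖ := fun a b => gg c (phi δ a) (phi δ b)
  have hg : ∀ K : Set ℂ, Convex ℝ K → K ⊆ V → ∀ a b c, phi δ a ∈ K → phi δ b ∈ K → phi δ c ∈ K →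
      g a b * g b c = g a c := fun K hK hKV a b d ha hb hd => gg_mul c hK hKV ha hb hd
  let v : ℕ → ℤ × ℤ := fun n => vtx δ (γ' (t n))
  have hvK : ∀ n, phi δ (v n) ∈ ball (γ' (t n)) (10 * δ) := fun n =>
    dist_aux (floor_err hδ _) (floor_err hδ _) (by linarith)
  have main : ∀ n, ∃ l : List (ℤ × ℤ), List.IsChain (Edg V δ) (v 0 :: (l ++ [v n])) ∧
      hl c (γ.subpath 0 (t n)) =
        gg c (γ' 0) (phi δ (v 0)) * PP g (v 0 :: (l ++ [v n])) * gg c (phi δ (v n)) (γ' (t n)) := by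
    intro n
    induction n with
    | zero =>
      refine ⟨[], ?_, ?_⟩
      · simp only [List.nil_append, List.isChain_cons_cons, List.isChain_singleton, and_true]
        refine ⟨by simp, ?_⟩
        rw [segment_same, singleton_subset_iff]
        exact hball _ (hvK 0)
      · have hm := mem_ball_self (x := γ' (t 0)) (ε := 10 * δ) (by positivity)
        have hK := convex_ball (γ' (t 0)) (10 * δ)
        have e : hl c (γ.subpath 0 (t 0)) = gg c (γ' 0) (γ' (t 0)) := by
          refine gg_eq c hK (hball (t 0)) _ ?_
          intro s
          rw [ht0, Path.subpath_self]
          exact mem_ball_self (by positivity)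
        rw [e]
        simp only [List.nil_append, PP, mul_one, g]
        rw [gg_mul c hK (hball (t 0)) (by rw [ht0]; exact mem_ball_self (by positivity))
          (hvK 0) (hvK 0), gg_mul c hK (hball (t 0))
          (by rw [ht0]; exact mem_ball_self (by positivity)) (hvK 0) hm]
    | succ n ih =>
      obtain ⟨l, hl1, hl2⟩ := ih
      have hm := mem_ball_self (x := γ' (t n)) (ε := 10 * δ) (by positivity)
      have hK := convex_ball (γ' (t n)) (10 * δ)
      have hKV := hball (t n)
      have hnn : dist (γ' (t (n + 1))) (γ' (t n)) < δ := hnear n _ ⟨htm (by lia), le_rfl⟩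
      have hm' : γ' (t (n + 1)) ∈ ball (γ' (t n)) (10 * δ) := by
        rw [mem_ball]; linarith
      rw [dist_eq_norm] at hnn
      have hre : |(γ' (t (n + 1))).re - (γ' (t n)).re| < δ := by
        have := Complex.abs_re_le_norm (γ' (t (n + 1)) - γ' (t n))
        simp only [Complex.sub_re] at this
        linarith
      have him : |(γ' (t (n + 1))).im - (γ' (t n)).im| < δ := by
        have := Complex.abs_im_le_norm (γ' (t (n + 1)) - γ' (t n))
        simp only [Complex.sub_im] at this
        linarith
      have hre2 : |δ * (v (n + 1)).1 - (γ' (t n)).re| ≤ 2 * δ := by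
        have h1 : |δ * (v (n + 1)).1 - (γ' (t (n + 1))).re| ≤ δ := floor_err hδ _
        have := abs_sub_le (δ * (v (n + 1)).1) (γ' (t (n + 1))).re (γ' (t n)).re
        linarith
      have him2 : |δ * (v (n + 1)).2 - (γ' (t n)).im| ≤ 2 * δ := by
        have h1 : |δ * (v (n + 1)).2 - (γ' (t (n + 1))).im| ≤ δ := floor_err hδ _
        have := abs_sub_le (δ * (v (n + 1)).2) (γ' (t (n + 1))).im (γ' (t n)).im
        linarith
      let m : ℤ × ℤ := ((v (n + 1)).1, (v n).2)
      have k0 := hvK n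
      have k1 : phi δ m ∈ ball (γ' (t n)) (10 * δ) :=
        dist_aux hre2 (floor_err hδ _) (by linarith)
      have k2 : phi δ (v (n + 1)) ∈ ball (γ' (t n)) (10 * δ) :=
        dist_aux hre2 him2 (by linarith)
      have f1 : |(v n).1 - (v (n + 1)).1| ≤ 1 := by
        rw [abs_sub_comm]
        apply floor_near
        rw [← sub_div, abs_div, abs_of_pos hδ, div_lt_one hδ]
        exact hre
      have f2 : |(v n).2 - (v (n + 1)).2| ≤ 1 := by
        rw [abs_sub_comm]
        apply floor_near
        rw [← sub_div, abs_div, abs_of_pos hδ, div_lt_one hδ]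
        exact him
      refine ⟨l ++ [v n, m], ?_, ?_⟩
      · have e : v 0 :: (l ++ [v n, m] ++ [v (n + 1)]) = (v 0 :: l) ++ v n :: [m, v (n + 1)] := by
          simp
        rw [e, List.isChain_split]
        refine ⟨hl1, ?_⟩
        simp only [List.isChain_cons_cons, List.isChain_singleton, and_true]
        exact ⟨⟨Or.inr ⟨rfl, f1⟩, (hK.segment_subset k0 k1).trans hKV⟩,
          ⟨Or.inl ⟨rfl, f2⟩, (hK.segment_subset k1 k2).trans hKV⟩⟩
      · have e : v 0 :: (l ++ [v n, m] ++ [v (n + 1)]) = (v 0 :: l) ++ v n :: [m, v (n + 1)] := by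
          simp
        rw [e, PP_split]
        have e1 : hl c (γ.subpath 0 (t (n + 1))) =
            hl c (γ.subpath 0 (t n)) * hl c (γ.subpath (t n) (t (n + 1))) := by
          rw [← hl_trans]
          exact (hl_congr c ⟨Path.Homotopy.subpathTransSubpath γ 0 (t n) (t (n + 1))⟩).symm
        have e2 : hl c (γ.subpath (t n) (t (n + 1))) = gg c (γ' (t n)) (γ' (t (n + 1))) := by
          refine gg_eq c hK hKV _ ?_
          intro s
          have hs : γ.subpath (t n) (t (n + 1)) s ∈ range (γ.subpath (t n) (t (n + 1))) :=
            mem_range_self s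
          rw [Path.range_subpath_of_le _ _ _ (htm (by lia))] at hs
          obtain ⟨r, hr, hr'⟩ := hs
          rw [← hr', mem_ball]
          have : dist (γ' r) (γ' (t n)) < δ := hnear n r hr
          change dist (γ' r) (γ' (t n)) < _
          linarith
        have e3 : PP g [v n, m, v (n + 1)] = gg c (phi δ (v n)) (phi δ (v (n + 1))) := by
          simp only [PP, mul_one]
          exact gg_mul c hK hKV k0 k1 k2
        rw [e1, hl2, e2, e3]
        simp only [List.cons_append, mul_assoc]
        rw [gg_mul c hK hKV k0 hm hm', gg_mul c hK hKV k0 k2 hm']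
  obtain ⟨l, h1, h2⟩ := main N
  have htN : t N = 1 := hN N le_rfl
  have e01 : γ' 1 = γ' 0 := by simp [γ']
  have hv : v N = v 0 := by simp only [v, htN, ht0, e01]
  rw [hv] at h1 h2
  rw [htN, Path.subpath_zero_one, hl_cast, e01] at h2
  obtain ⟨X, Y, hXY⟩ : ∃ X Y : ℤ, ∀ w ∈ v 0 :: l, w.1 ≤ X ∧ Y ≤ w.2 := by
    generalize v 0 :: l = L
    induction L with
    | nil => exact ⟨0, 0, by simp⟩
    | cons a L ih =>
      obtain ⟨X, Y, h⟩ := ih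
      refine ⟨max a.1 X, min a.2 Y, fun w hw => ?_⟩
      rcases List.mem_cons.1 hw with rfl | hw
      · simp
      · have := h w hw
        simp [this.1, this.2]
  have h3 := comb hδ (H δ hδ) g hg X Y _ _ (v 0) l rfl rfl hXY h1
  rw [h2, h3, mul_one]
  have hK := convex_ball (γ' (t 0)) (10 * δ)
  have hm : γ' 0 ∈ ball (γ' (t 0)) (10 * δ) := by rw [ht0]; exact mem_ball_self (by positivity)
  rw [gg_mul c hK (hball (t 0)) hm (hvK 0) hm]
  have := gg_mul c hK (hball (t 0)) hm hm hm
  simpa using this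

lemma exists_log {U V : Set ℂ} (hU : IsOpen U) (hs : SimplyConnectedSpace U) (hVU : V ⊆ U) {p : ℂ}
    (hp : p ∉ U) : ∃ f : ℂ → ℂ, ContinuousOn f V ∧ ∀ z ∈ V, exp (f z) = z - p := by
  obtain ⟨f, hf, he⟩ := Complex.exists_continuousOn_eqOn_exp_comp (U := U) (g := fun z => z - p)
    hs hU (by fun_prop) (by
      rintro ⟨z, hz, h⟩
      exact hp (by rwa [← sub_eq_zero.1 h]))
  exact ⟨f, hf.mono hVU, fun z hz => he (hVU hz)⟩

lemma fr_aux {S V : Set ℂ} (hS : IsPreconnected S) (hV : IsOpen V) (h1 : (S ∩ V).Nonempty)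
    (h2 : ¬ S ⊆ V) : ∃ p ∈ S, p ∈ closure V \ V := by
  by_contra! h
  obtain ⟨q, hq, hq'⟩ := not_subset.1 h2
  have hc : ∀ z ∈ S, z ∈ closure V → z ∈ V := by
    intro z hz hz'
    by_contra hzV
    exact h z hz ⟨hz', hzV⟩
  obtain ⟨z, -, hz, hz'⟩ := hS V (closure V)ᶜ hV isClosed_closure.isOpen_compl
    (fun z hz => by
      by_cases hz' : z ∈ closure V
      · exact Or.inl (hc z hz hz')
      · exact Or.inr hz') h1 ⟨q, hq, fun h => hq' (hc q hq h)⟩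
  exact hz' (subset_closure hz)

theorem stmt7 (W A B : Set ℂ) (hWo : IsOpen W) (hWc : IsConnected W)
    (hWsc : SimplyConnectedSpace W) (hWne : W ≠ Set.univ) (h0W : (0 : ℂ) ∈ W)
    (hA : IsClosed A) (hB : IsClosed B) (h0A : (0 : ℂ) ∉ A) (h0B : (0 : ℂ) ∉ B)
    (hU : SimplyConnectedSpace (connectedComponentIn (W \ A) 0))
    (hU' : SimplyConnectedSpace (connectedComponentIn (W \ B) 0)) :
    SimplyConnectedSpace (connectedComponentIn (W \ (A ∪ B)) 0) := by
  have hO : IsOpen (W \ (A ∪ B)) := hWo.sdiff (hA.union hB)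
  have hVo : IsOpen (connectedComponentIn (W \ (A ∪ B)) 0) := hO.connectedComponentIn
  have h0 : (0 : ℂ) ∈ W \ (A ∪ B) := ⟨h0W, by simp [h0A, h0B]⟩
  have hVc : IsConnected (connectedComponentIn (W \ (A ∪ B)) 0) :=
    isConnected_connectedComponentIn_iff.2 h0
  refine sc_of_HasSq hVo (hVo.isConnected_iff_isPathConnected.1 hVc) ?_
  intro δ hδ x M hne hns
  obtain ⟨p, hpS, hpf⟩ := fr_aux (Sq_convex δ x M).isPreconnected hVo hne hns
  refine ⟨p, hpS, hpf.2, ?_⟩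
  by_cases hpA : p ∈ connectedComponentIn (W \ A) 0
  · refine exists_log (hWo.sdiff hB).connectedComponentIn hU'
      (connectedComponentIn_mono 0 (by grind)) ?_
    intro hpB
    have hpA := connectedComponentIn_subset _ _ hpA
    have hpB := connectedComponentIn_subset _ _ hpB
    apply hpf.2
    have hpre : IsPreconnected (insert p (connectedComponentIn (W \ (A ∪ B)) 0)) :=
      hVc.isPreconnected.subset_closure (subset_insert _ _)
        (insert_subset hpf.1 subset_closure)
    refine hpre.subset_connectedComponentIn
      (mem_insert_of_mem _ (mem_connectedComponentIn h0)) ?_ (mem_insert _ _)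
    refine insert_subset ?_ (connectedComponentIn_subset _ _)
    exact ⟨hpA.1, by rintro (h | h); exacts [hpA.2 h, hpB.2 h]⟩
  · exact exists_log (hWo.sdiff hA).connectedComponentIn hU
      (connectedComponentIn_mono 0 (by grind)) hpA
end

section
/- Let W ⊊ ℂ be a connected, simply connected open set with 0 ∈ W. Let A and B be closed subsets of ℂ with 0 ∉ A and 0 ∉ B. Let U be the connected component of W \ A containing 0, U′ the connected component of W \ B containing 0, and U″ the connected component of W \ (A ∪ B) containing 0, and assume U and U′ are simply connected. Then for any biholomorphisms f_W : 𝔻 → W, f_A : 𝔻 → U, f_B : 𝔻 → U′, f_{AB} : 𝔻 → U″, all mapping 0 to 0, one has |f_{AB}′(0)| · |f_W′(0)| ≥ |f_A′(0)| · |f_B′(0)|. Equivalently, writing r(V) for the conformal radius of V at 0 and λ(A) = r(U)/r(W), λ(B) = r(U′)/r(W), λ(A∪B) = r(U″)/r(W), one has λ(A ∪ B) ≥ λ(A)·λ(B). -/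
open Complex Metric Set

noncomputable section

open Filter Topology in
lemma aux_inv (f : ℂ → ℂ) (hf : DifferentiableOn ℂ f (ball 0 1)) (hi : InjOn f (ball 0 1)) :
    ∃ g : ℂ → ℂ, DifferentiableOn ℂ g (f '' ball 0 1) ∧ (∀ w ∈ ball (0:ℂ) 1, g (f w) = w) ∧
      IsOpen (f '' ball 0 1) := by
  have han : AnalyticOnNhd ℂ f (ball 0 1) := hf.analyticOnNhd isOpen_ball
  have hop : ∀ s ⊆ ball (0:ℂ) 1, IsOpen s → IsOpen (f '' s) := by
    rcases han.is_constant_or_isOpen (convex_ball 0 1).isPreconnected with ⟨w, hw⟩ | h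
    · exfalso
      have h1 : (0:ℂ) ∈ ball (0:ℂ) 1 := by simp
      have h2 : (1/2:ℂ) ∈ ball (0:ℂ) 1 := by simp; norm_num
      have := hi h1 h2 ((hw _ h1).trans (hw _ h2).symm)
      norm_num at this
    · exact h
  set g := Function.invFunOn f (ball 0 1) with hg
  have hgf : ∀ w ∈ ball (0:ℂ) 1, g (f w) = w := fun w hw => hi.leftInvOn_invFunOn hw
  have hV := hop _ subset_rfl isOpen_ball
  have hcont : ∀ x ∈ ball (0:ℂ) 1, ContinuousAt g (f x) := by
    intro x hx
    rw [ContinuousAt, hgf x hx]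
    intro N hN
    obtain ⟨O, hON, hO, hxO⟩ := _root_.mem_nhds_iff.1 hN
    have : f '' (O ∩ ball 0 1) ∈ 𝓝 (f x) :=
      (hop _ inter_subset_right (hO.inter isOpen_ball)).mem_nhds ⟨x, ⟨hxO, hx⟩, rfl⟩
    rw [Filter.mem_map]
    filter_upwards [this]
    rintro _ ⟨w, ⟨hw1, hw2⟩, rfl⟩
    show g (f w) ∈ N
    rw [hgf w hw2]; exact hON hw1
  refine ⟨g, ?_, hgf, hV⟩
  rintro _ ⟨x, hx, rfl⟩
  have hd : ∀ᶠ w in 𝓝[≠] x, deriv f w ≠ 0 := by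
    rcases (han x hx).deriv.eventually_eq_zero_or_eventually_ne_zero with h | h
    · exfalso
      obtain ⟨r, hr, hb⟩ := Metric.eventually_nhds_iff_ball.1 (h.and (isOpen_ball.mem_nhds hx))
      have hc : ∀ u ∈ ball x r, ∀ v ∈ ball x r, f u = f v := fun u hu v hv => isOpen_ball.is_const_of_deriv_eq_zero (convex_ball x r).isPreconnected
        (hf.mono (fun y hy => (hb y hy).2)) (fun y hy => (hb y hy).1) hu hv
      have h1 : x ∈ ball x r := mem_ball_self hr
      have h2 : x + (r/2 : ℝ) ∈ ball x r := by
        simp [abs_of_pos hr]; linarith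
      have := hi (hb _ h1).2 (hb _ h2).2 (hc _ h1 _ h2)
      have h3 : ((r/2 : ℝ) : ℂ) = 0 := by linear_combination -this
      have : r/2 = 0 := by exact_mod_cast h3
      linarith
    · exact h
  have hVn : ∀ᶠ z in 𝓝[≠] (f x), z ∈ f '' ball 0 1 :=
    nhdsWithin_le_nhds (hV.mem_nhds ⟨x, hx, rfl⟩)
  have ht : Tendsto g (𝓝[≠] (f x)) (𝓝[≠] x) := by
    refine tendsto_nhdsWithin_iff.2 ⟨?_, ?_⟩
    · have := (hcont x hx).tendsto
      rw [hgf x hx] at this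
      exact this.mono_left nhdsWithin_le_nhds
    · filter_upwards [hVn, self_mem_nhdsWithin]
      rintro _ ⟨w, hw, rfl⟩ hne hgx
      rw [hgf w hw] at hgx
      exact hne (by rw [mem_singleton_iff.1 hgx]; rfl)
  have hdg : ∀ᶠ z in 𝓝[≠] (f x), DifferentiableAt ℂ g z := by
    filter_upwards [hVn, ht.eventually hd]
    rintro _ ⟨w, hw, rfl⟩ hne
    rw [hgf w hw] at hne
    refine (HasDerivAt.of_local_left_inverse (f := f) (f' := deriv f w) (hcont w hw) ?_ hne ?_).differentiableAt
    · rw [hgf w hw]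
      exact (hf.differentiableAt (isOpen_ball.mem_nhds hw)).hasDerivAt
    · filter_upwards [hV.mem_nhds ⟨w, hw, rfl⟩]
      rintro _ ⟨v, hv, rfl⟩
      rw [hgf v hv]
  exact (analyticAt_of_differentiable_on_punctured_nhds_of_continuousAt hdg
    (hcont x hx)).differentiableAt.differentiableWithinAt

lemma aux_trans (f h : ℂ → ℂ) (hf : DifferentiableOn ℂ f (ball 0 1)) (hi : InjOn f (ball 0 1))
    (hh : DifferentiableOn ℂ h (ball 0 1)) (hhi : InjOn h (ball 0 1))
    (hsub : f '' ball 0 1 ⊆ h '' ball 0 1) (f0 : f 0 = 0) (h0 : h 0 = 0) :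
    ∃ a : ℂ → ℂ, DifferentiableOn ℂ a (ball 0 1) ∧ MapsTo a (ball 0 1) (ball 0 1) ∧
      a 0 = 0 ∧ (∀ w ∈ ball (0:ℂ) 1, h (a w) = f w) ∧ (∀ w ∈ ball (0:ℂ) 1, a w = 0 → w = 0) ∧
      deriv h 0 * deriv a 0 = deriv f 0 ∧ deriv f 0 ≠ 0 := by
  have z0 : (0:ℂ) ∈ ball (0:ℂ) 1 := by simp
  have key : ∀ f : ℂ → ℂ, DifferentiableOn ℂ f (ball 0 1) → f 0 = 0 → HasDerivAt f (deriv f 0) 0 :=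
    fun f hf _ => (hf.differentiableAt (isOpen_ball.mem_nhds z0)).hasDerivAt
  have ndz : deriv f 0 ≠ 0 := by
    obtain ⟨g, hg, hgf, ho⟩ := aux_inv f hf hi
    intro h0
    have h1 := key f hf f0
    have h2 : HasDerivAt g (deriv g (f 0)) (f 0) :=
      (hg.differentiableAt (ho.mem_nhds ⟨0, z0, rfl⟩)).hasDerivAt
    have h3 := h2.comp 0 h1
    have h4 : HasDerivAt (g ∘ f) 1 0 := by
      refine (hasDerivAt_id (0:ℂ)).congr_of_eventuallyEq ?_
      filter_upwards [isOpen_ball.mem_nhds z0] with w hw using hgf w hw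
    have := h3.unique h4
    rw [h0] at this; simp at this
  obtain ⟨g, hg, hgf, ho⟩ := aux_inv h hh hhi
  have hm : ∀ w ∈ ball (0:ℂ) 1, g (f w) ∈ ball (0:ℂ) 1 ∧ h (g (f w)) = f w := by
    intro w hw
    obtain ⟨v, hv, hvw⟩ := hsub ⟨w, hw, rfl⟩
    rw [← hvw, hgf v hv]; exact ⟨hv, rfl⟩
  have a0 : g (f 0) = 0 := by
    have := hgf 0 z0
    rw [h0] at this; rw [f0]; exact this
  have hd : DifferentiableOn ℂ (g ∘ f) (ball 0 1) := hg.comp hf (fun w hw => hsub ⟨w, hw, rfl⟩)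
  refine ⟨g ∘ f, hd, fun w hw => (hm w hw).1, a0, fun w hw => (hm w hw).2, ?_, ?_, ndz⟩
  · intro w hw h
    apply hi hw z0
    rw [← (hm w hw).2, show g (f w) = 0 from h, h0, f0]
  · have h1 := key _ hd a0
    have h2 : HasDerivAt h (deriv h 0) ((g ∘ f) 0) := by
      rw [show (g ∘ f) 0 = 0 from a0]; exact key h hh h0
    refine (h2.comp 0 h1).unique ((key f hf f0).congr_of_eventuallyEq ?_)
    filter_upwards [isOpen_ball.mem_nhds z0] with w hw using (hm w hw).2

lemma aux_dslope (a : ℂ → ℂ) (ha : DifferentiableOn ℂ a (ball 0 1)) (a0 : a 0 = 0) :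
    DifferentiableOn ℂ (dslope a 0) (ball 0 1) ∧ dslope a 0 0 = deriv a 0 ∧
      ∀ w, a w = w * dslope a 0 w := by
  refine ⟨(Complex.differentiableOn_dslope (isOpen_ball.mem_nhds (by simp))).2 ha, dslope_same _ _, ?_⟩
  intro w
  have := sub_smul_dslope a 0 w
  simp only [a0, sub_zero, smul_eq_mul] at this
  exact this.symm

lemma aux_core (a b c : ℂ → ℂ) (ha : DifferentiableOn ℂ a (ball 0 1))
    (hb : DifferentiableOn ℂ b (ball 0 1)) (hc : DifferentiableOn ℂ c (ball 0 1))
    (a0 : a 0 = 0) (b0 : b 0 = 0) (c0 : c 0 = 0)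
    (az : ∀ w ∈ ball (0:ℂ) 1, a w = 0 → w = 0) (bz : ∀ w ∈ ball (0:ℂ) 1, b w = 0 → w = 0)
    (da : deriv a 0 ≠ 0) (db : deriv b 0 ≠ 0)
    (hca : ∀ w ∈ ball (0:ℂ) 1, ‖c w‖ ≤ ‖a w‖) (hcb : ∀ w ∈ ball (0:ℂ) 1, ‖c w‖ ≤ ‖b w‖)
    (H : ∀ t : ℝ, 0 < t → t < 1 → ∃ r < 1, 0 < r ∧ ∀ w ∈ sphere (0:ℂ) r, t ≤ ‖a w‖ ∨ t ≤ ‖b w‖) :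
    ‖deriv c 0‖ ≤ ‖deriv a 0‖ * ‖deriv b 0‖ := by
  obtain ⟨a1d, a10, a1⟩ := aux_dslope a ha a0
  obtain ⟨b1d, b10, b1⟩ := aux_dslope b hb b0
  obtain ⟨c1d, c10, c1⟩ := aux_dslope c hc c0
  have nz : ∀ (a : ℂ → ℂ), deriv a 0 ≠ 0 → (∀ w ∈ ball (0:ℂ) 1, a w = 0 → w = 0) →
      dslope a 0 0 = deriv a 0 → (∀ w, a w = w * dslope a 0 w) →
      ∀ w ∈ ball (0:ℂ) 1, dslope a 0 w ≠ 0 := by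
    intro a da az a10 a1 w hw h
    have : w = 0 := az w hw (by rw [a1, h, mul_zero])
    subst this
    exact da (a10 ▸ h)
  have na := nz a da az a10 a1
  have nb := nz b db bz b10 b1
  set F : ℂ → ℂ := fun w => dslope c 0 w / (dslope a 0 w * dslope b 0 w) with hF
  have Fd : DifferentiableOn ℂ F (ball 0 1) :=
    c1d.div (a1d.mul b1d) (fun w hw => mul_ne_zero (na w hw) (nb w hw))
  have bound : ∀ t : ℝ, 0 < t → t < 1 → ‖F 0‖ ≤ 1 / t := by
    intro t ht0 ht1
    obtain ⟨r, hr1, hr0, hr⟩ := H t ht0 ht1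
    have hsub : closedBall (0:ℂ) r ⊆ ball 0 1 := closedBall_subset_ball hr1
    refine norm_le_of_forall_mem_frontier_norm_le (U := ball (0:ℂ) r) isBounded_ball
      (Fd.diffContOnCl_ball hsub) ?_ (subset_closure (mem_ball_self hr0))
    intro w hw
    rw [frontier_ball _ hr0.ne'] at hw
    have hwb : w ∈ ball (0:ℂ) 1 := hsub (sphere_subset_closedBall hw)
    have hwn : ‖w‖ = r := by simpa using hw
    have w0 : w ≠ 0 := by rw [← norm_pos_iff, hwn]; exact hr0
    have aw : a w ≠ 0 := fun h => w0 (az w hwb h)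
    have bw : b w ≠ 0 := fun h => w0 (bz w hwb h)
    have hFw : F w = c w * w / (a w * b w) := by
      have := na w hwb
      have := nb w hwb
      simp only [hF]
      rw [a1 w, b1 w, c1 w]
      field_simp
    rw [hFw, norm_div, norm_mul, norm_mul, hwn]
    have pa := norm_pos_iff.2 aw
    have pb := norm_pos_iff.2 bw
    rw [div_le_div_iff₀ (by positivity) ht0]
    have e1 := hca w hwb
    have e2 := hcb w hwb
    have e0 := norm_nonneg (c w)
    have e3 : ‖c w‖ * r ≤ ‖c w‖ := by nlinarith
    rcases hr w hw with h | h
    · calc ‖c w‖ * r * t ≤ ‖c w‖ * t := by gcongr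
        _ ≤ ‖b w‖ * ‖a w‖ := by gcongr
        _ = _ := by ring
    · calc ‖c w‖ * r * t ≤ ‖c w‖ * t := by gcongr
        _ ≤ ‖a w‖ * ‖b w‖ := by gcongr
        _ = _ := by ring
  have F1 : ‖F 0‖ ≤ 1 := by
    by_contra! h
    have h2 := bound (2 / (1 + ‖F 0‖)) (by positivity) (by rw [div_lt_one (by positivity)]; linarith)
    rw [one_div_div] at h2
    linarith
  simp only [hF] at F1
  rw [a10, b10, c10, norm_div, norm_mul, div_le_one (by positivity)] at F1
  exact F1

/-- Let `W ⊊ ℂ` be a connected, simply connected open set with `0 ∈ W`, and let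
`A`, `B` be closed sets avoiding `0`. Let `U`, `U'`, `U''` be the connected
components containing `0` of `W \ A`, `W \ B`, `W \ (A ∪ B)` respectively, with
`U` and `U'` simply connected. Then for any biholomorphisms
`f_W : 𝔻 → W`, `f_A : 𝔻 → U`, `f_B : 𝔻 → U'`, `f_{AB} : 𝔻 → U''` fixing `0`,
one has `|f_{AB}'(0)|·|f_W'(0)| ≥ |f_A'(0)|·|f_B'(0)|`, i.e.
`λ(A ∪ B) ≥ λ(A)·λ(B)` for the relative conformal radii. -/
theorem stmt8 (W A B : Set ℂ) (hWo : IsOpen W) (hWc : IsConnected W)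
    (hWsc : SimplyConnectedSpace W) (hWne : W ≠ Set.univ) (h0W : (0 : ℂ) ∈ W)
    (hA : IsClosed A) (hB : IsClosed B) (h0A : (0 : ℂ) ∉ A) (h0B : (0 : ℂ) ∉ B)
    (hU : SimplyConnectedSpace (connectedComponentIn (W \ A) 0))
    (hU' : SimplyConnectedSpace (connectedComponentIn (W \ B) 0))
    (fW fA fB fAB : ℂ → ℂ)
    (hfW : DifferentiableOn ℂ fW (Metric.ball 0 1))
    (hfWb : Set.BijOn fW (Metric.ball 0 1) W) (hfW0 : fW 0 = 0)
    (hfA : DifferentiableOn ℂ fA (Metric.ball 0 1))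
    (hfAb : Set.BijOn fA (Metric.ball 0 1) (connectedComponentIn (W \ A) 0))
    (hfA0 : fA 0 = 0)
    (hfB : DifferentiableOn ℂ fB (Metric.ball 0 1))
    (hfBb : Set.BijOn fB (Metric.ball 0 1) (connectedComponentIn (W \ B) 0))
    (hfB0 : fB 0 = 0)
    (hfAB : DifferentiableOn ℂ fAB (Metric.ball 0 1))
    (hfABb : Set.BijOn fAB (Metric.ball 0 1) (connectedComponentIn (W \ (A ∪ B)) 0))
    (hfAB0 : fAB 0 = 0) :
    ‖deriv fAB 0‖ * ‖deriv fW 0‖ ≥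
      ‖deriv fA 0‖ * ‖deriv fB 0‖ := by
  have z0 : (0:ℂ) ∈ ball (0:ℂ) 1 := by simp
  have sA : connectedComponentIn (W \ (A ∪ B)) 0 ⊆ connectedComponentIn (W \ A) 0 :=
    connectedComponentIn_mono 0 (sdiff_subset_sdiff_right subset_union_left)
  have sB : connectedComponentIn (W \ (A ∪ B)) 0 ⊆ connectedComponentIn (W \ B) 0 :=
    connectedComponentIn_mono 0 (sdiff_subset_sdiff_right subset_union_right)
  have sAW : connectedComponentIn (W \ A) 0 ⊆ W :=
    (connectedComponentIn_subset _ _).trans sdiff_subset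
  have sBW : connectedComponentIn (W \ B) 0 ⊆ W :=
    (connectedComponentIn_subset _ _).trans sdiff_subset
  have hO : IsOpen (W \ (A ∪ B)) := hWo.sdiff (hA.union hB)
  have h0O : (0:ℂ) ∈ W \ (A ∪ B) := ⟨h0W, by simp [h0A, h0B]⟩
  obtain ⟨a, ha, ham, a0, afa, az, aD, nd⟩ := aux_trans fAB fA hfAB hfABb.injOn hfA hfAb.injOn
    (by rw [hfABb.image_eq, hfAb.image_eq]; exact sA) hfAB0 hfA0
  obtain ⟨b, hb, hbm, b0, bfb, bz, bD, -⟩ := aux_trans fAB fB hfAB hfABb.injOn hfB hfBb.injOn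
    (by rw [hfABb.image_eq, hfBb.image_eq]; exact sB) hfAB0 hfB0
  obtain ⟨c, hc, hcm, c0, cfc, cz, cD, -⟩ := aux_trans fAB fW hfAB hfABb.injOn hfW hfWb.injOn
    (by rw [hfABb.image_eq, hfWb.image_eq]; exact sA.trans sAW) hfAB0 hfW0
  obtain ⟨p, hp, hpm, p0, pf, -, -, -⟩ := aux_trans fA fW hfA hfAb.injOn hfW hfWb.injOn
    (by rw [hfAb.image_eq, hfWb.image_eq]; exact sAW) hfA0 hfW0
  obtain ⟨q, hq, hqm, q0, qf, -, -, -⟩ := aux_trans fB fW hfB hfBb.injOn hfW hfWb.injOn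
    (by rw [hfBb.image_eq, hfWb.image_eq]; exact sBW) hfB0 hfW0
  have hca : ∀ w ∈ ball (0:ℂ) 1, ‖c w‖ ≤ ‖a w‖ := by
    intro w hw
    have : c w = p (a w) := hfWb.injOn (hcm hw) (hpm (ham hw))
      (by rw [cfc w hw, pf _ (ham hw), afa w hw])
    rw [this]
    exact norm_le_norm_of_mapsTo_ball hp (hpm.mono_right ball_subset_closedBall) p0 (by simpa using ham hw)
  have hcb : ∀ w ∈ ball (0:ℂ) 1, ‖c w‖ ≤ ‖b w‖ := by
    intro w hw
    have : c w = q (b w) := hfWb.injOn (hcm hw) (hqm (hbm hw))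
      (by rw [cfc w hw, qf _ (hbm hw), bfb w hw])
    rw [this]
    exact norm_le_norm_of_mapsTo_ball hq (hqm.mono_right ball_subset_closedBall) q0 (by simpa using hbm hw)
  have H : ∀ t : ℝ, 0 < t → t < 1 →
      ∃ r < 1, 0 < r ∧ ∀ w ∈ sphere (0:ℂ) r, t ≤ ‖a w‖ ∨ t ≤ ‖b w‖ := by
    intro t ht0 ht1
    obtain ⟨g, hg, hgf, ho⟩ := aux_inv fAB hfAB hfABb.injOn
    rw [hfABb.image_eq] at hg ho
    have hsub : closedBall (0:ℂ) t ⊆ ball 0 1 := closedBall_subset_ball ht1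
    set K := (fA '' closedBall 0 t ∩ fB '' closedBall 0 t) ∩
      closure (connectedComponentIn (W \ (A ∪ B)) 0) with hK
    have cA : IsCompact (fA '' closedBall 0 t) :=
      (isCompact_closedBall 0 t).image_of_continuousOn (hfA.continuousOn.mono hsub)
    have cB : IsCompact (fB '' closedBall 0 t) :=
      (isCompact_closedBall 0 t).image_of_continuousOn (hfB.continuousOn.mono hsub)
    have cK : IsCompact K := (cA.inter cB).inter_right isClosed_closure
    have KU : K ⊆ connectedComponentIn (W \ (A ∪ B)) 0 := by
      rintro z ⟨⟨⟨u, hu, rfl⟩, ⟨v, hv, hvu⟩⟩, hz⟩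
      have h1 := connectedComponentIn_subset _ _ (hfAb.mapsTo (hsub hu))
      have h2 := connectedComponentIn_subset _ _ (hfBb.mapsTo (hsub hv))
      rw [hvu] at h2
      have h3 : fA u ∈ W \ (A ∪ B) := ⟨h1.1, fun h => h.elim h1.2 h2.2⟩
      have hpc : IsPreconnected (insert (fA u) (connectedComponentIn (W \ (A ∪ B)) 0)) :=
        isPreconnected_connectedComponentIn.subset_closure (subset_insert _ _)
          (insert_subset hz subset_closure)
      exact hpc.subset_connectedComponentIn (mem_insert_of_mem _ (mem_connectedComponentIn h0O))
        (insert_subset h3 (connectedComponentIn_subset _ _)) (mem_insert _ _)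
    have cI : IsCompact (g '' K) := cK.image_of_continuousOn (hg.continuousOn.mono KU)
    have hI : g '' K ⊆ ball 0 1 := by
      rintro _ ⟨z, hz, rfl⟩
      obtain ⟨w, hw, rfl⟩ := hfABb.surjOn (KU hz)
      rw [hgf w hw]; exact hw
    obtain ⟨s, hs1, hs⟩ : ∃ s < 1, g '' K ⊆ closedBall 0 s := by
      rcases (g '' K).eq_empty_or_nonempty with h | h
      · exact ⟨0, one_pos, by simp [h]⟩
      · obtain ⟨x, hx, hmax⟩ := cI.exists_isMaxOn h continuous_norm.continuousOn
        refine ⟨‖x‖, by simpa using hI hx, fun y hy => ?_⟩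
        simpa using hmax hy
    refine ⟨(max s 0 + 1) / 2, ?_, ?_, ?_⟩
    · have := max_lt hs1 one_pos
      linarith
    · have := le_max_right s 0
      linarith
    · intro w hw
      by_contra! h
      have hm := max_lt hs1 one_pos
      have hwn : ‖w‖ = (max s 0 + 1) / 2 := by simpa using hw
      have hwb : w ∈ ball (0:ℂ) 1 := by
        rw [mem_ball_zero_iff, hwn]; linarith
      have hwK : fAB w ∈ K := by
        refine ⟨⟨⟨a w, ?_, afa w hwb⟩, ⟨b w, ?_, bfb w hwb⟩⟩, subset_closure (hfABb.mapsTo hwb)⟩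
        · simpa using h.1.le
        · simpa using h.2.le
      have := hs ⟨_, hwK, hgf w hwb⟩
      rw [mem_closedBall_zero_iff, hwn] at this
      have := le_max_left s 0
      linarith
  have da : deriv a 0 ≠ 0 := fun h => nd (by rw [← aD, h, mul_zero])
  have db : deriv b 0 ≠ 0 := fun h => nd (by rw [← bD, h, mul_zero])
  have key := aux_core a b c ha hb hc a0 b0 c0 az bz da db hca hcb H
  have eA : ‖deriv fA 0‖ * ‖deriv a 0‖ = ‖deriv fAB 0‖ := by rw [← norm_mul, aD]
  have eB : ‖deriv fB 0‖ * ‖deriv b 0‖ = ‖deriv fAB 0‖ := by rw [← norm_mul, bD]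
  have eC : ‖deriv fW 0‖ * ‖deriv c 0‖ = ‖deriv fAB 0‖ := by rw [← norm_mul, cD]
  have pos : 0 < ‖deriv fAB 0‖ := norm_pos_iff.2 nd
  refine le_of_mul_le_mul_right ?_ pos
  calc ‖deriv fA 0‖ * ‖deriv fB 0‖ * ‖deriv fAB 0‖
      = ‖deriv fA 0‖ * ‖deriv fB 0‖ * (‖deriv fW 0‖ * ‖deriv c 0‖) := by rw [eC]
    _ ≤ ‖deriv fA 0‖ * ‖deriv fB 0‖ * (‖deriv fW 0‖ * (‖deriv a 0‖ * ‖deriv b 0‖)) := by gcongr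
    _ = (‖deriv fA 0‖ * ‖deriv a 0‖) * ‖deriv fW 0‖ * (‖deriv fB 0‖ * ‖deriv b 0‖) := by ring
    _ = ‖deriv fAB 0‖ * ‖deriv fW 0‖ * ‖deriv fAB 0‖ := by rw [eA, eB]
end
end

section
/- Let u > 0 and let U = {z ∈ 𝔻 : |z − cosh(u)| > sinh(u)}, the connected component containing 0 of 𝔻 minus the hyperbolic geodesic passing through e^{−u} orthogonal to the segment [0, e^{−u}]. Then U is open and simply connected, and every biholomorphism f : 𝔻 → U with f(0) = 0 satisfies |f′(0)| = 1/cosh(u). -/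
open Complex Metric Set

noncomputable section

open Filter Topology in
theorem aux_not_const {F : ℂ → ℂ} (hinj : InjOn F (ball 0 1)) {z : ℂ} (hz : z ∈ ball (0:ℂ) 1) :
    ¬ ∀ᶠ x in 𝓝 z, F x = F z := by
  intro h
  have h2 : ∀ᶠ x in 𝓝 z, x = z := by
    filter_upwards [h, isOpen_ball.mem_nhds hz] with x hx hxb using hinj hxb hz hx
  have h3 : ∀ᶠ x in 𝓝[≠] z, False := by
    filter_upwards [h2.filter_mono nhdsWithin_le_nhds, self_mem_nhdsWithin] with x hx hx' using hx' hx
  exact (NormedField.nhdsNE_neBot z).ne (by simpa using h3)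

open Filter Topology in
theorem aux_disc {F : ℂ → ℂ} (hd : DifferentiableOn ℂ F (ball 0 1))
    (hb : BijOn F (ball 0 1) (ball 0 1)) (h0 : F 0 = 0) : ‖deriv F 0‖ = 1 := by
  set G := Function.invFunOn F (ball 0 1) with hG
  have hinv : InvOn G F (ball 0 1) (ball 0 1) := hb.invOn_invFunOn
  have hGm : MapsTo G (ball 0 1) (ball 0 1) := hb.surjOn.mapsTo_invFunOn
  have han : AnalyticOnNhd ℂ F (ball 0 1) := hd.analyticOnNhd isOpen_ball
  have hcont : ∀ w ∈ ball (0:ℂ) 1, ContinuousAt G w := by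
    intro w hw
    have hz := hGm hw
    have hFz : F (G w) = w := hinv.2 hw
    have hle := ((han _ hz).eventually_constant_or_nhds_le_map_nhds).resolve_left
      (aux_not_const hb.injOn hz)
    rw [hFz] at hle
    intro s hs
    have : F '' (s ∩ ball 0 1) ∈ 𝓝 w :=
      hle (image_mem_map (inter_mem hs (isOpen_ball.mem_nhds hz)))
    rw [mem_map]
    filter_upwards [this]
    rintro _ ⟨x, ⟨hxs, hxb⟩, rfl⟩
    simpa [hinv.1 hxb] using hxs
  have hder : ∀ w ∈ ball (0:ℂ) 1, deriv F (G w) ≠ 0 → DifferentiableAt ℂ G w := by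
    intro w hw hne
    have hz := hGm hw
    refine (HasDerivAt.of_local_left_inverse (hcont w hw) (han _ hz).differentiableAt.hasDerivAt hne
      ?_).differentiableAt
    filter_upwards [isOpen_ball.mem_nhds hw] with x hx using hinv.2 hx
  have hGd : ∀ w ∈ ball (0:ℂ) 1, DifferentiableAt ℂ G w := by
    intro w hw
    have hz := hGm hw
    apply AnalyticAt.differentiableAt
    apply analyticAt_of_differentiable_on_punctured_nhds_of_continuousAt _ (hcont w hw)
    have hev : ∀ᶠ x in 𝓝[≠] (G w), deriv F x ≠ 0 := by
      refine ((han _ hz).deriv.eventually_eq_zero_or_eventually_ne_zero).resolve_left ?_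
      intro h
      apply aux_not_const hb.injOn hz
      obtain ⟨r, hr, hrs⟩ := Metric.mem_nhds_iff.1 (inter_mem h (isOpen_ball.mem_nhds hz))
      filter_upwards [ball_mem_nhds _ hr] with x hx
      refine isOpen_ball.is_const_of_deriv_eq_zero (convex_ball (G w) r).isPreconnected
        (hd.mono fun y hy => (hrs hy).2) (fun y hy => (hrs hy).1) hx (mem_ball_self hr)
    have htend : Tendsto G (𝓝[≠] w) (𝓝[≠] (G w)) := by
      refine tendsto_nhdsWithin_iff.2 ⟨(hcont w hw).tendsto.mono_left nhdsWithin_le_nhds, ?_⟩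
      filter_upwards [self_mem_nhdsWithin, mem_nhdsWithin_of_mem_nhds (isOpen_ball.mem_nhds hw)]
        with x hx hxb hxe
      exact hx (hinv.2.injOn hxb hw hxe)
    filter_upwards [htend.eventually hev, mem_nhdsWithin_of_mem_nhds (isOpen_ball.mem_nhds hw)]
      with x hx hxb using hder x hxb hx
  have hm0 : (0:ℂ) ∈ ball (0:ℂ) 1 := mem_ball_self one_pos
  have hG0 : G 0 = 0 := by
    have := hinv.1 hm0
    rwa [h0] at this
  have h1 : ‖deriv F 0‖ ≤ 1 :=
    norm_deriv_le_one_of_mapsTo_ball hd (by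
      intro x hx; rw [h0]; exact ball_subset_closedBall (hb.mapsTo hx)) one_pos
  have h2 : ‖deriv G 0‖ ≤ 1 :=
    norm_deriv_le_one_of_mapsTo_ball (fun w hw => (hGd w hw).differentiableWithinAt) (by
      intro x hx; rw [hG0]; exact ball_subset_closedBall (hGm hx)) one_pos
  have h3 : deriv G 0 * deriv F 0 = 1 := by
    have e1 : HasDerivAt G (deriv G 0) (F 0) := by rw [h0]; exact (hGd 0 hm0).hasDerivAt
    have e := e1.comp 0 (han 0 hm0).differentiableAt.hasDerivAt
    refine e.unique ((hasDerivAt_id 0).congr_of_eventuallyEq ?_)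
    filter_upwards [isOpen_ball.mem_nhds hm0] with x hx using hinv.1 hx
  have h4 : ‖deriv G 0‖ * ‖deriv F 0‖ = 1 := by rw [← norm_mul, h3, norm_one]
  nlinarith [norm_nonneg (deriv F 0), norm_nonneg (deriv G 0)]

theorem aux_mem (u : ℝ) (hu : 0 < u) (z : ℂ) :
    (z ∈ {z ∈ Metric.ball (0 : ℂ) 1 | Real.sinh u < ‖z - (Real.cosh u : ℂ)‖}) ↔
      (normSq z < 1 ∧ 0 < normSq z - 2 * Real.cosh u * z.re + 1) := by
  have hs : 0 < Real.sinh u := Real.sinh_pos_iff.2 hu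
  have e := Real.cosh_sq u
  have a : ‖z‖ < 1 ↔ normSq z < 1 := by
    rw [normSq_eq_norm_sq]
    constructor <;> intro h <;> nlinarith [norm_nonneg z]
  have b : Real.sinh u < ‖z - (Real.cosh u : ℂ)‖ ↔
      Real.sinh u ^ 2 < normSq (z - (Real.cosh u : ℂ)) := by
    rw [normSq_eq_norm_sq]
    constructor <;> intro h <;> nlinarith [norm_nonneg (z - (Real.cosh u : ℂ))]
  simp only [mem_ofPred_eq, mem_ball_zero_iff, a, b]
  refine and_congr Iff.rfl ?_
  simp only [normSq_apply, sub_re, sub_im, ofReal_re, ofReal_im]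
  constructor <;> intro h <;> nlinarith

theorem aux_key (C : ℝ) (z : ℂ) : normSq (1 - C * z) - normSq (z * (C - z)) =
    (1 - normSq z) * (normSq z - 2 * C * z.re + 1) := by
  simp only [normSq_apply, sub_re, sub_im, ofReal_re, ofReal_im, mul_re, mul_im, one_re, one_im]
  ring

theorem aux_out (C : ℝ) (hC : 1 < C) (z z' : ℂ) (hz : normSq z < 1)
    (h : z' * (C * z - 1) = z - C) (hz' : normSq z' < 1) : False := by
  have h1 : normSq z' * normSq (C * z - 1) = normSq (z - C) := by rw [← normSq_mul, h]
  have h2 : normSq (z - C) - normSq (C * z - 1) = (C ^ 2 - 1) * (1 - normSq z) := by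
    simp only [normSq_apply, sub_re, sub_im, ofReal_re, ofReal_im, mul_re, mul_im, one_re, one_im]
    ring
  have h3 : 0 < (C ^ 2 - 1) * (1 - normSq z) := mul_pos (by nlinarith) (by linarith)
  nlinarith [normSq_nonneg (C * z - 1)]

theorem aux_ne (C : ℝ) (z : ℂ) (h1 : normSq z < 1) (h2 : 0 < normSq z - 2 * C * z.re + 1) :
    (1 - C * z : ℂ) ≠ 0 := by
  intro h
  have := aux_key C z
  have h3 : 0 < (1 - normSq z) * (normSq z - 2 * C * z.re + 1) := mul_pos (by linarith) h2
  rw [h, map_zero] at this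
  nlinarith [normSq_nonneg (z * (C - z))]

theorem aux_norm (w : ℂ) : w ∈ ball (0:ℂ) 1 ↔ normSq w < 1 := by
  rw [mem_ball_zero_iff, normSq_eq_norm_sq]
  constructor <;> intro h <;> nlinarith [norm_nonneg w]

theorem aux_bij (u : ℝ) (hu : 0 < u) :
    BijOn (fun z : ℂ => z * ((Real.cosh u : ℂ) - z) / (1 - (Real.cosh u : ℂ) * z))
      {z ∈ Metric.ball (0 : ℂ) 1 | Real.sinh u < ‖z - (Real.cosh u : ℂ)‖} (ball 0 1) := by
  have hC : 1 < Real.cosh u := Real.one_lt_cosh.2 hu.ne'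
  refine ⟨?_, ?_, ?_⟩
  · intro z hz
    rw [aux_mem u hu] at hz
    have hne := aux_ne _ z hz.1 hz.2
    rw [aux_norm, normSq_div, div_lt_one (normSq_pos.2 hne)]
    have := aux_key (Real.cosh u) z
    have h3 := mul_pos (sub_pos.2 hz.1) hz.2
    linarith
  · intro z hz z' hz' h
    rw [aux_mem u hu] at hz hz'
    have hne := aux_ne _ z hz.1 hz.2
    have hne' := aux_ne _ z' hz'.1 hz'.2
    simp only at h
    rw [div_eq_div_iff hne hne'] at h
    by_contra hzz
    refine aux_out _ hC z z' hz.1 ?_ hz'.1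
    apply mul_left_cancel₀ (sub_ne_zero.2 hzz)
    linear_combination h
  · intro w hw
    rw [aux_norm] at hw
    obtain ⟨s, hs⟩ := IsAlgClosed.exists_pow_nat_eq
      (((Real.cosh u : ℂ) * (1 + w)) ^ 2 - 4 * w) (n := 2) two_pos
    have main : ∀ z : ℂ, z * ((Real.cosh u : ℂ) - z) = w * (1 - (Real.cosh u : ℂ) * z) →
        normSq z < 1 → ∃ x ∈ {z ∈ Metric.ball (0 : ℂ) 1 | Real.sinh u < ‖z - (Real.cosh u : ℂ)‖},
          x * ((Real.cosh u : ℂ) - x) / (1 - (Real.cosh u : ℂ) * x) = w := by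
      intro z h hz
      have hne : (1 - (Real.cosh u : ℂ) * z) ≠ 0 := by
        intro h0
        rw [h0, mul_zero] at h
        rcases mul_eq_zero.1 h with h | h
        · simp [h] at h0
        · have : (Real.cosh u : ℂ) = z := sub_eq_zero.1 h
          rw [← this, normSq_ofReal] at hz
          nlinarith
      have hp := normSq_pos.2 hne
      have hk := aux_key (Real.cosh u) z
      rw [h, normSq_mul] at hk
      have hpos : 0 < (1 - normSq z) * (normSq z - 2 * Real.cosh u * z.re + 1) := by
        rw [← hk]; nlinarith
      refine ⟨z, (aux_mem u hu z).2 ⟨hz, ?_⟩, ?_⟩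
      · exact (mul_pos_iff_of_pos_left (by linarith)).1 hpos
      · rw [h, mul_div_cancel_right₀ _ hne]
    set z1 : ℂ := ((Real.cosh u : ℂ) * (1 + w) + s) / 2 with h1
    set z2 : ℂ := ((Real.cosh u : ℂ) * (1 + w) - s) / 2 with h2
    have hprod : z1 * z2 = w := by rw [h1, h2]; linear_combination -hs / 4
    by_cases hz1 : normSq z1 < 1
    · exact main z1 (by rw [h1]; linear_combination -hs / 4) hz1
    · refine main z2 (by rw [h2]; linear_combination -hs / 4) ?_
      rw [← hprod, normSq_mul] at hw
      nlinarith [normSq_nonneg z2]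

/-- For `u > 0`, let `U = {z ∈ 𝔻 : |z - cosh u| > sinh u}`, the component of
`𝔻` minus the geodesic through `e^{-u}` orthogonal to `[0, e^{-u}]` that
contains `0`. Then `U` is open and simply connected, and every biholomorphism
`f : 𝔻 → U` with `f 0 = 0` satisfies `|f'(0)| = 1 / cosh u`. -/
theorem stmt9 (u : ℝ) (hu : 0 < u) :
    IsOpen {z ∈ Metric.ball (0 : ℂ) 1 |
        Real.sinh u < ‖z - (Real.cosh u : ℂ)‖} ∧
    SimplyConnectedSpace ({z ∈ Metric.ball (0 : ℂ) 1 |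
        Real.sinh u < ‖z - (Real.cosh u : ℂ)‖}) ∧
    ∀ f : ℂ → ℂ, DifferentiableOn ℂ f (Metric.ball 0 1) →
      Set.BijOn f (Metric.ball 0 1)
        {z ∈ Metric.ball (0 : ℂ) 1 |
          Real.sinh u < ‖z - (Real.cosh u : ℂ)‖} →
      f 0 = 0 →
      ‖deriv f 0‖ = 1 / Real.cosh u := by
  refine ⟨?_, ?_, ?_⟩
  · exact isOpen_ball.inter (isOpen_lt (f := fun _ : ℂ => Real.sinh u)
      (g := fun z : ℂ => ‖z - (Real.cosh u : ℂ)‖) continuous_const (by fun_prop))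
  · have hm0 : (0:ℂ) ∈ {z ∈ Metric.ball (0 : ℂ) 1 | Real.sinh u < ‖z - (Real.cosh u : ℂ)‖} := by
      rw [aux_mem u hu]; simp
    have hstar : StarConvex ℝ (0:ℂ)
        {z ∈ Metric.ball (0 : ℂ) 1 | Real.sinh u < ‖z - (Real.cosh u : ℂ)‖} := by
      rw [starConvex_zero_iff]
      intro z hz t ht0 ht1
      rw [aux_mem u hu] at hz ⊢
      obtain ⟨h1, h2⟩ := hz
      have hn : normSq (t • z) = t ^ 2 * normSq z := by
        simp [normSq_apply]; ring
      have hr : (t • z).re = t * z.re := by simp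
      rw [hn, hr]
      have hn0 := normSq_nonneg z
      have ht2 : t ^ 2 ≤ 1 := by nlinarith
      refine ⟨by nlinarith, ?_⟩
      have e : t ^ 2 * normSq z - 2 * Real.cosh u * (t * z.re) + 1 =
        (1 - t) * (1 - t * normSq z) + t * (normSq z - 2 * Real.cosh u * z.re + 1) := by ring
      rw [e]
      have h3 : 0 < 1 - t * normSq z := by nlinarith
      rcases ht0.eq_or_lt with h | h
      · rw [← h]; norm_num
      · have := mul_pos h h2
        have := mul_nonneg (sub_nonneg.2 ht1) h3.le
        linarith
    have := hstar.contractibleSpace ⟨0, hm0⟩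
    exact SimplyConnectedSpace.ofContractible _
  · intro f hf hb h0
    have hC : 1 < Real.cosh u := Real.one_lt_cosh.2 hu.ne'
    have hB := (aux_bij u hu).comp hb
    set g : ℂ → ℂ := fun z : ℂ => z * ((Real.cosh u : ℂ) - z) / (1 - (Real.cosh u : ℂ) * z) with hg
    have hgd : ∀ z : ℂ, (1 - (Real.cosh u : ℂ) * z) ≠ 0 → DifferentiableAt ℂ g z := by
      intro z hz
      exact DifferentiableAt.div (by fun_prop) (by fun_prop) hz
    have hFd : DifferentiableOn ℂ (g ∘ f) (ball 0 1) := by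
      intro x hx
      have hm := (aux_mem u hu _).1 (hb.mapsTo hx)
      exact (hgd _ (aux_ne _ _ hm.1 hm.2)).comp_differentiableWithinAt x (hf x hx)
    have hone := aux_disc hFd hB (by simp [hg, h0])
    have hg0 : HasDerivAt g (Real.cosh u : ℂ) (f 0) := by
      rw [h0]
      have a1 : HasDerivAt (fun z : ℂ => z * ((Real.cosh u : ℂ) - z))
          (1 * ((Real.cosh u : ℂ) - 0) + 0 * (-1)) 0 :=
        (hasDerivAt_id (0:ℂ)).mul ((hasDerivAt_id (0:ℂ)).const_sub _)
      have a2 : HasDerivAt (fun z : ℂ => 1 - (Real.cosh u : ℂ) * z) (-((Real.cosh u : ℂ) * 1)) 0 :=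
        ((hasDerivAt_id (0:ℂ)).const_mul _).const_sub _
      have a3 := a1.div a2 (by simp)
      exact a3.congr_deriv (by simp)
    have hfd : HasDerivAt f (deriv f 0) 0 :=
      (hf.differentiableAt (isOpen_ball.mem_nhds (mem_ball_self one_pos))).hasDerivAt
    rw [(hg0.comp 0 hfd).deriv, norm_mul, norm_real, Real.norm_of_nonneg (by linarith)] at hone
    rw [eq_div_iff (by linarith)]
    linarith
end
end

section
/- There exist constants K₃ > K₄ > 0 such that for every u ∈ (0, π], setting x = e^{−u}, V₅(x) = exp(T(−5u)) (the image of the triangle T(−5u) under the complex exponential) and U = 𝔻 \ V₅(x), the set U is open and simply connected with 0 ∈ U, and every biholomorphism f : 𝔻 → U with f(0) = 0 satisfies K₄ ≤ −ln|f′(0)| / a₅(u) ≤ K₃, where a₅(u) denotes the area of T(−5u) in the quotient ℂ/2πiℤ. -/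
open Complex Metric Set MeasureTheory

noncomputable section

lemma inv_diff (f : ℂ → ℂ) (hf : DifferentiableOn ℂ f (ball 0 1)) (hi : InjOn f (ball 0 1)) :
    DifferentiableOn ℂ (Function.invFunOn f (ball 0 1)) (f '' ball 0 1) ∧
      IsOpen (f '' ball (0:ℂ) 1) := by
  have han : AnalyticOnNhd ℂ f (ball 0 1) := hf.analyticOnNhd isOpen_ball
  have hopen : ∀ s ⊆ ball (0:ℂ) 1, IsOpen s → IsOpen (f '' s) := by
    rcases han.is_constant_or_isOpen (convex_ball (0:ℂ) 1).isPreconnected with ⟨w, hw⟩ | h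
    · exfalso
      have h0 : (0:ℂ) ∈ ball (0:ℂ) 1 := by simp
      have h1 : (1/2:ℂ) ∈ ball (0:ℂ) 1 := by simp; norm_num
      have := hi h0 h1 ((hw _ h0).trans (hw _ h1).symm)
      norm_num at this
    · exact h
  set F := Function.invFunOn f (ball 0 1) with hF
  have hFf : ∀ z ∈ ball (0:ℂ) 1, F (f z) = z := fun z hz => hi.leftInvOn_invFunOn hz
  have hU : IsOpen (f '' ball (0:ℂ) 1) := hopen _ subset_rfl isOpen_ball
  refine ⟨?_, hU⟩
  have hcont : ∀ z ∈ ball (0:ℂ) 1, ContinuousAt F (f z) := by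
    intro z hz
    rw [ContinuousAt, hFf z hz]
    intro N hN
    obtain ⟨t, htN, hto, hzt⟩ := _root_.mem_nhds_iff.1 hN
    have : f '' (t ∩ ball 0 1) ∈ nhds (f z) :=
      (hopen _ inter_subset_right (hto.inter isOpen_ball)).mem_nhds ⟨z, ⟨hzt, hz⟩, rfl⟩
    refine Filter.mem_map.2 (Filter.mem_of_superset this ?_)
    rintro _ ⟨y, ⟨hy, hyb⟩, rfl⟩
    simp only [mem_preimage, hFf y hyb]
    exact htN hy
  have hd : ∀ z ∈ ball (0:ℂ) 1, deriv f z ≠ 0 → DifferentiableAt ℂ F (f z) := by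
    intro z hz hz'
    have h1 : HasDerivAt f (deriv f z) (F (f z)) := by
      rw [hFf z hz]
      exact (hf.differentiableAt (isOpen_ball.mem_nhds hz)).hasDerivAt
    refine (HasDerivAt.of_local_left_inverse (hcont z hz) h1 hz' ?_).differentiableAt
    filter_upwards [hU.mem_nhds ⟨z, hz, rfl⟩]
    rintro _ ⟨y, hy, rfl⟩
    rw [hFf y hy]
  rintro _ ⟨z, hz, rfl⟩
  apply DifferentiableAt.differentiableWithinAt
  apply AnalyticAt.differentiableAt
  apply Complex.analyticAt_of_differentiable_on_punctured_nhds_of_continuousAt _ (hcont z hz)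
  have hne : ∀ᶠ y in nhdsWithin z {z}ᶜ, deriv f y ≠ 0 := by
    rcases (han z hz).deriv.eventually_eq_zero_or_eventually_ne_zero with h | h
    · exfalso
      obtain ⟨r, hr, hrs⟩ := Metric.mem_nhds_iff.1 (Filter.inter_mem h (isOpen_ball.mem_nhds hz))
      have hx : z + (r/2 : ℝ) ∈ ball z r := by
        simp [abs_of_pos hr]; linarith
      have := isOpen_ball.is_const_of_deriv_eq_zero (convex_ball z r).isPreconnected
        (hf.mono fun y hy => (hrs hy).2) (fun y hy => (hrs hy).1) (mem_ball_self hr) hx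
      have h2 := hi hz (hrs hx).2 this
      simp at h2
      exact hr.ne' h2
    · exact h
  have ht : Filter.Tendsto F (nhdsWithin (f z) {f z}ᶜ) (nhdsWithin z {z}ᶜ) := by
    apply tendsto_nhdsWithin_of_tendsto_nhds_of_eventually_within
    · have := hcont z hz
      rw [ContinuousAt, hFf z hz] at this
      exact this.mono_left nhdsWithin_le_nhds
    · filter_upwards [self_mem_nhdsWithin, mem_nhdsWithin_of_mem_nhds (hU.mem_nhds ⟨z, hz, rfl⟩)]
      rintro _ hne ⟨y, hy, rfl⟩
      simp only [hFf y hy, mem_compl_iff, mem_singleton_iff] at hne ⊢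
      rintro rfl
      exact hne rfl
  filter_upwards [ht.eventually hne, mem_nhdsWithin_of_mem_nhds (hU.mem_nhds ⟨z, hz, rfl⟩)]
  rintro _ hne' ⟨y, hy, rfl⟩
  rw [hFf y hy] at hne'
  exact hd y hy hne'

/-- Comparison from below. -/
lemma schwarz_low (f φ : ℂ → ℂ) (U : Set ℂ) (r : ℝ) (hr : 0 < r)
    (hf : DifferentiableOn ℂ f (ball 0 1))
    (hb : BijOn f (ball 0 1) U) (hf0 : f 0 = 0) (d : ℂ) (hφ : DifferentiableOn ℂ φ (ball 0 r))
    (hφU : MapsTo φ (ball 0 r) U) (hφ0 : φ 0 = 0) (hd : HasDerivAt φ d 0) :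
    r * ‖d‖ ≤ ‖deriv f 0‖ := by
  obtain ⟨hF, hU⟩ := inv_diff f hf hb.injOn
  rw [hb.image_eq] at hF hU
  set F := Function.invFunOn f (ball 0 1) with hFd
  have h0 : (0:ℂ) ∈ ball (0:ℂ) 1 := by simp
  have hF0 : F 0 = 0 := by
    have := hb.injOn.leftInvOn_invFunOn h0
    rwa [hf0] at this
  have h0U : (0:ℂ) ∈ U := hf0 ▸ hb.mapsTo h0
  have hmaps : MapsTo (F ∘ φ) (ball 0 r) (ball 0 1) := fun z hz =>
    hb.surjOn.mapsTo_invFunOn (hφU hz)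
  have hdiff : DifferentiableOn ℂ (F ∘ φ) (ball 0 r) := hF.comp hφ hφU
  have hs := Complex.norm_deriv_le_div_of_mapsTo_ball (R₂ := 1) hdiff (by
    simp only [Function.comp, hφ0, hF0]
    exact fun z hz => ball_subset_closedBall (hmaps hz)) hr
  have hFd0 : HasDerivAt F (deriv F 0) 0 := (hF.differentiableAt (hU.mem_nhds h0U)).hasDerivAt
  have hc : HasDerivAt (F ∘ φ) (deriv F 0 * d) 0 :=
    HasDerivAt.comp (0:ℂ) (h₂ := F) (by rw [hφ0]; exact hFd0) hd
  rw [hc.deriv, norm_mul] at hs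
  have hfd : HasDerivAt f (deriv f 0) (0:ℂ) :=
    (hf.differentiableAt (isOpen_ball.mem_nhds h0)).hasDerivAt
  have hid : HasDerivAt (f ∘ F) (deriv f 0 * deriv F 0) 0 :=
    HasDerivAt.comp (0:ℂ) (h₂ := f) (by rw [hF0]; exact hfd) hFd0
  have hid2 : HasDerivAt (f ∘ F) 1 0 := by
    refine (hasDerivAt_id (0:ℂ)).congr_of_eventuallyEq ?_
    filter_upwards [hU.mem_nhds h0U] with w hw
    exact hb.surjOn.rightInvOn_invFunOn hw
  have h1 : ‖deriv f 0‖ * ‖deriv F 0‖ = 1 := by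
    rw [← norm_mul, hid.unique hid2, norm_one]
  rw [le_div_iff₀ hr] at hs
  have := mul_le_mul_of_nonneg_left hs (norm_nonneg (deriv f 0))
  calc r * ‖d‖ = (‖deriv f 0‖ * ‖deriv F 0‖) * (r * ‖d‖) := by rw [h1, one_mul]
    _ ≤ _ := by linarith

/-- Comparison from above. -/
lemma schwarz_up (f g : ℂ → ℂ) (U : Set ℂ)
    (hf : DifferentiableOn ℂ f (ball 0 1))
    (hb : MapsTo f (ball 0 1) U) (hf0 : f 0 = 0) (d : ℂ) (hg : DifferentiableOn ℂ g U)
    (hgU : MapsTo g U (ball 0 1)) (hg0 : g 0 = 0) (hd : HasDerivAt g d 0) :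
    ‖d‖ * ‖deriv f 0‖ ≤ 1 := by
  have h0 : (0:ℂ) ∈ ball (0:ℂ) 1 := by simp
  have hfd : HasDerivAt f (deriv f 0) (0:ℂ) :=
    (hf.differentiableAt (isOpen_ball.mem_nhds h0)).hasDerivAt
  have hs := Complex.norm_deriv_le_one_of_mapsTo_ball (hg.comp hf hb) (by
    simp only [Function.comp, hf0, hg0]
    exact fun z hz => ball_subset_closedBall (hgU (hb hz))) one_pos
  have hc : HasDerivAt (g ∘ f) (d * deriv f 0) 0 :=
    HasDerivAt.comp (0:ℂ) (h₂ := g) (by rw [hf0]; exact hd) hfd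
  rwa [hc.deriv, norm_mul] at hs

lemma tri_mem (s : ℝ) (z : ℂ) : z ∈ Tri ((-s : ℝ) : ℂ) ↔ z.re ≤ 0 ∧ |z.im| ≤ z.re + s := by
  simp [Tri]

lemma tri_compact (s : ℝ) : IsCompact (Tri ((-s : ℝ) : ℂ)) := by
  apply Metric.isCompact_of_isClosed_isBounded
  · have : Tri ((-s : ℝ) : ℂ) = {z : ℂ | z.re ≤ 0} ∩ {z : ℂ | |z.im| ≤ z.re + s} := by
      ext z; exact tri_mem s z
    rw [this]
    exact (isClosed_le (by fun_prop) (by fun_prop)).inter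
      (isClosed_le (by fun_prop) (by fun_prop))
  · refine (Metric.isBounded_closedBall (x := (0:ℂ)) (r := 2 * s)).subset ?_
    intro z hz
    rw [tri_mem] at hz
    rw [mem_closedBall_zero_iff]
    have h1 := Complex.norm_le_abs_re_add_abs_im z
    rw [abs_of_nonpos hz.1] at h1
    have := abs_nonneg z.im
    linarith

lemma dom_open (s : ℝ) : IsOpen (ball (0:ℂ) 1 \ exp '' Tri ((-s : ℝ) : ℂ)) :=
  isOpen_ball.sdiff ((tri_compact s).image Complex.continuous_exp).isClosed

lemma zero_mem_dom (s : ℝ) : (0:ℂ) ∈ ball (0:ℂ) 1 \ exp '' Tri ((-s : ℝ) : ℂ) := by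
  refine ⟨by simp, ?_⟩
  rintro ⟨w, _, hw⟩
  exact Complex.exp_ne_zero w hw

lemma dom_star (s : ℝ) : StarConvex ℝ (0:ℂ) (ball (0:ℂ) 1 \ exp '' Tri ((-s : ℝ) : ℂ)) := by
  rw [starConvex_zero_iff]
  rintro z ⟨hz, hzV⟩ t ht0 ht1
  rcases ht0.eq_or_lt with rfl | ht
  · rw [zero_smul]; exact zero_mem_dom s
  rw [mem_ball_zero_iff] at hz
  refine ⟨?_, ?_⟩
  · rw [mem_ball_zero_iff, norm_smul, Real.norm_of_nonneg ht0]
    nlinarith [norm_nonneg z]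
  · rintro ⟨w, hw, hwz⟩
    apply hzV
    have he : exp (w - (Real.log t : ℝ)) = z := by
      rw [Complex.exp_sub, hwz, ← Complex.ofReal_exp, Real.exp_log ht]
      have : (t:ℂ) ≠ 0 := by exact_mod_cast ht.ne'
      rw [Complex.real_smul]
      field_simp
    refine ⟨_, ?_, he⟩
    rw [tri_mem] at hw ⊢
    have hl := Real.log_nonpos ht0 ht1
    refine ⟨?_, ?_⟩
    · have := Complex.norm_exp (w - (Real.log t : ℝ))
      rw [he] at this
      rw [this, Real.exp_lt_one_iff] at hz
      exact hz.le
    · simp only [sub_im, ofReal_im, sub_zero, sub_re, ofReal_re]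
      linarith [hw.2]

lemma vol_box (a b c d : ℝ) : volume (Icc a b ×ℂ Icc c d) =
    ENNReal.ofReal (b - a) * ENNReal.ofReal (d - c) := by
  have h : Icc a b ×ℂ Icc c d = Complex.measurableEquivRealProd ⁻¹' (Icc a b ×ˢ Icc c d) := by
    ext z; simp only [Complex.mem_reProdIm, mem_preimage, measurableEquivRealProd_apply, mem_prod]
  rw [h, Complex.volume_preserving_equiv_real_prod.measure_preimage
    (measurableSet_Icc.prod measurableSet_Icc).nullMeasurableSet, Measure.volume_eq_prod,
    Measure.prod_prod, Real.volume_Icc, Real.volume_Icc]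

lemma area_bounds (u : ℝ) (hu : 0 < u) (hp : u ≤ Real.pi) :
    ENNReal.ofReal (u ^ 2) ≤ quotArea (Tri ((-(5 * u) : ℝ) : ℂ)) ∧
    quotArea (Tri ((-(5 * u) : ℝ) : ℂ)) ≤ ENNReal.ofReal (350 * u ^ 2) := by
  have hpi := Real.pi_pos
  constructor
  · calc ENNReal.ofReal (u ^ 2) = volume (Icc (-u) 0 ×ℂ Icc 0 u) := by
          rw [vol_box, ← ENNReal.ofReal_mul (by linarith)]; congr 1; ring
      _ ≤ _ := by
        apply measure_mono
        intro z hz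
        rw [Complex.mem_reProdIm] at hz
        obtain ⟨⟨h1, h2⟩, h3, h4⟩ := hz
        refine ⟨mem_iUnion.2 ⟨0, z, ?_, by simp⟩, h3, by linarith⟩
        rw [tri_mem]
        refine ⟨h2, ?_⟩
        rw [abs_of_nonneg h3]; linarith
  · calc quotArea (Tri ((-(5 * u) : ℝ) : ℂ))
        ≤ volume (⋃ k ∈ Finset.Icc (-3 : ℤ) 3,
            (Icc (-(5*u)) 0 ×ℂ Icc (2 * Real.pi * k - 5 * u) (2 * Real.pi * k + 5 * u))) := by
          apply measure_mono
          rintro z ⟨hz, h0, h1⟩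
          obtain ⟨k, w, hw, rfl⟩ := mem_iUnion.1 hz
          rw [tri_mem] at hw
          obtain ⟨hw1, hw2⟩ := hw
          have him : (w + 2 * Real.pi * Complex.I * k).im = w.im + 2 * Real.pi * k := by
            simp
          have hre : (w + 2 * Real.pi * Complex.I * k).re = w.re := by
            simp
          simp only [him] at h0 h1
          have habs := abs_le.1 hw2
          have hk1 : (k:ℝ) < 4 := by
            by_contra h; push Not at h; nlinarith
          have hk2 : (-4:ℝ) < k := by
            by_contra h; push Not at h; nlinarith
          have hk1' : k < 4 := by exact_mod_cast hk1
          have hk2' : -4 < k := by exact_mod_cast hk2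
          have := abs_nonneg w.im
          refine mem_iUnion₂.2 ⟨k, Finset.mem_Icc.2 ⟨by omega, by omega⟩, ?_⟩
          rw [Complex.mem_reProdIm, him, hre]
          exact ⟨⟨by linarith, hw1⟩, by linarith, by linarith⟩
      _ ≤ ∑ k ∈ Finset.Icc (-3 : ℤ) 3, volume
            (Icc (-(5*u)) 0 ×ℂ Icc (2 * Real.pi * k - 5 * u) (2 * Real.pi * k + 5 * u)) :=
          measure_biUnion_finset_le _ _
      _ = ∑ k ∈ Finset.Icc (-3 : ℤ) 3, ENNReal.ofReal (50 * u ^ 2) := by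
          refine Finset.sum_congr rfl fun k _ => ?_
          rw [vol_box, ← ENNReal.ofReal_mul (by linarith)]; congr 1; ring
      _ = _ := by
          rw [Finset.sum_const, nsmul_eq_mul]
          simp only [Int.card_Icc]
          rw [← ENNReal.ofReal_natCast, ← ENNReal.ofReal_mul (by positivity)]
          congr 1
          have : (Int.toNat (3 + 1 - -3)) = 7 := rfl
          rw [this]
          push_cast
          ring

lemma area_real (u : ℝ) (hu : 0 < u) (hp : u ≤ Real.pi) :
    u ^ 2 ≤ (quotArea (Tri ((-(5 * u) : ℝ) : ℂ))).toReal ∧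
    (quotArea (Tri ((-(5 * u) : ℝ) : ℂ))).toReal ≤ 350 * u ^ 2 := by
  obtain ⟨h1, h2⟩ := area_bounds u hu hp
  have hf : quotArea (Tri ((-(5 * u) : ℝ) : ℂ)) ≠ ⊤ := ne_top_of_le_ne_top ENNReal.ofReal_ne_top h2
  exact ⟨(ENNReal.ofReal_le_iff_le_toReal hf).1 h1, ENNReal.toReal_le_of_le_ofReal (by positivity) h2⟩

/-- Cayley transform disc to left half-plane. -/
def cay (z : ℂ) : ℂ := (z - 1) / (z + 1)

/-- Its inverse. -/
def cayi (z : ℂ) : ℂ := (1 + z) / (1 - z)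

lemma ne_of_ball {z : ℂ} (hz : ‖z‖ < 1) : z + 1 ≠ 0 := by
  intro h
  have : z = -1 := by linear_combination h
  rw [this] at hz; simp at hz

lemma ne_of_re {z : ℂ} (hz : z.re < 0) : 1 - z ≠ 0 := by
  intro h
  have : z = 1 := by linear_combination -h
  rw [this] at hz; simp at hz; linarith

lemma cay_re {z : ℂ} (hz : ‖z‖ < 1) : (cay z).re < 0 := by
  have h1 : 0 < normSq (z + 1) := normSq_pos.2 (ne_of_ball hz)
  have h2 : normSq z < 1 := by
    rw [Complex.normSq_eq_norm_sq]; nlinarith [norm_nonneg z]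
  have : (cay z).re = (normSq z - 1) / normSq (z + 1) := by
    rw [cay, Complex.div_re]
    simp only [normSq_apply, add_re, sub_re, one_re, add_im, sub_im, one_im]
    ring
  rw [this]
  exact div_neg_of_neg_of_pos (by linarith) h1

lemma cayi_norm {z : ℂ} (hz : z.re < 0) : ‖cayi z‖ < 1 := by
  have h := ne_of_re hz
  rw [cayi, norm_div, div_lt_one (norm_pos_iff.2 h)]
  rw [← sq_lt_sq₀ (norm_nonneg _) (norm_nonneg _), ← normSq_eq_norm_sq, ← normSq_eq_norm_sq]
  simp only [normSq_apply, add_re, sub_re, one_re, add_im, sub_im, one_im]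
  nlinarith

lemma cay_cayi {z : ℂ} (hz : z.re < 0) : cay (cayi z) = z := by
  have h := ne_of_re hz
  have h2 := ne_of_ball (cayi_norm hz)
  rw [cay, div_eq_iff h2]
  simp only [cayi]
  field_simp
  ring

lemma cayi_cay {z : ℂ} (hz : ‖z‖ < 1) : cayi (cay z) = z := by
  have h := ne_of_ball hz
  have h2 := ne_of_re (cay_re hz)
  rw [cayi, div_eq_iff h2]
  simp only [cay]
  field_simp
  ring

lemma cay_diff {z : ℂ} (hz : ‖z‖ < 1) : DifferentiableAt ℂ cay z := by
  unfold cay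
  exact ((differentiableAt_id).sub_const 1).div ((differentiableAt_id).add_const 1) (ne_of_ball hz)

lemma cayi_diff {z : ℂ} (hz : z.re < 0) : DifferentiableAt ℂ cayi z := by
  unfold cayi
  exact ((differentiableAt_id).const_add 1).div ((differentiableAt_id).const_sub 1) (ne_of_re hz)

lemma cay_deriv : HasDerivAt cay 2 0 := by
  have := ((hasDerivAt_id (0:ℂ)).sub_const 1).div ((hasDerivAt_id (0:ℂ)).add_const 1) (by simp)
  have e : (2:ℂ) = (1 * (id 0 + 1) - (id 0 - 1) * 1) / (id 0 + 1) ^ 2 := by simp; norm_num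
  rw [e]
  exact this

lemma cayi_deriv : HasDerivAt cayi (1/2) (-1) := by
  have := ((hasDerivAt_id (-1:ℂ)).const_add 1).div ((hasDerivAt_id (-1:ℂ)).const_sub 1)
    (by norm_num)
  have e : (1/2:ℂ) = (1 * (1 - id (-1)) - (1 + id (-1)) * -1) / (1 - id (-1)) ^ 2 := by
    simp only [id]; norm_num
  rw [e]
  exact this

/-- Transfer of a half-plane map to the disc. -/
lemma transfer (ψ : ℂ → ℂ) (W : Set ℂ) (l : ℝ) (hl : 0 < l) (d : ℂ)
    (hW : ∀ z ∈ W, ‖z‖ < 1)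
    (hψd : ∀ z ∈ W, DifferentiableAt ℂ ψ (cay z))
    (hψm : ∀ z ∈ W, (ψ (cay z)).re < 0)
    (hψ1 : ψ (-1) = -l) (hd : HasDerivAt ψ d (-1)) :
    ∃ g : ℂ → ℂ, g 0 = 0 ∧ DifferentiableOn ℂ g W ∧ HasDerivAt g (d / l) 0 ∧
      ∀ z ∈ W, ‖g z‖ < 1 ∧ l * cay (g z) = ψ (cay z) := by
  have hl' : (l:ℂ) ≠ 0 := by exact_mod_cast hl.ne'
  have hre : ∀ z ∈ W, (ψ (cay z) / l).re < 0 := by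
    intro z hz
    rw [Complex.div_ofReal_re]
    exact div_neg_of_neg_of_pos (hψm z hz) hl
  refine ⟨fun z => cayi (ψ (cay z) / l), ?_, ?_, ?_, ?_⟩
  · have : cay 0 = -1 := by simp [cay]
    simp only [this, hψ1, neg_div, div_self hl']
    simp [cayi]
  · intro z hz
    apply DifferentiableAt.differentiableWithinAt
    have h1 : DifferentiableAt ℂ (fun z => ψ (cay z)) z :=
      DifferentiableAt.comp z (hψd z hz) (cay_diff (hW z hz))
    exact DifferentiableAt.comp z (f := fun z => ψ (cay z) / l) (cayi_diff (hre z hz))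
      (h1.div_const _)
  · have h0 : cay 0 = -1 := by simp [cay]
    have h1 : HasDerivAt (fun z => ψ (cay z)) (d * 2) 0 :=
      HasDerivAt.comp (0:ℂ) (h₂ := ψ) (by rw [h0]; exact hd) cay_deriv
    have h2 : HasDerivAt (fun z => cayi (ψ (cay z) / l)) (1/2 * (d * 2 / l)) 0 := by
      refine HasDerivAt.comp (0:ℂ) (h₂ := cayi) (h := fun z => ψ (cay z) / l) ?_ (h1.div_const _)
      rw [h0, hψ1, neg_div, div_self hl']
      exact cayi_deriv
    convert h2 using 1
    ring
  · intro z hz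
    refine ⟨cayi_norm (hre z hz), ?_⟩
    rw [cay_cayi (hre z hz)]
    field_simp

lemma low_large (s : ℝ) (f : ℂ → ℂ) (hf : DifferentiableOn ℂ f (ball 0 1)) (hs : 0 < s)
    (hb : BijOn f (ball 0 1) (ball (0:ℂ) 1 \ exp '' Tri ((-s : ℝ) : ℂ))) (hf0 : f 0 = 0) :
    Real.exp (-s) ≤ ‖deriv f 0‖ := by
  have := schwarz_low f id _ (Real.exp (-s)) (Real.exp_pos _) hf hb hf0 1 differentiableOn_id
    (by
      intro z hz
      rw [mem_ball_zero_iff] at hz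
      refine ⟨?_, ?_⟩
      · rw [mem_ball_zero_iff]
        exact hz.trans (Real.exp_lt_one_iff.2 (by linarith))
      · rintro ⟨w, hw, hwz⟩
        rw [id] at hwz
        rw [tri_mem] at hw
        rw [← hwz, Complex.norm_exp, Real.exp_lt_exp] at hz
        have := abs_nonneg w.im
        linarith [hw.2]) rfl (hasDerivAt_id 0)
  simpa using this

lemma psi_low (A : ℝ) (hA : 0 < A) (z : ℂ) (hz : z.re < 0) :
    A / 6 ≤ ‖z - (A^2/2 : ℝ) / (A - z)‖ := by
  have hne : (A:ℂ) - z ≠ 0 := by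
    intro h
    have := congrArg Complex.re h
    simp at this
    linarith
  set r1 : ℂ := ⟨A/2, A/2⟩ with hr1
  set r2 : ℂ := ⟨A/2, -(A/2)⟩ with hr2
  have hfac : z - (A^2/2 : ℝ) / (A - z) = -((z - r1) * (z - r2)) / (A - z) := by
    rw [eq_div_iff hne, sub_mul, div_mul_cancel₀ _ hne]
    apply Complex.ext
    · simp [hr1, hr2, pow_two]; ring
    · simp [hr1, hr2, pow_two]; ring
  have h1 : A / 2 ≤ ‖z - r1‖ := by
    have := Complex.abs_re_le_norm (z - r1)
    have h := neg_abs_le (z - r1).re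
    simp only [sub_re, hr1] at this h ⊢
    linarith
  have h2 : A / 2 ≤ ‖z - r2‖ := by
    have := Complex.abs_re_le_norm (z - r2)
    have h := neg_abs_le (z - r2).re
    simp only [sub_re, hr2] at this h ⊢
    linarith
  have h3 : ‖(A:ℂ) - z‖ ≤ 3 * ‖z - r1‖ := by
    have e : (A:ℂ) - z = (A - r1) - (z - r1) := by ring
    have h4 : ‖(A:ℂ) - r1‖ ≤ A := by
      have := Complex.norm_le_abs_re_add_abs_im ((A:ℂ) - r1)
      simp only [sub_re, sub_im, ofReal_re, ofReal_im, hr1] at this ⊢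
      rw [abs_of_nonneg (by linarith), abs_of_nonpos (by linarith)] at this
      linarith
    rw [e]
    have := norm_sub_le ((A:ℂ) - r1) (z - r1)
    linarith
  have hpos : 0 < ‖(A:ℂ) - z‖ := norm_pos_iff.2 hne
  rw [hfac, norm_div, norm_neg, norm_mul, le_div_iff₀ hpos]
  calc A / 6 * ‖(A:ℂ) - z‖ ≤ A / 6 * (3 * ‖z - r1‖) := by gcongr
    _ = ‖z - r1‖ * (A / 2) := by ring
    _ ≤ _ := by gcongr

lemma low_small (u : ℝ) (hu : 0 < u) (hu1 : u ≤ 1/50) (f : ℂ → ℂ)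
    (hf : DifferentiableOn ℂ f (ball 0 1))
    (hb : BijOn f (ball 0 1) (ball (0:ℂ) 1 \ exp '' Tri ((-(5*u) : ℝ) : ℂ))) (hf0 : f 0 = 0) :
    (1 - (50*u)^2/2) / (1 + (50*u)^2/2) ≤ ‖deriv f 0‖ := by
  set A : ℝ := 50 * u with hA
  have hA0 : 0 < A := by positivity
  have hA1 : A ≤ 1 := by linarith
  set q : ℝ := A^2/2 with hq
  have hq0 : 0 < q := by positivity
  have hq1 : q ≤ 1/2 := by rw [hq]; nlinarith
  set l : ℝ := 1 + q / (A + 1) with hl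
  have hl0 : 0 < l := by positivity
  have hl1 : l ≤ 5/4 := by
    have : q / (A+1) ≤ 1/4 := by
      rw [div_le_iff₀ (by linarith)]; rw [hq]; nlinarith
    linarith
  have hl2 : l ≤ 1 + q := by
    have : q / (A+1) ≤ q := div_le_self hq0.le (by linarith)
    linarith
  have hne : ∀ z : ℂ, z.re < 0 → (A:ℂ) - z ≠ 0 := by
    intro z hz h
    have := congrArg Complex.re h
    simp at this
    linarith
  have hder : ∀ z : ℂ, z.re < 0 →
      HasDerivAt (fun z : ℂ => z - (q:ℂ) / (A - z)) (1 - (q:ℂ) / (A - z)^2) z := by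
    intro z hz
    have h1 : HasDerivAt (fun z : ℂ => (A:ℂ) - z) (-1) z := (hasDerivAt_id z).const_sub _
    have h2 := (hasDerivAt_id z).sub ((hasDerivAt_const z (q:ℂ)).div h1 (hne z hz))
    have e : (1 - (q:ℂ) / (A - z)^2) = 1 - (0 * ((A:ℂ) - z) - q * -1) / (A - z)^2 := by ring
    rw [e]
    exact h2
  obtain ⟨g, hg0, hgd, hgd0, hgm⟩ := transfer (fun z : ℂ => z - (q:ℂ) / (A - z)) (ball 0 1) l hl0
    (1 - (q:ℂ) / (A - (-1))^2) (fun z hz => by simpa using hz)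
    (fun z hz => (hder _ (cay_re (by simpa using hz))).differentiableAt)
    (by
      intro z hz
      have h := cay_re (z := z) (by simpa using hz)
      have h2 : 0 < normSq ((A:ℂ) - cay z) := normSq_pos.2 (hne _ h)
      have h3 : 0 ≤ ((q:ℂ) / (A - cay z)).re := by
        rw [Complex.div_re]
        simp only [ofReal_re, ofReal_im, sub_re, sub_im, zero_mul, zero_div, add_zero]
        apply div_nonneg _ h2.le
        apply mul_nonneg hq0.le
        linarith
      simp only [sub_re] at h3 ⊢
      linarith)
    (by simp only [hl]; push_cast; ring)
    (hder (-1) (by simp))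
  have key := schwarz_low f g _ 1 one_pos hf hb hf0 _ hgd (by
    intro z hz
    obtain ⟨hg1, hg2⟩ := hgm z hz
    refine ⟨by simpa using hg1, ?_⟩
    rintro ⟨w, hw, hwz⟩
    rw [tri_mem] at hw
    have hwn : ‖w‖ ≤ 5 * u := by
      have := Complex.norm_le_abs_re_add_abs_im w
      rw [abs_of_nonpos hw.1] at this
      linarith [hw.2]
    have h1 : ‖g z - 1‖ ≤ 10 * u := by
      rw [← hwz]
      have := Complex.norm_exp_sub_one_le (x := w) (by linarith)
      linarith
    have h2 : 9/5 ≤ ‖g z + 1‖ := by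
      have e : (2:ℂ) = (g z + 1) - (g z - 1) := by ring
      have := norm_sub_le (g z + 1) (g z - 1)
      rw [← e] at this
      norm_num at this
      linarith
    have h3 : ‖cay (g z)‖ ≤ 10 * u / (9/5) := by
      rw [cay, norm_div]
      gcongr
    have h4 := psi_low A hA0 (cay z) (cay_re (by simpa using hz))
    rw [← hq, ← hg2, norm_mul, Complex.norm_real, Real.norm_of_nonneg hl0.le] at h4
    have h5 : l * ‖cay (g z)‖ ≤ 5/4 * (10 * u / (9/5)) := by gcongr
    rw [hA] at h4
    linarith) hg0 hgd0
  refine le_trans ?_ key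
  have e : (1 - (q:ℂ) / (A - (-1))^2) / l = (((1 - q / (A+1)^2) / l : ℝ) : ℂ) := by
    push_cast; ring
  rw [e, one_mul, Complex.norm_real]
  refine le_trans ?_ (Real.le_norm_self _)
  have : q / (A+1)^2 ≤ q := div_le_self hq0.le (by nlinarith)
  apply div_le_div₀ _ _ hl0 hl2
  · linarith
  · linarith

lemma up_bound (u : ℝ) (hu : 0 < u) (hp : u ≤ Real.pi) (f : ℂ → ℂ)
    (hf : DifferentiableOn ℂ f (ball 0 1))
    (hb : BijOn f (ball 0 1) (ball (0:ℂ) 1 \ exp '' Tri ((-(5*u) : ℝ) : ℂ))) (hf0 : f 0 = 0) :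
    ‖deriv f 0‖ ≤ 1 - u^2/400 := by
  set ρ : ℝ := u / 20 with hρ
  have hρ0 : 0 < ρ := by positivity
  have hρ1 : ρ ≤ 1/6 := by
    have := Real.pi_lt_d2
    rw [hρ]; linarith
  have hl0 : 0 < 1 - ρ^2 := by nlinarith
  set U := (ball (0:ℂ) 1 \ exp '' Tri ((-(5*u) : ℝ) : ℂ)) with hU
  have hUn : ∀ z ∈ U, ‖z‖ < 1 := fun z hz => by simpa using hz.1
  have hUc : ∀ z ∈ U, ρ < ‖cay z‖ := by
    intro z hz
    by_contra! h
    apply hz.2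
    have hzn := hUn z hz
    set c := cay z with hc
    have h1 := ne_of_re (cay_re hzn)
    have h2 : 5/6 ≤ ‖1 - c‖ := by
      have := norm_sub_norm_le (1:ℂ) c
      rw [norm_one] at this
      linarith
    have hz1 : z = 1 + 2 * c / (1 - c) := by
      rw [← cayi_cay hzn, cayi, ← hc]
      rw [← hc] at h1
      field_simp
      ring
    have h3 : ‖2 * c / (1 - c)‖ ≤ 2 * ρ / (5/6) := by
      rw [norm_div, norm_mul]
      norm_num only [Complex.norm_ofNat]
      gcongr
    have h4 := Complex.norm_log_one_add_half_le_self (z := 2 * c / (1 - c)) (by linarith)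
    rw [← hz1] at h4
    have hz0 : z ≠ 0 := by
      rintro rfl
      have : c = -1 := by simp [hc, cay]
      rw [this] at h
      norm_num at h
      linarith
    have hexp := Complex.exp_log hz0
    refine ⟨Complex.log z, ?_, hexp⟩
    rw [tri_mem]
    have h5 := Complex.abs_re_le_norm (Complex.log z)
    have h6 := Complex.abs_im_le_norm (Complex.log z)
    have h7 := neg_abs_le (Complex.log z).re
    refine ⟨?_, ?_⟩
    · rw [Complex.log_re]
      exact Real.log_nonpos (norm_nonneg _) hzn.le
    · linarith
  have hder : ∀ z : ℂ, z ≠ 0 →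
      HasDerivAt (fun z : ℂ => z - ((ρ^2 : ℝ):ℂ) / z) (1 + ((ρ^2:ℝ):ℂ) / z^2) z := by
    intro z hz
    have h2 := (hasDerivAt_id z).sub ((hasDerivAt_const z ((ρ^2:ℝ):ℂ)).div (hasDerivAt_id z) hz)
    have e : (1 + ((ρ^2:ℝ):ℂ) / z^2) = 1 - (0 * id z - ((ρ^2:ℝ):ℂ) * 1) / (id z)^2 := by
      simp only [id]; ring
    rw [e]
    exact h2
  have hc0 : ∀ z ∈ U, cay z ≠ 0 := fun z hz => norm_pos_iff.1 (hρ0.trans (hUc z hz))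
  obtain ⟨g, hg0, hgd, hgd0, hgm⟩ := transfer (fun z : ℂ => z - ((ρ^2 : ℝ):ℂ) / z) U (1 - ρ^2) hl0
    (1 + ((ρ^2:ℝ):ℂ) / (-1)^2) hUn
    (fun z hz => (hder _ (hc0 z hz)).differentiableAt)
    (by
      intro z hz
      have h := cay_re (hUn z hz)
      have h2 : 0 < normSq (cay z) := normSq_pos.2 (hc0 z hz)
      have h3 : ρ^2 < normSq (cay z) := by
        rw [normSq_eq_norm_sq]
        have := hUc z hz
        gcongr
      have e : (cay z - ((ρ^2 : ℝ):ℂ) / cay z).re = (cay z).re * (1 - ρ^2 / normSq (cay z)) := by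
        rw [sub_re, Complex.div_re, ofReal_re, ofReal_im]; ring
      simp only [e]
      apply mul_neg_of_neg_of_pos h
      rw [sub_pos, div_lt_one h2]
      exact h3)
    (by push_cast; ring)
    (hder (-1) (by simp))
  have key := schwarz_up f g U hf hb.mapsTo hf0 _ hgd (fun z hz => by simpa using (hgm z hz).1)
    hg0 hgd0
  have e : (1 + ((ρ^2:ℝ):ℂ) / (-1)^2) / ((1 - ρ^2 : ℝ) : ℂ) = (((1 + ρ^2) / (1 - ρ^2) : ℝ) : ℂ) := by
    push_cast; norm_num
  rw [e, Complex.norm_real, Real.norm_of_nonneg (by positivity), div_mul_eq_mul_div,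
    div_le_one hl0] at key
  have : u^2/400 = ρ^2 := by rw [hρ]; ring
  rw [this]
  nlinarith [norm_nonneg (deriv f 0), sq_nonneg ρ]

/-- There are constants `K₃ > K₄ > 0` such that for every `u ∈ (0, π]`, with
`V₅(x) = exp(T(-5u))` and `U = 𝔻 \ V₅(x)`, the set `U` is open, simply
connected, contains `0`, and every biholomorphism `f : 𝔻 → U` with `f 0 = 0`
satisfies `K₄ ≤ -ln|f'(0)| / a₅(u) ≤ K₃`, where `a₅(u)` is the area of
`T(-5u)` in the quotient `ℂ/2πiℤ`. -/
theorem stmt10 : ∃ K₃ K₄ : ℝ, K₄ > 0 ∧ K₃ > K₄ ∧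
    ∀ u : ℝ, 0 < u → u ≤ Real.pi →
    IsOpen (Metric.ball (0 : ℂ) 1 \ Complex.exp '' Tri ((-5 * u : ℝ) : ℂ)) ∧
    SimplyConnectedSpace
      ↥(Metric.ball (0 : ℂ) 1 \ Complex.exp '' Tri ((-5 * u : ℝ) : ℂ)) ∧
    (0 : ℂ) ∈ Metric.ball (0 : ℂ) 1 \ Complex.exp '' Tri ((-5 * u : ℝ) : ℂ) ∧
    ∀ f : ℂ → ℂ, DifferentiableOn ℂ f (Metric.ball 0 1) →
      Set.BijOn f (Metric.ball 0 1)
        (Metric.ball (0 : ℂ) 1 \ Complex.exp '' Tri ((-5 * u : ℝ) : ℂ)) →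
      f 0 = 0 →
      K₄ ≤ -Real.log (‖deriv f 0‖) /
            (quotArea (Tri ((-5 * u : ℝ) : ℂ))).toReal ∧
      -Real.log (‖deriv f 0‖) /
            (quotArea (Tri ((-5 * u : ℝ) : ℂ))).toReal ≤ K₃ := by
  refine ⟨5000, 1/140000, by norm_num, by norm_num, ?_⟩
  intro u hu hp
  have e5 : (-5 * u : ℝ) = -(5 * u) := by ring
  rw [e5]
  refine ⟨dom_open _, ?_, zero_mem_dom _, ?_⟩
  · haveI := (dom_star (5 * u)).contractibleSpace ⟨0, zero_mem_dom _⟩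
    infer_instance
  intro f hf hb hf0
  obtain ⟨ha1, ha2⟩ := area_real u hu hp
  set a := (quotArea (Tri ((-(5 * u) : ℝ) : ℂ))).toReal
  have hu2 : 0 < u ^ 2 := by positivity
  have ha : 0 < a := lt_of_lt_of_le hu2 ha1
  have hlow := low_large (5 * u) f hf (by linarith) hb hf0
  have hpos : 0 < ‖deriv f 0‖ := (Real.exp_pos _).trans_le hlow
  constructor
  · rw [le_div_iff₀ ha]
    have h1 := up_bound u hu hp f hf hb hf0
    have h2 := Real.log_le_sub_one_of_pos hpos
    linarith
  · rw [div_le_iff₀ ha]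
    by_cases hs : u ≤ 1/50
    · have h1 := low_small u hu hs f hf hb hf0
      set q := (50*u)^2/2 with hq
      have hq0 : 0 < q := by positivity
      have hq1 : q ≤ 1/2 := by rw [hq]; nlinarith
      have hr : 0 < (1 - q) / (1 + q) := div_pos (by linarith) (by linarith)
      have h2 := Real.log_le_log hr h1
      have h3 := Real.one_sub_inv_le_log_of_pos hr
      have h4 : ((1 - q) / (1 + q))⁻¹ ≤ 1 + 4 * q := by
        rw [inv_div, div_le_iff₀ (by linarith)]
        nlinarith
      have h5 : 4 * q = 5000 * u^2 := by rw [hq]; ring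
      linarith
    · push Not at hs
      have h2 := Real.log_le_log (Real.exp_pos _) hlow
      rw [Real.log_exp] at h2
      nlinarith
end
end

section
/- For u > 0 let C(u) ⊆ ℂ denote the closed solid triangle with vertices −u, iπ and −iπ. Then for every M > 0 there exists u₀ > 0 such that for every u ∈ (0, u₀) and every C¹ path γ : [0,1] → 𝔻 \ {0} admitting a continuous lift w : [0,1] → ℂ with exp(w(t)) = γ(t) for all t, w(0) ∈ C(u) and w(1) ∈ C(u) + 2πi, the hyperbolic length of γ is at least M. (In other words, the infimum l(u) of hyperbolic lengths of such paths tends to +∞ as u → 0.) -/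
open Complex Metric Set

noncomputable section

/-- Hyperbolic length of a `C¹` path `γ : [0,1] → 𝔻`. -/
def hypLength (γ : ℝ → ℂ) : ℝ :=
  ∫ t in (0:ℝ)..1, 2 * ‖deriv γ t‖ / (1 - ‖γ t‖ ^ 2)

/-- The closed solid triangle (cone) with vertices `-u`, `iπ`, `-iπ`. -/
def Cone (u : ℝ) : Set ℂ :=
  convexHull ℝ {(-u : ℂ), (Real.pi : ℂ) * Complex.I, -((Real.pi : ℂ) * Complex.I)}

lemma cone_bound {u : ℝ} (hu : 0 < u) {z : ℂ} (hz : z ∈ Cone u) :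
    u * z.im ≤ Real.pi * (u + z.re) ∧ -(u * z.im) ≤ Real.pi * (u + z.re) := by
  have hsub : Cone u ⊆ {z : ℂ | u * z.im ≤ Real.pi * (u + z.re) ∧
      -(u * z.im) ≤ Real.pi * (u + z.re)} := by
    apply convexHull_min
    · intro z hz
      simp only [mem_insert_iff, mem_singleton_iff] at hz
      have hp := mul_pos hu Real.pi_pos
      rcases hz with rfl | rfl | rfl <;> constructor <;> simp <;> linarith
    · intro x hx y hy a b ha hb hab
      simp only [mem_ofPred_eq] at hx hy ⊢
      simp only [add_re, add_im, real_smul, mul_re, mul_im, ofReal_re, ofReal_im]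
      obtain rfl : b = 1 - a := by linarith
      constructor
      · nlinarith [mul_le_mul_of_nonneg_left hx.1 ha, mul_le_mul_of_nonneg_left hy.1 hb]
      · nlinarith [mul_le_mul_of_nonneg_left hx.2 ha, mul_le_mul_of_nonneg_left hy.2 hb]
  exact hsub hz

lemma lift_deriv {γ w : ℝ → ℂ} {t : ℝ} {γ' : ℂ} (hγ : HasDerivAt γ γ' t)
    (hw : ContinuousAt w t) (he : ∀ᶠ s in nhds t, Complex.exp (w s) = γ s) :
    HasDerivAt w (γ' / γ t) t := by
  have h0 : Complex.exp (w t) = γ t := he.self_of_nhds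
  have hne : γ t ≠ 0 := h0 ▸ Complex.exp_ne_zero _
  have h1 : HasDerivAt (fun s => w t + Complex.log (γ s / γ t)) (γ' / γ t) t := by
    have h2 : HasDerivAt (fun s => γ s / γ t) (γ' / γ t) t := hγ.div_const _
    have h3 := (h2.clog_real (by simp [hne])).const_add (w t)
    simpa [hne] using h3
  refine h1.congr_of_eventuallyEq ?_
  have hc : Filter.Tendsto (fun s => (w s - w t).im) (nhds t) (nhds 0) := by
    have : ContinuousAt (fun s => (w s - w t).im) t :=
      Complex.continuous_im.continuousAt.comp (hw.sub continuousAt_const)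
    simpa [ContinuousAt] using this
  filter_upwards [he, hc.eventually (Ioo_mem_nhds (neg_lt_zero.2 Real.pi_pos) Real.pi_pos)]
    with s hs1 hs2
  rw [← hs1, ← h0, ← Complex.exp_sub, Complex.log_exp hs2.1 hs2.2.le]
  ring

set_option maxHeartbeats 1000000 in
/-- For every `M > 0` there is `u₀ > 0` such that for all `u ∈ (0, u₀)`:
every `C¹` path `γ : [0,1] → 𝔻 \ {0}` admitting a continuous lift `w` through
`exp` with `w 0 ∈ C(u)` and `w 1 ∈ C(u) + 2πi` has hyperbolic length `≥ M`.
In other words, the infimum `l(u)` of such lengths tends to `+∞` as `u → 0`. -/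
theorem stmt11 : ∀ M > (0 : ℝ), ∃ u₀ > (0 : ℝ), ∀ u : ℝ, 0 < u → u < u₀ →
    ∀ γ w : ℝ → ℂ,
      ContDiffOn ℝ 1 γ (Set.Icc 0 1) →
      (∀ t ∈ Set.Icc (0:ℝ) 1, γ t ∈ Metric.ball (0 : ℂ) 1 \ {0}) →
      ContinuousOn w (Set.Icc 0 1) →
      (∀ t ∈ Set.Icc (0:ℝ) 1, Complex.exp (w t) = γ t) →
      w 0 ∈ Cone u →
      w 1 ∈ (fun z : ℂ => z + 2 * Real.pi * Complex.I) '' Cone u →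
      M ≤ hypLength γ := by
  intro M hM
  have hpi := Real.pi_pos
  have hsM : 0 < Real.sinh M := Real.sinh_pos_iff.2 hM
  obtain ⟨k, hk⟩ : ∃ k : ℝ, k = 1 - Real.exp (-(1/2)) := ⟨_, rfl⟩
  have hk0 : 0 < k := by
    have : Real.exp (-(1/2)) < 1 := Real.exp_lt_one_iff.2 (by norm_num)
    linarith
  refine ⟨min (Real.pi / Real.sinh M) (k * Real.exp (-M)), by positivity, ?_⟩
  intro u hu hu0 γ w hγ hD hw he hw0 hw1
  obtain ⟨hu1, hu2⟩ := lt_min_iff.1 hu0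
  obtain ⟨z1, hz1, hz1e⟩ := hw1
  obtain ⟨a1, a2⟩ := cone_bound hu hw0
  obtain ⟨b1, b2⟩ := cone_bound hu hz1
  have hr1 : (w 1).re = z1.re := by rw [← hz1e]; simp
  have hi1 : (w 1).im = z1.im + 2 * Real.pi := by rw [← hz1e]; simp
  have hnorm : ∀ t ∈ Icc (0:ℝ) 1, ‖γ t‖ = Real.exp (w t).re := by
    intro t ht
    rw [← he t ht, Complex.norm_exp]
  have hlt : ∀ t ∈ Icc (0:ℝ) 1, ‖γ t‖ < 1 := by
    intro t ht
    simpa using (hD t ht).1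
  have hre : ∀ t ∈ Icc (0:ℝ) 1, (w t).re < 0 := by
    intro t ht
    have := hlt t ht
    rw [hnorm t ht] at this
    exact Real.exp_lt_one_iff.1 this
  set φ : ℝ → ℝ := fun t => 2 * ‖derivWithin γ (Icc 0 1) t‖ / (1 - ‖γ t‖ ^ 2) with hφ
  have hsq : ∀ t ∈ Icc (0:ℝ) 1, 0 < 1 - ‖γ t‖ ^ 2 := by
    intro t ht
    nlinarith [hlt t ht, norm_nonneg (γ t)]
  have hφc : ContinuousOn φ (Icc 0 1) := by
    have h1 : ContinuousOn (derivWithin γ (Icc 0 1)) (Icc 0 1) :=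
      hγ.continuousOn_derivWithin (uniqueDiffOn_Icc zero_lt_one) le_rfl
    have h2 := hγ.continuousOn
    exact (continuousOn_const.mul h1.norm).div (continuousOn_const.sub (h2.norm.pow 2))
      (fun t ht => (hsq t ht).ne')
  have hφ0 : ∀ t ∈ Icc (0:ℝ) 1, 0 ≤ φ t := by
    intro t ht
    have := hsq t ht
    simp only [hφ]
    positivity
  have hLφ : hypLength γ = ∫ t in (0:ℝ)..1, φ t := by
    unfold hypLength
    rw [intervalIntegral.integral_of_le zero_le_one, intervalIntegral.integral_of_le zero_le_one,
      MeasureTheory.integral_Ioc_eq_integral_Ioo, MeasureTheory.integral_Ioc_eq_integral_Ioo]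
    refine MeasureTheory.setIntegral_congr_fun measurableSet_Ioo ?_
    intro t ht
    simp only [hφ]
    rw [derivWithin_of_mem_nhds (Icc_mem_nhds ht.1 ht.2)]
  have hder : ∀ t ∈ Ioo (0:ℝ) 1, ∃ w' : ℂ, HasDerivAt w w' t ∧
      φ t = 2 * (Real.exp (w t).re * ‖w'‖) / (1 - Real.exp (w t).re ^ 2) := by
    intro t ht
    have hn := Icc_mem_nhds ht.1 ht.2
    have htI := Ioo_subset_Icc_self ht
    have hd : HasDerivAt γ (derivWithin γ (Icc 0 1) t) t :=
      ((hγ.differentiableOn one_ne_zero t htI).hasDerivWithinAt).hasDerivAt hn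
    refine ⟨_, lift_deriv hd (hw.continuousAt hn) (Filter.mem_of_superset hn he), ?_⟩
    have hne : ‖γ t‖ ≠ 0 := by simpa using (hD t htI).2
    rw [← hnorm t htI, norm_div, mul_div_cancel₀ _ hne]
  have hwre : ContinuousOn (fun t => (w t).re) (Icc 0 1) := Complex.continuous_re.comp_continuousOn hw
  have hwim : ContinuousOn (fun t => (w t).im) (Icc 0 1) := Complex.continuous_im.comp_continuousOn hw
  have h0I : (0:ℝ) ∈ Icc (0:ℝ) 1 := by simp
  have h1I : (1:ℝ) ∈ Icc (0:ℝ) 1 := by simp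
  rw [hLφ]
  by_cases hcase : ∀ t ∈ Icc (0:ℝ) 1, -(1/2) ≤ (w t).re
  · -- the path stays near the boundary
    have key : Real.arsinh (((w 1).im - Real.pi) / (-(w 1).re))
        - Real.arsinh (((w 0).im - Real.pi) / (-(w 0).re)) ≤ ∫ t in (0:ℝ)..1, 2 * φ t := by
      choose! w' hw' hw'2 using hder
      have hd : ∀ t ∈ Ioo (0:ℝ) 1, HasDerivAt
          (fun t => Real.arsinh (((w t).im - Real.pi) / (-(w t).re)))
          ((Real.sqrt (1 + (((w t).im - Real.pi) / (-(w t).re)) ^ 2))⁻¹ *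
            (((w' t).im * (-(w t).re) - ((w t).im - Real.pi) * (-(w' t).re)) / (-(w t).re) ^ 2)) t := by
        intro t ht
        have hr := hre t (Ioo_subset_Icc_self ht)
        have hR : HasDerivAt (fun t => (w t).re) (w' t).re t :=
          (Complex.reCLM.hasFDerivAt.comp_hasDerivAt t (hw' t ht))
        have hI : HasDerivAt (fun t => (w t).im) (w' t).im t :=
          (Complex.imCLM.hasFDerivAt.comp_hasDerivAt t (hw' t ht))
        have := ((hI.sub_const Real.pi).div hR.neg (by simp; exact hr.ne)).arsinh
        simpa using this
      refine intervalIntegral.sub_le_integral_of_hasDeriv_right_of_le zero_le_one ?_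
        (fun t ht => (hd t ht).hasDerivWithinAt) ?_ ?_
      · exact Real.continuous_arsinh.comp_continuousOn
          ((hwim.sub continuousOn_const).div hwre.neg (fun t ht => by have := hre t ht; simp; linarith))
      · exact (continuousOn_const.mul hφc).integrableOn_Icc
      · intro t ht
        have htI := Ioo_subset_Icc_self ht
        have hr := hre t htI
        have hc := hcase t htI
        rw [hw'2 t ht]
        obtain ⟨s, hs⟩ : ∃ s, s = -(w t).re := ⟨_, rfl⟩
        have hs' : (w t).re = -s := by linarith
        rw [hs'] at hr hc ⊢
        generalize (w t).im - Real.pi = y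
        have hs0 : 0 < s := by linarith
        simp only [neg_neg]
        have e1 : Real.sqrt (1 + (y / s) ^ 2) = Real.sqrt (s ^ 2 + y ^ 2) / s := by
          rw [show 1 + (y / s) ^ 2 = (s ^ 2 + y ^ 2) / s ^ 2 by field_simp,
            Real.sqrt_div (by positivity), Real.sqrt_sq hs0.le]
        have hq : 0 < Real.sqrt (s ^ 2 + y ^ 2) := Real.sqrt_pos.2 (by positivity)
        have e2 : (w' t).im * s - y * -(w' t).re ≤ Real.sqrt (s ^ 2 + y ^ 2) * ‖w' t‖ := by
          rw [Complex.norm_def, ← Real.sqrt_mul (by positivity), Complex.normSq_apply]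
          apply Real.le_sqrt_of_sq_le
          nlinarith [sq_nonneg ((w' t).im * y - (w' t).re * s)]
        have e3 : (Real.sqrt (1 + (y / s) ^ 2))⁻¹ * (((w' t).im * s - y * -(w' t).re) / s ^ 2)
            ≤ ‖w' t‖ / s := by
          rw [e1]
          calc _ = ((w' t).im * s - y * -(w' t).re) / (Real.sqrt (s ^ 2 + y ^ 2) * s) := by
                field_simp
            _ ≤ (Real.sqrt (s ^ 2 + y ^ 2) * ‖w' t‖) / (Real.sqrt (s ^ 2 + y ^ 2) * s) := by
                gcongr
            _ = _ := by field_simp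
        refine e3.trans ?_
        have f1 : 1 - 2 * s ≤ Real.exp (-s) ^ 2 := by
          rw [← Real.exp_nat_mul]
          have := Real.add_one_le_exp (((2:ℕ):ℝ) * -s)
          push_cast at this ⊢
          linarith
        have f2 : 1 / 2 ≤ Real.exp (-s) := by
          have := Real.add_one_le_exp (-s)
          linarith
        have f3 : Real.exp (-s) < 1 := Real.exp_lt_one_iff.2 (by linarith)
        have f4 : 0 < 1 - Real.exp (-s) ^ 2 := by nlinarith
        rw [← mul_div_assoc, div_le_div_iff₀ hs0 f4]
        have hn := norm_nonneg (w' t)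
        have f5 : 1 - Real.exp (-s) ^ 2 ≤ 4 * Real.exp (-s) * s := by nlinarith
        nlinarith [mul_le_mul_of_nonneg_left f5 hn]
    rw [intervalIntegral.integral_const_mul] at key
    have hMs : Real.sinh M ≤ Real.pi / u := by
      rw [lt_div_iff₀ hsM] at hu1
      rw [le_div_iff₀ hu]
      linarith
    have hr0 := hre 0 h0I
    have hr1' := hre 1 h1I
    have g1 : M ≤ Real.arsinh (((w 1).im - Real.pi) / (-(w 1).re)) := by
      rw [← Real.arsinh_sinh M]
      apply Real.arsinh_le_arsinh.2
      refine hMs.trans ?_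
      rw [div_le_div_iff₀ hu (by linarith), hr1, hi1]
      linarith
    have g0 : Real.arsinh (((w 0).im - Real.pi) / (-(w 0).re)) ≤ -M := by
      rw [← Real.arsinh_sinh (-M)]
      apply Real.arsinh_le_arsinh.2
      rw [Real.sinh_neg]
      refine le_trans ?_ (neg_le_neg hMs)
      rw [← neg_div, div_le_div_iff₀ (by linarith) hu]
      linarith
    linarith
  · push Not at hcase
    obtain ⟨T, hT, hTr⟩ := hcase
    have hsub : Icc 0 T ⊆ Icc (0:ℝ) 1 := Icc_subset_Icc_right hT.2
    have hmono : ∫ t in (0:ℝ)..T, φ t ≤ ∫ t in (0:ℝ)..1, φ t := by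
      refine intervalIntegral.integral_mono_interval le_rfl hT.1 hT.2 ?_ ?_
      · refine (MeasureTheory.ae_restrict_iff' measurableSet_Ioc).2 (Filter.Eventually.of_forall ?_)
        intro t ht
        exact hφ0 t (Ioc_subset_Icc_self ht)
      · exact hφc.intervalIntegrable_of_Icc zero_le_one
    refine le_trans ?_ hmono
    have hpos : ∀ t ∈ Icc (0:ℝ) 1, 0 < 1 - Real.exp (w t).re := by
      intro t ht
      have := Real.exp_lt_one_iff.2 (hre t ht)
      linarith
    have key : Real.log (1 - Real.exp (w T).re) - Real.log (1 - Real.exp (w 0).re)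
        ≤ ∫ t in (0:ℝ)..T, φ t := by
      choose! w' hw' hw'2 using hder
      have hd : ∀ t ∈ Ioo (0:ℝ) T, HasDerivAt
          (fun t => Real.log (1 - Real.exp (w t).re))
          (-(Real.exp (w t).re * (w' t).re) / (1 - Real.exp (w t).re)) t := by
        intro t ht
        have ht1 : t ∈ Ioo (0:ℝ) 1 := ⟨ht.1, ht.2.trans_le hT.2⟩
        have hR : HasDerivAt (fun t => (w t).re) (w' t).re t :=
          (Complex.reCLM.hasFDerivAt.comp_hasDerivAt t (hw' t ht1))
        exact (hR.exp.const_sub 1).log (hpos t (Ioo_subset_Icc_self ht1)).ne'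
      refine intervalIntegral.sub_le_integral_of_hasDeriv_right_of_le hT.1 ?_
        (fun t ht => (hd t ht).hasDerivWithinAt) ?_ ?_
      · exact ContinuousOn.log (continuousOn_const.sub (Real.continuous_exp.comp_continuousOn
          (hwre.mono hsub))) (fun t ht => (hpos t (hsub ht)).ne')
      · exact (hφc.mono hsub).integrableOn_Icc
      · intro t ht
        have ht1 : t ∈ Ioo (0:ℝ) 1 := ⟨ht.1, ht.2.trans_le hT.2⟩
        have hp := hpos t (Ioo_subset_Icc_self ht1)
        rw [hw'2 t ht1]
        have he0 := Real.exp_pos (w t).re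
        generalize Real.exp (w t).re = r at *
        have hn : -(w' t).re ≤ ‖w' t‖ := (neg_le_abs _).trans (Complex.abs_re_le_norm _)
        have hn0 := norm_nonneg (w' t)
        calc -(r * (w' t).re) / (1 - r) ≤ (r * ‖w' t‖) / (1 - r) := by
              gcongr
              nlinarith
          _ ≤ _ := by
              rw [div_le_div_iff₀ hp (by nlinarith)]
              have : 0 ≤ r * ‖w' t‖ := by positivity
              nlinarith [mul_nonneg this (mul_nonneg hp.le hp.le)]
    have g1 : Real.log k ≤ Real.log (1 - Real.exp (w T).re) := by
      apply Real.log_le_log hk0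
      have := Real.exp_le_exp.2 hTr.le
      linarith
    have g0 : Real.log (1 - Real.exp (w 0).re) ≤ Real.log k - M := by
      have : Real.log k - M = Real.log (k * Real.exp (-M)) := by
        rw [Real.log_mul hk0.ne' (Real.exp_pos _).ne', Real.log_exp]; ring
      rw [this]
      apply Real.log_le_log (hpos 0 h0I)
      have h1 := Real.add_one_le_exp (w 0).re
      have h2 : 0 ≤ u + (w 0).re := by
        by_contra hneg
        push Not at hneg
        nlinarith
      linarith
    linarith
end
end
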